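/- There exists δ > 0 such that for every (s₀,φ) ∈ W, if ‖φ‖_{L^∞} ≤ δ · min{1, s₀^{−1/(p−1)}}, then problem (P) with initial data (s₀,φ) admits a global-in-time solution (s,u) satisfying lim_{t→∞} s(t) < ∞ and ‖u(t)‖_{L^∞} = O(e^{−αt}) as t → ∞ for some α > 0. -/

import Mathlib

open Set MeasureTheory Filter Topology Real
open scoped ENNReal

noncomputable section

/-- `(s₀, φ)` belongs to the class `W`: `s₀ ∈ (0,∞)`, `φ` is Lipschitz on `[0,s₀]`,
not identically zero, nonnegative there, and vanishes at `s₀`. -/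
def memW (s₀ : ℝ) (φ : ℝ → ℝ) : Prop :=
  0 < s₀ ∧ (∃ K : NNReal, LipschitzOnWith K φ (Icc 0 s₀)) ∧
    (∃ x ∈ Icc 0 s₀, φ x ≠ 0) ∧ (∀ x ∈ Icc 0 s₀, 0 ≤ φ x) ∧ φ s₀ = 0

/-- `(s,u)` is a solution of the one-phase Stefan problem (P) on `(0,T]` (finite `T`)
with exponent `p` and initial data `(s₀,φ)`. -/
structure IsSolOn (p s₀ : ℝ) (φ : ℝ → ℝ) (T : ℝ) (s : ℝ → ℝ) (u : ℝ → ℝ → ℝ) : Prop where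
  T_pos : 0 < T
  s_cont : ContinuousOn s (Icc 0 T)
  s_diff : ∀ t ∈ Ioc 0 T, DifferentiableAt ℝ s t
  s_deriv_cont : ContinuousOn (deriv s) (Ioc 0 T)
  s_pos : ∀ t ∈ Icc 0 T, 0 < s t
  ut_diff : ∀ t ∈ Ioc 0 T, ∀ x ∈ Ioo 0 (s t), DifferentiableAt ℝ (fun τ => u τ x) t
  ux_diff : ∀ t ∈ Ioc 0 T, ∀ x ∈ Ioo 0 (s t), DifferentiableAt ℝ (u t) x
  uxx_diff : ∀ t ∈ Ioc 0 T, ∀ x ∈ Ioo 0 (s t), DifferentiableAt ℝ (deriv (u t)) x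
  ut_cont : ContinuousOn (fun q : ℝ × ℝ => deriv (fun τ => u τ q.2) q.1)
      {q : ℝ × ℝ | q.1 ∈ Ioc 0 T ∧ q.2 ∈ Ioo 0 (s q.1)}
  uxx_cont : ContinuousOn (fun q : ℝ × ℝ => deriv (deriv (u q.1)) q.2)
      {q : ℝ × ℝ | q.1 ∈ Ioc 0 T ∧ q.2 ∈ Ioo 0 (s q.1)}
  ux_cont : ContinuousOn (fun q : ℝ × ℝ => deriv (u q.1) q.2)
      {q : ℝ × ℝ | q.1 ∈ Ioc 0 T ∧ q.2 ∈ Icc 0 (s q.1)}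
  u_cont : ContinuousOn (fun q : ℝ × ℝ => u q.1 q.2)
      {q : ℝ × ℝ | q.1 ∈ Icc 0 T ∧ q.2 ∈ Icc 0 (s q.1)}
  u_nonneg : ∀ t ∈ Icc 0 T, ∀ x ∈ Icc 0 (s t), 0 ≤ u t x
  heat : ∀ t ∈ Ioc 0 T, ∀ x ∈ Ioo 0 (s t),
      deriv (fun τ => u τ x) t = deriv (deriv (u t)) x
  bc_zero : ∀ t ∈ Ioc 0 T, -deriv (u t) 0 = u t 0 ^ p
  bc_free : ∀ t ∈ Ioc 0 T, u t (s t) = 0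
  stefan : ∀ t ∈ Ioc 0 T, deriv s t = -deriv (u t) (s t)
  init : ∀ x ∈ Icc 0 s₀, u 0 x = φ x
  init_s : s 0 = s₀

/-- `(s,u)` is a global-in-time solution of problem (P). -/
def IsGlobalSol (p s₀ : ℝ) (φ : ℝ → ℝ) (s : ℝ → ℝ) (u : ℝ → ℝ → ℝ) : Prop :=
  ∀ T : ℝ, 0 < T → IsSolOn p s₀ φ T s u

/-- `Tm ∈ (0,∞]` is the maximal existence time of the solution `(s,u)` of (P) with
initial data `(s₀,φ)`: the solution exists on `(0,T]` for every `T < Tm`, and for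
`T > Tm` problem (P) admits no solution on `(0,T]`. -/
def IsMaxSol (p s₀ : ℝ) (φ : ℝ → ℝ) (Tm : ℝ≥0∞) (s : ℝ → ℝ) (u : ℝ → ℝ → ℝ) : Prop :=
  0 < Tm ∧
    (∀ T : ℝ, 0 < T → ENNReal.ofReal T < Tm → IsSolOn p s₀ φ T s u) ∧
    (∀ T : ℝ, Tm < ENNReal.ofReal T → ¬∃ σ v, IsSolOn p s₀ φ T σ v)

/-- The sup norm `‖u(t)‖_{L^∞(0,s(t))}`. -/
def supNorm (s : ℝ → ℝ) (u : ℝ → ℝ → ℝ) (t : ℝ) : ℝ :=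
  sSup (u t '' Ioo 0 (s t))

/-- The `L¹` norm `‖u(t)‖_{L¹(0,s(t))}` of the nonnegative function `u(t,·)`. -/
def L1Norm (s : ℝ → ℝ) (u : ℝ → ℝ → ℝ) (t : ℝ) : ℝ :=
  ∫ x in (0:ℝ)..(s t), u t x

/-- The energy `E(s(t),u(t))`. -/
def energy (p : ℝ) (s : ℝ → ℝ) (u : ℝ → ℝ → ℝ) (t : ℝ) : ℝ :=
  1 / 2 * (∫ x in (0:ℝ)..(s t), (deriv (u t) x) ^ 2) - u t 0 ^ (p + 1) / (p + 1)


/-- heat kernel; vanishes for `t ≤ 0` because `√t = 0` there -/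
def k0 (t x : ℝ) : ℝ := exp (-(x ^ 2 / (4 * t))) / (2 * √π * √t)
def k1 (t x : ℝ) : ℝ := -(x / (2 * t)) * k0 t x
def k2 (t x : ℝ) : ℝ := (x ^ 2 / (4 * t ^ 2) - 1 / (2 * t)) * k0 t x

lemma k0_np {t : ℝ} (h : t ≤ 0) (x : ℝ) : k0 t x = 0 := by
  simp [k0, Real.sqrt_eq_zero_of_nonpos h]
lemma k1_np {t : ℝ} (h : t ≤ 0) (x : ℝ) : k1 t x = 0 := by simp [k1, k0_np h]
lemma k2_np {t : ℝ} (h : t ≤ 0) (x : ℝ) : k2 t x = 0 := by simp [k2, k0_np h]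

lemma k0_meas : Measurable (fun q : ℝ × ℝ => k0 q.1 q.2) := by unfold k0; fun_prop
lemma k1_meas : Measurable (fun q : ℝ × ℝ => k1 q.1 q.2) := by unfold k1 k0; fun_prop
lemma k2_meas : Measurable (fun q : ℝ × ℝ => k2 q.1 q.2) := by unfold k2 k0; fun_prop

lemma k0_nonneg (t x : ℝ) : 0 ≤ k0 t x := by unfold k0; positivity

lemma k0_neg (t x : ℝ) : k0 t (-x) = k0 t x := by simp [k0]
lemma k1_neg (t x : ℝ) : k1 t (-x) = - k1 t x := by simp [k1, k0_neg]; ring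

lemma k0_dx (t x : ℝ) : HasDerivAt (k0 t) (k1 t x) x := by
  rcases le_or_gt t 0 with h | h
  · rw [k1_np h]
    have : k0 t = fun _ => 0 := by ext y; exact k0_np h y
    rw [this]; exact hasDerivAt_const _ _
  · have h1 : HasDerivAt (fun x : ℝ => -(x ^ 2 / (4 * t))) (-(2 * x / (4 * t))) x := by
      have := ((hasDerivAt_pow 2 x).div_const (4 * t)).fun_neg
      simpa using this
    have h2 := (h1.exp).div_const (2 * √π * √t)
    refine h2.congr_deriv ?_
    unfold k1 k0
    field_simp; ring

lemma k1_dx (t x : ℝ) : HasDerivAt (k1 t) (k2 t x) x := by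
  rcases le_or_gt t 0 with h | h
  · rw [k2_np h]
    have : k1 t = fun _ => 0 := by ext y; exact k1_np h y
    rw [this]; exact hasDerivAt_const _ _
  · have h1 : HasDerivAt (fun x : ℝ => -(x / (2 * t))) (-(1 / (2 * t))) x := by
      have := ((hasDerivAt_id' x).div_const (2 * t)).fun_neg
      simpa using this
    have h2 := h1.mul (k0_dx t x)
    refine h2.congr_deriv ?_
    unfold k2 k1
    field_simp; ring

lemma k0_dt_pos {t : ℝ} (h : 0 < t) (x : ℝ) : HasDerivAt (fun t => k0 t x) (k2 t x) t := by
  have h1 : HasDerivAt (fun t : ℝ => -(x ^ 2 / (4 * t))) (x ^ 2 / (4 * t ^ 2)) t := by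
    have := ((hasDerivAt_inv h.ne').const_mul (x ^ 2 / 4)).neg
    refine (this.congr_of_eventuallyEq ?_).congr_deriv ?_
    · filter_upwards with y; simp; ring
    · field_simp
  have h3 : HasDerivAt (fun t : ℝ => 2 * √π * √t) (2 * √π * (1 / (2 * √t))) t :=
    (Real.hasDerivAt_sqrt h.ne').const_mul _
  have hs : 0 < √t := Real.sqrt_pos.2 h
  have hpi : 0 < √π := Real.sqrt_pos.2 pi_pos
  have h2 := (h1.exp).div h3 (by positivity)
  refine h2.congr_deriv ?_
  unfold k2 k0
  have ht : t = √t ^ 2 := (Real.sq_sqrt h.le).symm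
  set r := √t with hr
  rw [ht]
  field_simp

/-- elementary bounds `zⁿ e^{-z}` -/
lemma zexp1 {z : ℝ} (_hz : 0 ≤ z) : z * exp (-z) ≤ 1 := by
  rw [exp_neg, mul_inv_le_iff₀ (exp_pos z)]
  have := add_one_le_exp z
  linarith
lemma zexp2 {z : ℝ} (hz : 0 ≤ z) : z ^ 2 * exp (-z) ≤ 2 := by
  rw [exp_neg, mul_inv_le_iff₀ (exp_pos z)]
  have := quadratic_le_exp_of_nonneg hz
  nlinarith
lemma zexp3 {z : ℝ} (hz : 0 ≤ z) : z ^ 3 * exp (-z) ≤ 6 := by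
  rw [exp_neg, mul_inv_le_iff₀ (exp_pos z)]
  have := Real.pow_div_factorial_le_exp z hz 3
  simp [Nat.factorial] at this
  linarith

lemma kap : (1 : ℝ) ≤ √π := by
  rw [Real.one_le_sqrt]; linarith [pi_gt_three]

lemma k0_eq {t : ℝ} (_h : 0 < t) (x : ℝ) :
    k0 t x = exp (-(x ^ 2 / (4 * t))) * ((2 * √π)⁻¹ * (√t)⁻¹) := by
  unfold k0; rw [div_eq_mul_inv, mul_inv]

lemma kapi : (2 * √π)⁻¹ ≤ 1 / 2 ∧ 0 < (2 * √π)⁻¹ := by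
  have := kap
  constructor
  · rw [inv_le_comm₀ (by positivity) (by norm_num)]; linarith
  · positivity

lemma k0_le (t x : ℝ) : k0 t x ≤ (√t)⁻¹ := by
  rcases le_or_gt t 0 with h | h
  · rw [k0_np h]; positivity
  · rw [k0_eq h]
    have h1 : exp (-(x ^ 2 / (4 * t))) ≤ 1 := exp_le_one_iff.2 (by simp; positivity)
    have h2 : 0 ≤ (√t)⁻¹ := by positivity
    obtain ⟨h3, h4⟩ := kapi
    calc _ ≤ 1 * (1 * (√t)⁻¹) := by gcongr; linarith
      _ = _ := by ring

/-- key master bound: `x^(2n) k0 ≤ c_n 4^n t^n /(2√t)` -/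
lemma k0_pow {t : ℝ} (h : 0 < t) (x : ℝ) (n : ℕ) (c : ℝ)
    (hc : ∀ z : ℝ, 0 ≤ z → z ^ n * exp (-z) ≤ c) :
    x ^ (2 * n) * k0 t x ≤ c / 2 * (4 * t) ^ n * (√t)⁻¹ := by
  have h1 := hc (x ^ 2 / (4 * t)) (by positivity)
  have hcn : 0 ≤ c := le_trans (by positivity) h1
  rw [k0_eq h]
  obtain ⟨h3, h4⟩ := kapi
  have e : x ^ (2 * n) * (exp (-(x ^ 2 / (4 * t))) * ((2 * √π)⁻¹ * (√t)⁻¹)) =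
    ((x ^ 2 / (4 * t)) ^ n * exp (-(x ^ 2 / (4 * t)))) * ((2 * √π)⁻¹ * (4 * t) ^ n * (√t)⁻¹) := by
    rw [pow_mul, div_pow]; field_simp
  rw [e]
  calc _ ≤ c * ((1 / 2) * (4 * t) ^ n * (√t)⁻¹) := by gcongr
    _ = _ := by ring

lemma k0_sq {t : ℝ} (h : 0 < t) (x : ℝ) : x ^ 2 * k0 t x ≤ 2 * t * (√t)⁻¹ := by
  have := k0_pow h x 1 1 (fun z hz => by simpa using zexp1 hz)
  norm_num at this; linarith
lemma k0_four {t : ℝ} (h : 0 < t) (x : ℝ) : x ^ 4 * k0 t x ≤ 16 * t ^ 2 * (√t)⁻¹ := by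
  have := k0_pow h x 2 2 (fun z hz => zexp2 hz)
  norm_num at this; linarith
lemma k0_six {t : ℝ} (h : 0 < t) (x : ℝ) : x ^ 6 * k0 t x ≤ 192 * t ^ 3 * (√t)⁻¹ := by
  have := k0_pow h x 3 6 (fun z hz => zexp3 hz)
  norm_num at this; linarith

lemma tsq {t : ℝ} (h : 0 < t) : t * (√t)⁻¹ = √t := by
  have hs : 0 < √t := Real.sqrt_pos.2 h
  field_simp; exact (Real.sq_sqrt h.le).symm

lemma abs_k1 {t : ℝ} (h : 0 < t) (x : ℝ) : |k1 t x| = |x| / (2 * t) * k0 t x := by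
  unfold k1
  rw [abs_mul, abs_neg, abs_div, abs_of_nonneg (k0_nonneg t x), abs_of_pos (by positivity : 0 < 2 * t)]

lemma abs_k2 {t : ℝ} (h : 0 < t) (x : ℝ) :
    |k2 t x| ≤ x ^ 2 / (4 * t ^ 2) * k0 t x + 1 / (2 * t) * k0 t x := by
  unfold k2
  rw [abs_mul, abs_of_nonneg (k0_nonneg t x), ← add_mul]
  gcongr
  · exact k0_nonneg t x
  · rw [abs_le]
    have h1 : 0 ≤ x ^ 2 / (4 * t ^ 2) := by positivity
    have h2 : 0 ≤ 1 / (2 * t) := by positivity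
    constructor <;> linarith

/-- far bound for `k1` -/
lemma k1_far (t x : ℝ) : |x| * |k1 t x| ≤ (√t)⁻¹ := by
  rcases le_or_gt t 0 with h | h
  · rw [k1_np h]; simp
  · rw [abs_k1 h]
    have h1 := k0_sq h x
    have : |x| * (|x| / (2 * t) * k0 t x) = (x ^ 2 * k0 t x) / (2 * t) := by
      rw [← sq_abs x]; ring
    rw [this, div_le_iff₀ (by positivity)]; linarith

/-- near bound for `k1` along a Lipschitz curve -/
lemma k1_near {t x C : ℝ} (hx : |x| ≤ C * t) : |k1 t x| ≤ C * (√t)⁻¹ := by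
  rcases le_or_gt t 0 with h | h
  · rw [k1_np h, Real.sqrt_eq_zero_of_nonpos h]; simp
  · rw [abs_k1 h]
    have hC : 0 ≤ C := by
      by_contra hC; push Not at hC
      have := abs_nonneg x
      nlinarith
    have h1 := k0_le t x
    have h2 : |x| / (2 * t) ≤ C := by
      rw [div_le_iff₀ (by positivity)]; nlinarith
    have := k0_nonneg t x
    gcongr

lemma k2_le {t : ℝ} (h : 0 < t) (x : ℝ) : |k2 t x| ≤ t⁻¹ * (√t)⁻¹ := by
  refine (abs_k2 h x).trans ?_
  have h1 := k0_sq h x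
  have h2 := k0_le t x
  have e1 : x ^ 2 / (4 * t ^ 2) * k0 t x ≤ (2 * t * (√t)⁻¹) / (4 * t ^ 2) := by
    rw [div_mul_eq_mul_div]; gcongr
  have e2 : 1 / (2 * t) * k0 t x ≤ 1 / (2 * t) * (√t)⁻¹ := by gcongr
  have e3 : (2 * t * (√t)⁻¹) / (4 * t ^ 2) + 1 / (2 * t) * (√t)⁻¹ = t⁻¹ * (√t)⁻¹ := by
    field_simp; ring
  linarith

lemma k2_far {t : ℝ} (h : 0 < t) (x : ℝ) : x ^ 2 * |k2 t x| ≤ 5 * (√t)⁻¹ := by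
  have h0 := abs_k2 h x
  have h1 := k0_sq h x
  have h2 := k0_four h x
  have e : x ^ 2 * |k2 t x| ≤ (x ^ 4 * k0 t x) / (4 * t ^ 2) + (x ^ 2 * k0 t x) / (2 * t) := by
    calc _ ≤ x ^ 2 * (x ^ 2 / (4 * t ^ 2) * k0 t x + 1 / (2 * t) * k0 t x) := by gcongr
      _ = _ := by ring
  have e1 : (x ^ 4 * k0 t x) / (4 * t ^ 2) ≤ 4 * (√t)⁻¹ := by
    rw [div_le_iff₀ (by positivity)]; linarith
  have e2 : (x ^ 2 * k0 t x) / (2 * t) ≤ (√t)⁻¹ := by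
    rw [div_le_iff₀ (by positivity)]; linarith
  linarith

/-- uniform bounds away from the origin -/
lemma k_off {η T : ℝ} (hη : 0 < η) (hT : 0 < T) : ∃ M : ℝ, 0 ≤ M ∧ ∀ t x : ℝ, t ≤ T →
    (η ≤ t ∨ η ≤ |x|) → |k0 t x| ≤ M ∧ |k1 t x| ≤ M ∧ |k2 t x| ≤ M := by
  set a1 := (√η)⁻¹ with ha1
  set a2 := ((√η)⁻¹ + 2 * √T) / (2 * η) with ha2
  set a3 := η⁻¹ * (√η)⁻¹ with ha3
  set a4 := 2 * √T / η ^ 2 with ha4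
  set a5 := 8 * √T / η ^ 3 with ha5
  set a6 := 56 * √T / η ^ 4 with ha6
  have p1 : 0 ≤ a1 := by positivity
  have p2 : 0 ≤ a2 := by positivity
  have p3 : 0 ≤ a3 := by positivity
  have p4 : 0 ≤ a4 := by positivity
  have p5 : 0 ≤ a5 := by positivity
  have p6 : 0 ≤ a6 := by positivity
  refine ⟨a1 + a2 + a3 + a4 + a5 + a6, by positivity, ?_⟩
  intro t x htT hor
  rcases le_or_gt t 0 with h | h
  · rw [k0_np h, k1_np h, k2_np h, abs_zero]
    have : 0 ≤ a1 + a2 + a3 + a4 + a5 + a6 := by positivity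
    exact ⟨this, this, this⟩
  have hk := k0_nonneg t x
  have hs : √t ≤ √T := Real.sqrt_le_sqrt htT
  rcases hor with ho | ho
  · have i1 : (√t)⁻¹ ≤ (√η)⁻¹ := by
      gcongr
    have b0 : |k0 t x| ≤ a1 := by rw [abs_of_nonneg hk]; exact (k0_le t x).trans i1
    have b1 : |k1 t x| ≤ a2 := by
      rw [abs_k1 h, div_mul_eq_mul_div]
      have h1 := k0_sq h x
      have h2 := k0_le t x
      have h3 : |x| ≤ 1 + x ^ 2 := by
        rw [← sq_abs x]; nlinarith [sq_nonneg (|x| - 1), abs_nonneg x]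
      have h4 := tsq h
      have h5 : |x| * k0 t x ≤ (√η)⁻¹ + 2 * √T := by nlinarith
      rw [ha2]; gcongr
    have b2 : |k2 t x| ≤ a3 := by
      refine (k2_le h x).trans ?_
      rw [ha3]; gcongr
    refine ⟨?_, ?_, ?_⟩ <;> linarith
  · have hx : 0 < |x| := lt_of_lt_of_le hη ho
    have h4 := tsq h
    have c0 := k0_sq h x
    have c1 := k0_four h x
    have c2 := k0_six h x
    have g4 : x ^ 4 * k0 t x / (2 * t) ≤ 8 * √T := by
      rw [div_le_iff₀ (by positivity)]
      have : 16 * t ^ 2 * (√t)⁻¹ = 16 * t * √t := by linear_combination 16 * t * h4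
      nlinarith
    have g6 : x ^ 6 * k0 t x / (4 * t ^ 2) ≤ 48 * √T := by
      rw [div_le_iff₀ (by positivity)]
      have : 192 * t ^ 3 * (√t)⁻¹ = 192 * t ^ 2 * √t := by linear_combination 192 * t ^ 2 * h4
      nlinarith [sq_pos_of_pos h]
    have b0 : |k0 t x| ≤ a4 := by
      rw [abs_of_nonneg hk, ha4, le_div_iff₀ (by positivity)]
      have : η ^ 2 ≤ x ^ 2 := by rw [← sq_abs x]; gcongr
      nlinarith
    have b1 : |k1 t x| ≤ a5 := by
      rw [ha5, le_div_iff₀ (by positivity)]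
      have e : |k1 t x| * |x| ^ 3 = x ^ 4 * k0 t x / (2 * t) := by
        rw [abs_k1 h, ← Even.pow_abs (by decide : Even 4) x]; ring
      have : |k1 t x| * η ^ 3 ≤ |k1 t x| * |x| ^ 3 := by gcongr
      linarith
    have b2 : |k2 t x| ≤ a6 := by
      rw [ha6, le_div_iff₀ (by positivity)]
      have e : |k2 t x| * |x| ^ 4 ≤ x ^ 6 * k0 t x / (4 * t ^ 2) + x ^ 4 * k0 t x / (2 * t) := by
        rw [Even.pow_abs (by decide : Even 4) x]
        calc _ ≤ (x ^ 2 / (4 * t ^ 2) * k0 t x + 1 / (2 * t) * k0 t x) * x ^ 4 := by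
              gcongr; exact abs_k2 h x
          _ = _ := by ring
      have : |k2 t x| * η ^ 4 ≤ |k2 t x| * |x| ^ 4 := by gcongr
      linarith
    refine ⟨?_, ?_, ?_⟩ <;> linarith

lemma k0_dt_zero {x : ℝ} (hx : x ≠ 0) : HasDerivAt (fun t => k0 t x) 0 0 := by
  rw [hasDerivAt_iff_tendsto_slope]
  have hb : ∀ t : ℝ, ‖slope (fun t => k0 t x) 0 t‖ ≤ 16 / x ^ 4 * √t := by
    intro t
    rw [slope_def_field, k0_np le_rfl, Real.norm_eq_abs, sub_zero, sub_zero]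
    rcases le_or_gt t 0 with h | h
    · rw [k0_np h]; simp; positivity
    · rw [abs_of_nonneg (div_nonneg (k0_nonneg _ _) h.le), div_le_iff₀ h, div_mul_eq_mul_div,
        div_mul_eq_mul_div, le_div_iff₀ (by positivity)]
      have := k0_four h x
      have h4 := tsq h
      have : 16 * t ^ 2 * (√t)⁻¹ = 16 * t * √t := by linear_combination 16 * t * h4
      linarith
  refine squeeze_zero_norm hb ?_
  have : Tendsto (fun t : ℝ => 16 / x ^ 4 * √t) (𝓝 0) (𝓝 (16 / x ^ 4 * √0)) :=
    (Continuous.tendsto (by fun_prop) 0)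
  simp only [Real.sqrt_zero, mul_zero] at this
  exact this.mono_left nhdsWithin_le_nhds

lemma k0_dt {t x : ℝ} (h : t ≠ 0 ∨ x ≠ 0) : HasDerivAt (fun t => k0 t x) (k2 t x) t := by
  rcases lt_trichotomy t 0 with h1 | h1 | h1
  · rw [k2_np h1.le]
    refine (hasDerivAt_const t (0:ℝ)).congr_of_eventuallyEq ?_
    filter_upwards [Iio_mem_nhds h1] with y hy
    exact k0_np (le_of_lt hy) x
  · subst h1
    rw [k2_np le_rfl]
    exact k0_dt_zero (by simpa using h)
  · exact k0_dt_pos h1 x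

lemma k_cont {t : ℝ} (ht : t ≠ 0) (x : ℝ) : ContinuousAt (fun q : ℝ × ℝ => k0 q.1 q.2) (t, x) ∧
    ContinuousAt (fun q : ℝ × ℝ => k1 q.1 q.2) (t, x) ∧
    ContinuousAt (fun q : ℝ × ℝ => k2 q.1 q.2) (t, x) := by
  rcases lt_or_gt_of_ne ht with h | h
  · have hev : ∀ᶠ q : ℝ × ℝ in 𝓝 (t, x), q.1 ≤ 0 := by
      have : Tendsto (fun q : ℝ × ℝ => q.1) (𝓝 (t, x)) (𝓝 t) := continuous_fst.tendsto (t, x)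
      filter_upwards [this (Iio_mem_nhds h)] with q hq using le_of_lt hq
    refine ⟨?_, ?_, ?_⟩
    · exact continuousAt_const.congr (hev.mono fun q hq => (k0_np hq q.2).symm)
    · exact continuousAt_const.congr (hev.mono fun q hq => (k1_np hq q.2).symm)
    · exact continuousAt_const.congr (hev.mono fun q hq => (k2_np hq q.2).symm)
  · have hs : 0 < √t := Real.sqrt_pos.2 h
    have hpi : 0 < √π := Real.sqrt_pos.2 pi_pos
    have h0 : ContinuousAt (fun q : ℝ × ℝ => k0 q.1 q.2) (t, x) := by
      unfold k0
      refine ContinuousAt.div ?_ ?_ (by positivity)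
      · refine (ContinuousAt.neg (ContinuousAt.div ?_ ?_ (by positivity))).rexp <;> fun_prop
      · fun_prop
    refine ⟨h0, ?_, ?_⟩
    · unfold k1
      refine ContinuousAt.mul (ContinuousAt.neg (ContinuousAt.div ?_ ?_ (by positivity))) h0 <;> fun_prop
    · unfold k2
      refine ContinuousAt.mul (ContinuousAt.sub (ContinuousAt.div ?_ ?_ (by positivity))
        (ContinuousAt.div ?_ ?_ (by positivity))) h0 <;> fun_prop


/-- general heat potential -/
def Pk (k : ℝ → ℝ → ℝ) (μ : Measure ℝ) (a c v : ℝ → ℝ) (t x : ℝ) : ℝ :=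
  ∫ ω, k (t - a ω) (x - c ω) * v ω ∂μ

lemma Pk_meas {k : ℝ → ℝ → ℝ} (hk : Measurable (fun q : ℝ × ℝ => k q.1 q.2)) {μ : Measure ℝ}
    {a c v : ℝ → ℝ} (ha : Measurable a) (hc : Measurable c) (hv : Measurable v) (t x : ℝ) :
    AEStronglyMeasurable (fun ω => k (t - a ω) (x - c ω) * v ω) μ := by
  have : Measurable (fun ω => k (t - a ω) (x - c ω) * v ω) := by
    refine Measurable.mul ?_ hv
    exact hk.comp (g := fun q : ℝ × ℝ => k q.1 q.2) (f := fun ω => (t - a ω, x - c ω)) (by fun_prop)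
  exact this.aestronglyMeasurable

/-- regularity of heat potentials away from the source set -/
lemma pot {μ : Measure ℝ} [IsFiniteMeasure μ] {a c v : ℝ → ℝ} (ha : Measurable a)
    (hc : Measurable c) (hv : Measurable v) {R : ℝ} (hR : ∀ ω, |v ω| ≤ R) {t0 x0 ε η T : ℝ}
    (hε : 0 < ε) (hη : 0 < η) (hT : 0 < T)
    (hsep : ∀ᵐ ω ∂μ, ∀ t ∈ Metric.ball t0 ε, ∀ x ∈ Metric.ball x0 ε,
      t - a ω ≤ T ∧ (η ≤ t - a ω ∨ η ≤ |x - c ω|))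
    (hne : ∀ᵐ ω ∂μ, a ω ≠ t0) :
    HasDerivAt (fun x => Pk k0 μ a c v t0 x) (Pk k1 μ a c v t0 x0) x0 ∧
    HasDerivAt (fun x => Pk k1 μ a c v t0 x) (Pk k2 μ a c v t0 x0) x0 ∧
    HasDerivAt (fun t => Pk k0 μ a c v t x0) (Pk k2 μ a c v t0 x0) t0 ∧
    ContinuousAt (fun q : ℝ × ℝ => Pk k1 μ a c v q.1 q.2) (t0, x0) ∧
    ContinuousAt (fun q : ℝ × ℝ => Pk k2 μ a c v q.1 q.2) (t0, x0) := by
  obtain ⟨M, hM0, hM⟩ := k_off hη hT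
  have hR0 : 0 ≤ R := (abs_nonneg _).trans (hR 0)
  have ht0 : t0 ∈ Metric.ball t0 ε := Metric.mem_ball_self hε
  have hx0 : x0 ∈ Metric.ball x0 ε := Metric.mem_ball_self hε
  have hb : ∀ᵐ ω ∂μ, ∀ t ∈ Metric.ball t0 ε, ∀ x ∈ Metric.ball x0 ε,
      ‖k0 (t - a ω) (x - c ω) * v ω‖ ≤ M * R ∧ ‖k1 (t - a ω) (x - c ω) * v ω‖ ≤ M * R ∧
      ‖k2 (t - a ω) (x - c ω) * v ω‖ ≤ M * R := by
    filter_upwards [hsep] with ω h t ht x hx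
    obtain ⟨h1, h2⟩ := h t ht x hx
    obtain ⟨m0, m1, m2⟩ := hM _ _ h1 h2
    simp only [norm_mul, Real.norm_eq_abs]
    have := hR ω
    have hv0 := abs_nonneg (v ω)
    refine ⟨?_, ?_, ?_⟩ <;> gcongr
  have hint : Integrable (fun _ : ℝ => M * R) μ := integrable_const _
  have hev : ∀ᶠ q : ℝ × ℝ in 𝓝 (t0, x0), q.1 ∈ Metric.ball t0 ε ∧ q.2 ∈ Metric.ball x0 ε := by
    rw [nhds_prod_eq]
    exact Filter.prod_mem_prod (Metric.ball_mem_nhds t0 hε) (Metric.ball_mem_nhds x0 hε)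
  have hcont : ∀ k : ℝ → ℝ → ℝ, Measurable (fun q : ℝ × ℝ => k q.1 q.2) →
      (∀ t x : ℝ, t ≠ 0 → ContinuousAt (fun q : ℝ × ℝ => k q.1 q.2) (t, x)) →
      (∀ᵐ ω ∂μ, ∀ t ∈ Metric.ball t0 ε, ∀ x ∈ Metric.ball x0 ε,
        ‖k (t - a ω) (x - c ω) * v ω‖ ≤ M * R) →
      ContinuousAt (fun q : ℝ × ℝ => Pk k μ a c v q.1 q.2) (t0, x0) := by
    intro k hk1 hk2 hk3
    refine continuousAt_of_dominated (bound := fun _ => M * R) ?_ ?_ hint ?_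
    · exact Eventually.of_forall fun q => Pk_meas hk1 ha hc hv q.1 q.2
    · filter_upwards [hev] with q hq
      filter_upwards [hk3] with ω h using h _ hq.1 _ hq.2
    · filter_upwards [hne] with ω h
      refine ContinuousAt.mul ?_ continuousAt_const
      have h2 := hk2 (t0 - a ω) (x0 - c ω) (sub_ne_zero.2 (Ne.symm h))
      exact ContinuousAt.comp (f := fun q : ℝ × ℝ => (q.1 - a ω, q.2 - c ω)) (x := (t0, x0))
        (g := fun q : ℝ × ℝ => k q.1 q.2) h2 (by fun_prop)
  refine ⟨?_, ?_, ?_, ?_, ?_⟩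
  · refine (hasDerivAt_integral_of_dominated_loc_of_deriv_le (bound := fun _ => M * R)
      (F := fun x ω => k0 (t0 - a ω) (x - c ω) * v ω)
      (F' := fun x ω => k1 (t0 - a ω) (x - c ω) * v ω) (Metric.ball_mem_nhds x0 hε) ?_ ?_ ?_ ?_ hint ?_).2
    · exact Eventually.of_forall fun x => Pk_meas k0_meas ha hc hv t0 x
    · refine hint.mono' (Pk_meas k0_meas ha hc hv t0 x0) ?_
      filter_upwards [hb] with ω h using (h t0 ht0 x0 hx0).1
    · exact Pk_meas k1_meas ha hc hv t0 x0
    · filter_upwards [hb] with ω h x hx using (h t0 ht0 x hx).2.1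
    · filter_upwards with ω x _
      exact ((k0_dx (t0 - a ω) (x - c ω)).comp_sub_const x (c ω)).mul_const (v ω)
  · refine (hasDerivAt_integral_of_dominated_loc_of_deriv_le (bound := fun _ => M * R)
      (F := fun x ω => k1 (t0 - a ω) (x - c ω) * v ω)
      (F' := fun x ω => k2 (t0 - a ω) (x - c ω) * v ω) (Metric.ball_mem_nhds x0 hε) ?_ ?_ ?_ ?_ hint ?_).2
    · exact Eventually.of_forall fun x => Pk_meas k1_meas ha hc hv t0 x
    · refine hint.mono' (Pk_meas k1_meas ha hc hv t0 x0) ?_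
      filter_upwards [hb] with ω h using (h t0 ht0 x0 hx0).2.1
    · exact Pk_meas k2_meas ha hc hv t0 x0
    · filter_upwards [hb] with ω h x hx using (h t0 ht0 x hx).2.2
    · filter_upwards with ω x _
      exact ((k1_dx (t0 - a ω) (x - c ω)).comp_sub_const x (c ω)).mul_const (v ω)
  · refine (hasDerivAt_integral_of_dominated_loc_of_deriv_le (bound := fun _ => M * R)
      (F := fun t ω => k0 (t - a ω) (x0 - c ω) * v ω)
      (F' := fun t ω => k2 (t - a ω) (x0 - c ω) * v ω) (Metric.ball_mem_nhds t0 hε) ?_ ?_ ?_ ?_ hint ?_).2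
    · exact Eventually.of_forall fun t => Pk_meas k0_meas ha hc hv t x0
    · refine hint.mono' (Pk_meas k0_meas ha hc hv t0 x0) ?_
      filter_upwards [hb] with ω h using (h t0 ht0 x0 hx0).1
    · exact Pk_meas k2_meas ha hc hv t0 x0
    · filter_upwards [hb] with ω h t ht using (h t ht x0 hx0).2.2
    · filter_upwards [hsep] with ω h t ht
      have hor : t - a ω ≠ 0 ∨ x0 - c ω ≠ 0 := by
        rcases (h t ht x0 hx0).2 with h1 | h1
        · left; linarith
        · right; intro h2; rw [h2, abs_zero] at h1; linarith
      exact ((k0_dt hor).comp_sub_const t (a ω)).mul_const (v ω)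
  · refine hcont k1 k1_meas (fun t x h => (k_cont h x).2.1) ?_
    filter_upwards [hb] with ω h t ht x hx using (h t ht x hx).2.1
  · refine hcont k2 k2_meas (fun t x h => (k_cont h x).2.2) ?_
    filter_upwards [hb] with ω h t ht x hx using (h t ht x hx).2.2


/-- admissible density -/
structure Dens (v : ℝ → ℝ) (R : ℝ) : Prop where
  meas : Measurable v
  bd : ∀ t, |v t| ≤ R
  np : ∀ t ≤ 0, v t = 0
  cont : ∀ t > 0, ContinuousAt v t

lemma Dens.nonneg {v : ℝ → ℝ} {R : ℝ} (h : Dens v R) : 0 ≤ R := (abs_nonneg _).trans (h.bd 0)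

lemma Dens.cont' {v : ℝ → ℝ} {R : ℝ} (h : Dens v R) {t : ℝ} (ht : t ≠ 0) : ContinuousAt v t := by
  rcases lt_or_gt_of_ne ht with h1 | h1
  · exact continuousAt_const.congr (by
      filter_upwards [Iio_mem_nhds h1] with y hy using (h.np y (le_of_lt hy)).symm)
  · exact h.cont t h1

def Curve (γ : ℝ → ℝ) (C : ℝ) : Prop := ∀ t τ, |γ t - γ τ| ≤ C * |t - τ|

lemma Curve.nonneg {γ : ℝ → ℝ} {C : ℝ} (h : Curve γ C) : 0 ≤ C := by
  have := (abs_nonneg _).trans (h 1 0); simpa using this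

lemma Curve.cont {γ : ℝ → ℝ} {C : ℝ} (h : Curve γ C) : Continuous γ := by
  have : LipschitzWith C.toNNReal γ := by
    refine LipschitzWith.of_dist_le_mul fun x y => ?_
    rw [Real.coe_toNNReal _ h.nonneg, Real.dist_eq, Real.dist_eq]; exact h x y
  exact this.continuous

/-- layer potential with kernel `k` -/
def Lay (k : ℝ → ℝ → ℝ) (γ v : ℝ → ℝ) (t x : ℝ) : ℝ := Pk k volume (fun τ => τ) γ v t x

lemma Lay_sigma (k : ℝ → ℝ → ℝ) (γ v : ℝ → ℝ) (t x : ℝ) :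
    Lay k γ v t x = ∫ σ, k σ (x - γ (t - σ)) * v (t - σ) := by
  unfold Lay Pk
  rw [← integral_sub_left_eq_self (fun τ => k (t - τ) (x - γ τ) * v τ) volume t]
  simp

lemma Lay_restrict {k : ℝ → ℝ → ℝ} (hk : ∀ t ≤ 0, ∀ x, k t x = 0) {γ v : ℝ → ℝ} {R : ℝ}
    (hv : Dens v R) {t T : ℝ} (h : t ≤ T) (x : ℝ) :
    Lay k γ v t x = Pk k (volume.restrict (Ioc 0 T)) (fun τ => τ) γ v t x := by
  unfold Lay Pk
  refine (setIntegral_eq_integral_of_forall_compl_eq_zero fun τ hτ => ?_).symm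
  simp only [mem_Ioc, not_and_or, not_lt, not_le] at hτ
  rcases hτ with h1 | h1
  · rw [hv.np τ h1, mul_zero]
  · rw [hk _ (by linarith), zero_mul]

lemma lay_off {γ v : ℝ → ℝ} {C R : ℝ} (hγ : Curve γ C) (hv : Dens v R) {t0 x0 : ℝ} (ht0 : 0 < t0)
    (hx0 : x0 ≠ γ t0) :
    HasDerivAt (fun x => Lay k0 γ v t0 x) (Lay k1 γ v t0 x0) x0 ∧
    HasDerivAt (fun x => Lay k1 γ v t0 x) (Lay k2 γ v t0 x0) x0 ∧
    HasDerivAt (fun t => Lay k0 γ v t x0) (Lay k2 γ v t0 x0) t0 ∧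
    ContinuousAt (fun q : ℝ × ℝ => Lay k1 γ v q.1 q.2) (t0, x0) ∧
    ContinuousAt (fun q : ℝ × ℝ => Lay k2 γ v q.1 q.2) (t0, x0) := by
  have hC := hγ.nonneg
  set d := |x0 - γ t0| with hd
  have hdpos : 0 < d := abs_pos.2 (sub_ne_zero.2 hx0)
  set ε := d / (4 * (1 + C)) with hεd
  have hε : 0 < ε := by positivity
  have hdε : d = 4 * (1 + C) * ε := by rw [hεd]; field_simp
  have key := pot (μ := volume.restrict (Ioc 0 (t0 + ε))) (a := fun τ => τ) (c := γ) (v := v)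
    (t0 := t0) (x0 := x0) (ε := ε) (η := ε) (T := t0 + ε)
    measurable_id hγ.cont.measurable hv.meas hv.bd hε hε (by linarith) (by
      rw [ae_restrict_iff' measurableSet_Ioc]
      filter_upwards with τ hτ t ht x hx
      rw [Metric.mem_ball, Real.dist_eq, abs_lt] at ht
      rw [Metric.mem_ball, Real.dist_eq] at hx
      refine ⟨by linarith [hτ.1], ?_⟩
      by_contra hcon
      push Not at hcon
      obtain ⟨h1, h2⟩ := hcon
      have h3 : |t0 - τ| ≤ 2 * ε := by rw [abs_le]; constructor <;> linarith [hτ.2]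
      have h4 := hγ t0 τ
      have h5 : d ≤ |x - x0| + |x - γ τ| + |γ t0 - γ τ| := by
        rw [hd, abs_sub_comm x x0, abs_sub_comm (γ t0)]
        calc |x0 - γ t0| = |(x0 - x) + (x - γ τ) + (γ τ - γ t0)| := by ring_nf
          _ ≤ _ := abs_add_three _ _ _
      have h6 : C * |t0 - τ| ≤ C * (2 * ε) := by gcongr
      nlinarith) (by
      refine ae_restrict_of_ae ?_
      have : ({t0}ᶜ : Set ℝ) ∈ ae volume := compl_mem_ae_iff.2 (by simp)
      filter_upwards [this] with ω h using h)
  have e1 : ∀ t ≤ t0 + ε, ∀ x, Lay k0 γ v t x = _ := fun t h x => Lay_restrict (fun _ h x => k0_np h x) hv h x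
  have e2 : ∀ t ≤ t0 + ε, ∀ x, Lay k1 γ v t x = _ := fun t h x => Lay_restrict (fun _ h x => k1_np h x) hv h x
  have e3 : ∀ t ≤ t0 + ε, ∀ x, Lay k2 γ v t x = _ := fun t h x => Lay_restrict (fun _ h x => k2_np h x) hv h x
  have hle : t0 ≤ t0 + ε := by linarith
  have hev : ∀ᶠ t in 𝓝 t0, t ≤ t0 + ε := by
    filter_upwards [Iio_mem_nhds (by linarith : t0 < t0 + ε)] with t ht using le_of_lt ht
  have hev2 : ∀ᶠ q : ℝ × ℝ in 𝓝 (t0, x0), q.1 ≤ t0 + ε :=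
    (continuous_fst.tendsto (t0, x0)).eventually hev
  obtain ⟨g1, g2, g3, g4, g5⟩ := key
  refine ⟨?_, ?_, ?_, ?_, ?_⟩
  · rw [e2 t0 hle]
    exact g1.congr_of_eventuallyEq (Eventually.of_forall fun x => e1 t0 hle x)
  · rw [e3 t0 hle]
    exact g2.congr_of_eventuallyEq (Eventually.of_forall fun x => e2 t0 hle x)
  · rw [e3 t0 hle]
    exact g3.congr_of_eventuallyEq (hev.mono fun t h => e1 t h x0)
  · exact g4.congr (hev2.mono fun q h => (e2 q.1 h q.2).symm)
  · exact g5.congr (hev2.mono fun q h => (e3 q.1 h q.2).symm)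

lemma sqrtinv_int (T : ℝ) : IntegrableOn (fun σ : ℝ => (√σ)⁻¹) (Ioc 0 T) := by
  rcases le_or_gt T 0 with h | h
  · simp [Ioc_eq_empty_of_le h]
  have := intervalIntegral.intervalIntegrable_rpow' (a := 0) (b := T) (r := -(1/2)) (by norm_num)
  rw [intervalIntegrable_iff_integrableOn_Ioc_of_le h.le] at this
  refine this.congr_fun (fun x hx => ?_) measurableSet_Ioc
  rw [Real.sqrt_eq_rpow, ← Real.rpow_neg hx.1.le]

lemma lay_cont {v : ℝ → ℝ} {R : ℝ} (hv : Dens v R) {D : ℝ} {K : ℝ × ℝ → ℝ → ℝ} {q0 : ℝ × ℝ}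
    (hm : ∀ q, Measurable (K q)) (hb : ∀ q, ∀ σ, |K q σ| ≤ D * (√σ)⁻¹)
    (hc : ∀ σ > 0, ContinuousAt (fun q => K q σ) q0) :
    ContinuousAt (fun q : ℝ × ℝ => ∫ σ, K q σ * v (q.1 - σ)) q0 := by
  have hR := hv.nonneg
  have hD : 0 ≤ D := by
    have := (abs_nonneg _).trans (hb q0 1); simpa using this
  refine continuousAt_of_dominated
    (bound := (Ioc 0 (q0.1 + 1)).indicator fun σ => D * R * (√σ)⁻¹) ?_ ?_ ?_ ?_
  · refine Eventually.of_forall fun q => Measurable.aestronglyMeasurable ?_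
    exact (hm q).mul (hv.meas.comp (by fun_prop))
  · have : ∀ᶠ q : ℝ × ℝ in 𝓝 q0, q.1 < q0.1 + 1 :=
      (continuous_fst.tendsto q0) (Iio_mem_nhds (by linarith))
    filter_upwards [this] with q hq
    filter_upwards with σ
    by_cases h : σ ∈ Ioc 0 (q0.1 + 1)
    · rw [indicator_of_mem h, norm_mul, Real.norm_eq_abs, Real.norm_eq_abs]
      calc _ ≤ (D * (√σ)⁻¹) * R := by
            gcongr
            · exact hb q σ
            · exact hv.bd _
        _ = _ := by ring
    · rw [indicator_of_notMem h]
      simp only [mem_Ioc, not_and_or, not_lt, not_le] at h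
      rcases h with h1 | h1
      · have := hb q σ
        rw [Real.sqrt_eq_zero_of_nonpos h1, inv_zero, mul_zero] at this
        rw [abs_nonpos_iff.1 this]; simp
      · rw [hv.np _ (by linarith)]; simp
  · rw [integrable_indicator_iff measurableSet_Ioc]
    exact (sqrtinv_int _).const_mul _
  · have : ({q0.1}ᶜ : Set ℝ) ∈ ae volume := compl_mem_ae_iff.2 (by simp)
    filter_upwards [this] with σ hσ
    rcases le_or_gt σ 0 with h | h
    · have : (fun q : ℝ × ℝ => K q σ * v (q.1 - σ)) = fun _ => 0 := by
        ext q
        have := hb q σ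
        rw [Real.sqrt_eq_zero_of_nonpos h, inv_zero, mul_zero] at this
        rw [abs_nonpos_iff.1 this]; simp
      rw [this]; exact continuousAt_const
    · refine (hc σ h).mul ?_
      have h2 : ContinuousAt v (q0.1 - σ) := hv.cont' (by
        intro h3; apply hσ; simp; linarith)
      exact ContinuousAt.comp (f := fun q : ℝ × ℝ => q.1 - σ) (x := q0) (g := v) h2 (by fun_prop)

lemma lay0_cont {γ v : ℝ → ℝ} {C R : ℝ} (hγ : Curve γ C) (hv : Dens v R) :
    Continuous (fun q : ℝ × ℝ => Lay k0 γ v q.1 q.2) := by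
  rw [continuous_iff_continuousAt]
  intro q0
  simp only [Lay_sigma]
  have hγc := hγ.cont
  refine lay_cont hv (D := 1) (K := fun q σ => k0 σ (q.2 - γ (q.1 - σ))) ?_ ?_ ?_
  · intro q
    exact k0_meas.comp (f := fun σ => (σ, q.2 - γ (q.1 - σ))) (by fun_prop)
  · intro q σ
    rw [abs_of_nonneg (k0_nonneg _ _), one_mul]; exact k0_le _ _
  · intro σ _
    have h1 : Continuous (k0 σ) := by
      rw [continuous_iff_continuousAt]; exact fun x => (k0_dx σ x).continuousAt
    exact (h1.comp (by fun_prop : Continuous fun q : ℝ × ℝ => q.2 - γ (q.1 - σ))).continuousAt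

/-- regular part of the derivative near the curve -/
def LA (γ v : ℝ → ℝ) (t r : ℝ) : ℝ :=
  ∫ σ, (-((γ t - γ (t - σ)) / (2 * σ)) * k0 σ (r + (γ t - γ (t - σ)))) * v (t - σ)

lemma LA_bd {γ : ℝ → ℝ} {C : ℝ} (hγ : Curve γ C) (t r σ : ℝ) :
    |-((γ t - γ (t - σ)) / (2 * σ)) * k0 σ (r + (γ t - γ (t - σ)))| ≤ C * (√σ)⁻¹ := by
  rcases le_or_gt σ 0 with h | h
  · rw [k0_np h, Real.sqrt_eq_zero_of_nonpos h]; simp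
  · have hC := hγ.nonneg
    rw [abs_mul, abs_neg, abs_of_nonneg (k0_nonneg _ _), abs_div, abs_of_pos (by positivity : 0 < 2 * σ)]
    have h1 := hγ t (t - σ)
    rw [sub_sub_cancel, abs_of_pos h] at h1
    have h2 : |γ t - γ (t - σ)| / (2 * σ) ≤ C := by
      rw [div_le_iff₀ (by positivity)]; nlinarith
    have := k0_nonneg σ (r + (γ t - γ (t - σ)))
    gcongr
    exact k0_le _ _

lemma LA_meas {γ : ℝ → ℝ} {C : ℝ} (hγ : Curve γ C) (t r : ℝ) :
    Measurable fun σ => -((γ t - γ (t - σ)) / (2 * σ)) * k0 σ (r + (γ t - γ (t - σ))) := by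
  have hγc := hγ.cont.measurable
  refine Measurable.mul (by fun_prop) ?_
  exact k0_meas.comp (f := fun σ => (σ, r + (γ t - γ (t - σ)))) (by fun_prop)

lemma LA_cont {γ v : ℝ → ℝ} {C R : ℝ} (hγ : Curve γ C) (hv : Dens v R) :
    Continuous (fun q : ℝ × ℝ => LA γ v q.1 q.2) := by
  rw [continuous_iff_continuousAt]
  intro q0
  have hγc := hγ.cont
  refine lay_cont hv (D := C) (K := fun q σ => -((γ q.1 - γ (q.1 - σ)) / (2 * σ)) *
    k0 σ (q.2 + (γ q.1 - γ (q.1 - σ)))) (fun q => LA_meas hγ _ _) (fun q σ => LA_bd hγ _ _ _) ?_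
  intro σ hσ
  have h1 : Continuous (k0 σ) := by
    rw [continuous_iff_continuousAt]; exact fun x => (k0_dx σ x).continuousAt
  exact (Continuous.mul (by fun_prop)
    (h1.comp (by fun_prop : Continuous fun q : ℝ × ℝ => q.2 + (γ q.1 - γ (q.1 - σ))))).continuousAt

lemma LA_int {γ v : ℝ → ℝ} {C R : ℝ} (hγ : Curve γ C) (hv : Dens v R) (t r : ℝ) :
    Integrable fun σ => (-((γ t - γ (t - σ)) / (2 * σ)) * k0 σ (r + (γ t - γ (t - σ)))) * v (t - σ) := by
  have hC := hγ.nonneg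
  have : Integrable ((Ioc 0 t).indicator fun σ => C * R * (√σ)⁻¹) := by
    rw [integrable_indicator_iff measurableSet_Ioc]
    exact (sqrtinv_int _).const_mul _
  refine this.mono' ((LA_meas hγ t r).mul (hv.meas.comp (by fun_prop))).aestronglyMeasurable ?_
  filter_upwards with σ
  have h0 := LA_bd hγ t r σ
  by_cases h : σ ∈ Ioc 0 t
  · rw [indicator_of_mem h, norm_mul, Real.norm_eq_abs, Real.norm_eq_abs]
    calc _ ≤ (C * (√σ)⁻¹) * R := by
          gcongr
          exact hv.bd _
      _ = _ := by ring
  · rw [indicator_of_notMem h]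
    simp only [mem_Ioc, not_and_or, not_lt, not_le] at h
    rcases h with h1 | h1
    · rw [k0_np h1]; simp
    · rw [hv.np _ (by linarith)]; simp


/-- substituted integrand -/
def JB (γ v : ℝ → ℝ) (t r y : ℝ) : ℝ :=
  exp (-(((r + (γ t - γ (t - r ^ 2 / y ^ 2))) * y / r) ^ 2 / 4)) * v (t - r ^ 2 / y ^ 2)

lemma gauss_int : IntegrableOn (fun y : ℝ => exp (-(y ^ 2 / 4))) (Ioi 0) := by
  have := (integrable_exp_neg_mul_sq (b := 1 / 4) (by norm_num)).integrableOn (s := Ioi (0:ℝ))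
  refine this.congr_fun (fun y _ => ?_) measurableSet_Ioi
  ring_nf

lemma gauss_val : ∫ y in Ioi (0:ℝ), exp (-(y ^ 2 / 4)) = √π := by
  have := integral_gaussian_Ioi (1 / 4)
  have e : √(π / (1 / 4)) / 2 = √π := by
    rw [show π / (1 / 4) = 2 ^ 2 * π by ring, Real.sqrt_mul (by norm_num), Real.sqrt_sq (by norm_num)]
    ring
  rw [e] at this
  rw [← this]
  refine setIntegral_congr_fun measurableSet_Ioi fun y _ => ?_
  ring_nf

lemma JB_sq {γ : ℝ → ℝ} {C : ℝ} (hγ : Curve γ C) {t r y : ℝ} (hr : r ≠ 0) (hy : 0 < y) :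
    |((r + (γ t - γ (t - r ^ 2 / y ^ 2))) * y / r) ^ 2 - y ^ 2| ≤
      2 * C * |r| + C ^ 2 * r ^ 2 / y ^ 2 := by
  set Δ := γ t - γ (t - r ^ 2 / y ^ 2) with hΔ
  have h1 : |Δ| ≤ C * (r ^ 2 / y ^ 2) := by
    have := hγ t (t - r ^ 2 / y ^ 2)
    rwa [sub_sub_cancel, abs_of_nonneg (by positivity : 0 ≤ r ^ 2 / y ^ 2)] at this
  have hC := hγ.nonneg
  have hrp : 0 < |r| := abs_pos.2 hr
  have e : ((r + Δ) * y / r) ^ 2 - y ^ 2 = 2 * Δ * y ^ 2 / r + Δ ^ 2 * y ^ 2 / r ^ 2 := by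
    field_simp; ring
  rw [e]
  have g1 : |2 * Δ * y ^ 2 / r| ≤ 2 * C * |r| := by
    rw [abs_div, abs_mul, abs_mul, abs_two, abs_of_nonneg (sq_nonneg y), div_le_iff₀ hrp]
    calc 2 * |Δ| * y ^ 2 ≤ 2 * (C * (r ^ 2 / y ^ 2)) * y ^ 2 := by gcongr
      _ = 2 * C * |r| * |r| := by rw [mul_assoc (2 * C), abs_mul_abs_self]; field_simp
  have g2 : |Δ ^ 2 * y ^ 2 / r ^ 2| ≤ C ^ 2 * r ^ 2 / y ^ 2 := by
    rw [abs_of_nonneg (by positivity), ← sq_abs Δ]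
    calc |Δ| ^ 2 * y ^ 2 / r ^ 2 ≤ (C * (r ^ 2 / y ^ 2)) ^ 2 * y ^ 2 / r ^ 2 := by gcongr
      _ = _ := by field_simp
  exact (abs_add_le _ _).trans (add_le_add g1 g2)

lemma JB_bd {γ v : ℝ → ℝ} {C R : ℝ} (hγ : Curve γ C) (hv : Dens v R) {t r y : ℝ} (hr : r ≠ 0)
    (hy : 0 < y) : |JB γ v t r y| ≤ exp (C * |r| / 2) * R * exp (-(y ^ 2 / 4)) := by
  unfold JB
  set Δ := γ t - γ (t - r ^ 2 / y ^ 2) with hΔ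
  have h1 : |Δ| ≤ C * (r ^ 2 / y ^ 2) := by
    have := hγ t (t - r ^ 2 / y ^ 2)
    rwa [sub_sub_cancel, abs_of_nonneg (by positivity : 0 ≤ r ^ 2 / y ^ 2)] at this
  have hrp : 0 < |r| := abs_pos.2 hr
  have e : ((r + Δ) * y / r) ^ 2 = y ^ 2 + 2 * Δ * y ^ 2 / r + Δ ^ 2 * y ^ 2 / r ^ 2 := by
    field_simp; ring
  have g1 : |2 * Δ * y ^ 2 / r| ≤ 2 * C * |r| := by
    rw [abs_div, abs_mul, abs_mul, abs_two, abs_of_nonneg (sq_nonneg y), div_le_iff₀ hrp]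
    calc 2 * |Δ| * y ^ 2 ≤ 2 * (C * (r ^ 2 / y ^ 2)) * y ^ 2 := by gcongr
      _ = 2 * C * |r| * |r| := by rw [mul_assoc (2 * C), abs_mul_abs_self]; field_simp
  have g2 : 0 ≤ Δ ^ 2 * y ^ 2 / r ^ 2 := by positivity
  have g3 := (abs_le.1 g1).1
  rw [abs_mul, abs_of_pos (exp_pos _)]
  have : exp (-(((r + Δ) * y / r) ^ 2 / 4)) ≤ exp (C * |r| / 2) * exp (-(y ^ 2 / 4)) := by
    rw [← exp_add, exp_le_exp]; linarith
  calc _ ≤ (exp (C * |r| / 2) * exp (-(y ^ 2 / 4))) * R := by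
        gcongr
        exact hv.bd _
    _ = _ := by ring

lemma JB_meas {γ v : ℝ → ℝ} {C R : ℝ} (hγ : Curve γ C) (hv : Dens v R) (t r : ℝ) :
    Measurable (JB γ v t r) := by
  have h1 := hγ.cont.measurable
  have h2 := hv.meas
  unfold JB
  fun_prop

/-- change of variables `σ = r²/y²` -/
lemma jb_subst {γ v : ℝ → ℝ} {C R : ℝ} (hγ : Curve γ C) (hv : Dens v R) (t : ℝ) {r : ℝ}
    (hr : r ≠ 0) :
    Integrable (fun σ => (-(r / (2 * σ)) * k0 σ (r + (γ t - γ (t - σ)))) * v (t - σ)) ∧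
    ∫ σ, (-(r / (2 * σ)) * k0 σ (r + (γ t - γ (t - σ)))) * v (t - σ) =
      -(r / |r|) * (2 * √π)⁻¹ * ∫ y in Ioi 0, JB γ v t r y := by
  set g : ℝ → ℝ := fun σ => (-(r / (2 * σ)) * k0 σ (r + (γ t - γ (t - σ)))) * v (t - σ) with hg
  have hrp : 0 < |r| := abs_pos.2 hr
  set f : ℝ → ℝ := fun y => r ^ 2 / y ^ 2 with hf
  have hder : ∀ y ∈ Ioi (0:ℝ), HasDerivWithinAt f (-(2 * r ^ 2 / y ^ 3)) (Ioi 0) y := by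
    intro y hy
    have hy' : (0:ℝ) < y := hy
    have := ((hasDerivAt_pow 2 y).inv (by positivity)).const_mul (r ^ 2)
    refine ((this.congr_of_eventuallyEq ?_).congr_deriv ?_).hasDerivWithinAt
    · filter_upwards with z; simp [hf, div_eq_mul_inv]
    · simp; field_simp
  have hinj : InjOn f (Ioi 0) := by
    intro y hy z hz h
    have hy' : (0:ℝ) < y := hy
    have hz' : (0:ℝ) < z := hz
    simp only [hf] at h
    have hr2 : 0 < r ^ 2 := by positivity
    rw [div_eq_div_iff (by positivity) (by positivity)] at h
    have h2 := mul_left_cancel₀ hr2.ne' h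
    exact ((pow_left_inj₀ hz'.le hy'.le (by norm_num)).1 h2).symm
  have himg : f '' Ioi 0 = Ioi 0 := by
    ext s
    constructor
    · rintro ⟨y, hy, rfl⟩
      have hy' : (0:ℝ) < y := hy
      show 0 < r ^ 2 / y ^ 2
      positivity
    · intro hs
      have hs' : (0:ℝ) < s := hs
      refine ⟨|r| / √s, div_pos hrp (Real.sqrt_pos.2 hs'), ?_⟩
      simp only [hf]
      rw [div_pow, Real.sq_sqrt hs'.le, sq_abs]
      field_simp
  have hpt : ∀ y ∈ Ioi (0:ℝ), |-(2 * r ^ 2 / y ^ 3)| • g (f y) =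
      -(r / |r|) * (2 * √π)⁻¹ * JB γ v t r y := by
    intro y hy
    have hy' : (0:ℝ) < y := hy
    have hpi : 0 < √π := Real.sqrt_pos.2 pi_pos
    rw [abs_neg, abs_of_pos (by positivity), smul_eq_mul]
    simp only [hg, hf, JB, k0]
    have hs : √(r ^ 2 / y ^ 2) = |r| / y := by
      rw [← div_pow, Real.sqrt_sq_eq_abs, abs_div, abs_of_pos hy']
    rw [hs]
    set Δ := γ t - γ (t - r ^ 2 / y ^ 2)
    have he : (r + Δ) ^ 2 / (4 * (r ^ 2 / y ^ 2)) = ((r + Δ) * y / r) ^ 2 / 4 := by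
      field_simp
    rw [he]
    have h2 : r ^ 2 = |r| ^ 2 := (sq_abs r).symm
    set E := exp (-(((r + Δ) * y / r) ^ 2 / 4))
    set V := v (t - r ^ 2 / y ^ 2)
    have : 2 * r ^ 2 / y ^ 3 * (-(r / (2 * (r ^ 2 / y ^ 2))) * (E / (2 * √π * (|r| / y))) * V)
      = -(r / |r|) * (2 * √π)⁻¹ * (E * V) := by
      field_simp
    exact this
  have hJi : IntegrableOn (JB γ v t r) (Ioi 0) := by
    refine Integrable.mono' (gauss_int.const_mul (exp (C * |r| / 2) * R))
      (JB_meas hγ hv t r).aestronglyMeasurable ?_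
    rw [ae_restrict_iff' measurableSet_Ioi]
    filter_upwards with y hy using JB_bd hγ hv hr hy
  have hsupp : ∀ σ ∉ Ioi (0:ℝ), g σ = 0 := by
    intro σ hσ
    simp only [mem_Ioi, not_lt] at hσ
    simp [hg, k0_np hσ]
  constructor
  · have h1 : IntegrableOn g (f '' Ioi 0) := by
      rw [integrableOn_image_iff_integrableOn_abs_deriv_smul measurableSet_Ioi hder hinj]
      refine (IntegrableOn.congr_fun (hJi.const_mul (-(r / |r|) * (2 * √π)⁻¹))
        (fun y hy => (hpt y hy).symm) measurableSet_Ioi)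
    rw [himg] at h1
    rw [← integrableOn_iff_integrable_of_support_subset (s := Ioi 0)]
    · exact h1
    · intro σ hσ; by_contra h; exact hσ (hsupp σ h)
  · rw [← setIntegral_eq_integral_of_forall_compl_eq_zero hsupp, ← himg,
      integral_image_eq_integral_abs_deriv_smul measurableSet_Ioi hder hinj,
      setIntegral_congr_fun measurableSet_Ioi hpt, himg, integral_const_mul]

lemma jb_lim {γ v : ℝ → ℝ} {C R : ℝ} (hγ : Curve γ C) (hv : Dens v R) {t0 : ℝ} (ht0 : 0 < t0) :
    Tendsto (fun q : ℝ × ℝ => ∫ y in Ioi 0, JB γ v q.1 q.2 y) (𝓝[{q | q.2 ≠ 0}] (t0, 0))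
      (𝓝 (√π * v t0)) := by
  have hR := hv.nonneg
  have hC := hγ.nonneg
  rw [← gauss_val, ← integral_mul_const]
  have h2 : Tendsto (fun q : ℝ × ℝ => q.2) (𝓝[{q | q.2 ≠ 0}] (t0, 0)) (𝓝 0) :=
    (continuous_snd.tendsto (t0, (0:ℝ))).mono_left nhdsWithin_le_nhds
  have h1 : Tendsto (fun q : ℝ × ℝ => q.1) (𝓝[{q | q.2 ≠ 0}] (t0, 0)) (𝓝 t0) :=
    (continuous_fst.tendsto (t0, (0:ℝ))).mono_left nhdsWithin_le_nhds
  have hne : ∀ᶠ q : ℝ × ℝ in 𝓝[{q | q.2 ≠ 0}] (t0, 0), q.2 ≠ 0 := self_mem_nhdsWithin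
  refine tendsto_integral_filter_of_dominated_convergence
    (fun y => exp (C / 2) * R * exp (-(y ^ 2 / 4))) ?_ ?_ (gauss_int.const_mul _) ?_
  · exact Eventually.of_forall fun q => (JB_meas hγ hv q.1 q.2).aestronglyMeasurable
  · have h3 : ∀ᶠ q : ℝ × ℝ in 𝓝[{q | q.2 ≠ 0}] (t0, 0), |q.2| < 1 := by
      have := h2.abs
      rw [abs_zero] at this
      exact this (Iio_mem_nhds one_pos)
    filter_upwards [hne, h3] with q hq hq1
    rw [ae_restrict_iff' measurableSet_Ioi]
    filter_upwards with y hy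
    refine (JB_bd hγ hv hq hy).trans ?_
    gcongr
    nlinarith [abs_nonneg q.2]
  · rw [ae_restrict_iff' measurableSet_Ioi]
    filter_upwards with y hy
    have hy' : (0:ℝ) < y := hy
    unfold JB
    refine Tendsto.mul ?_ ?_
    · refine (Real.continuous_exp.tendsto _).comp (Tendsto.neg (Tendsto.div_const ?_ 4))
      rw [tendsto_iff_norm_sub_tendsto_zero]
      have hz : Tendsto (fun q : ℝ × ℝ => 2 * C * |q.2| + C ^ 2 * q.2 ^ 2 / y ^ 2)
          (𝓝[{q | q.2 ≠ 0}] (t0, 0)) (𝓝 0) := by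
        have : Tendsto (fun r : ℝ => 2 * C * |r| + C ^ 2 * r ^ 2 / y ^ 2) (𝓝 0)
          (𝓝 (2 * C * |0| + C ^ 2 * 0 ^ 2 / y ^ 2)) := Continuous.tendsto (by fun_prop) 0
        simp at this
        exact this.comp h2
      refine squeeze_zero' (Eventually.of_forall fun _ => norm_nonneg _) ?_ hz
      filter_upwards [hne] with q hq
      exact JB_sq hγ hq hy'
    · refine (hv.cont t0 ht0).tendsto.comp ?_
      have : Tendsto (fun q : ℝ × ℝ => q.1 - q.2 ^ 2 / y ^ 2) (𝓝[{q | q.2 ≠ 0}] (t0, 0))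
          (𝓝 (t0 - 0 ^ 2 / y ^ 2)) := h1.sub ((h2.pow 2).div_const _)
      simpa using this

/-- jump relation, `e = 1` (right limit) or `e = -1` (left limit) -/
lemma jump {γ v : ℝ → ℝ} {C R : ℝ} (hγ : Curve γ C) (hv : Dens v R) {t0 : ℝ} (ht0 : 0 < t0)
    {e : ℝ} (he : |e| = 1) :
    Tendsto (fun q : ℝ × ℝ => Lay k1 γ v q.1 q.2) (𝓝[{q | 0 < e * (q.2 - γ q.1)}] (t0, γ t0))
      (𝓝 (LA γ v t0 0 - e * v t0 / 2)) := by
  have hγc := hγ.cont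
  set l := 𝓝[{q : ℝ × ℝ | 0 < e * (q.2 - γ q.1)}] (t0, γ t0) with hl
  have hmem : ∀ᶠ q : ℝ × ℝ in l, 0 < e * (q.2 - γ q.1) := self_mem_nhdsWithin
  have hmap0 : Tendsto (fun q : ℝ × ℝ => (q.1, q.2 - γ q.1)) l (𝓝 (t0, 0)) := by
    have : Tendsto (fun q : ℝ × ℝ => (q.1, q.2 - γ q.1)) (𝓝 (t0, γ t0)) (𝓝 (t0, γ t0 - γ t0)) :=
      Continuous.tendsto (by fun_prop) (t0, γ t0)
    rw [sub_self] at this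
    exact this.mono_left nhdsWithin_le_nhds
  have hmap : Tendsto (fun q : ℝ × ℝ => (q.1, q.2 - γ q.1)) l (𝓝[{q | q.2 ≠ 0}] (t0, 0)) := by
    refine tendsto_nhdsWithin_iff.2 ⟨hmap0, hmem.mono fun q hq => ?_⟩
    intro h; simp only at h; rw [h, mul_zero] at hq; exact lt_irrefl _ hq
  have hA : Tendsto (fun q : ℝ × ℝ => LA γ v q.1 (q.2 - γ q.1)) l (𝓝 (LA γ v t0 0)) :=
    ((LA_cont hγ hv).tendsto (t0, 0)).comp hmap0
  have hJ := (jb_lim hγ hv ht0).comp hmap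
  have hlim := hA.add (hJ.const_mul (-e * (2 * √π)⁻¹))
  have hval : LA γ v t0 0 + -e * (2 * √π)⁻¹ * (√π * v t0) = LA γ v t0 0 - e * v t0 / 2 := by
    have hpi : 0 < √π := Real.sqrt_pos.2 pi_pos
    field_simp; ring
  rw [hval] at hlim
  refine hlim.congr' ?_
  filter_upwards [hmem] with q hq
  have hr : q.2 - γ q.1 ≠ 0 := by
    intro h; rw [h, mul_zero] at hq; exact lt_irrefl _ hq
  have hsgn : (q.2 - γ q.1) / |q.2 - γ q.1| = e := by
    rcases (abs_eq (by norm_num : (0:ℝ) ≤ 1)).1 he with h | h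
    · rw [h] at hq ⊢
      rw [abs_of_pos (by linarith), div_self hr]
    · rw [h] at hq ⊢
      rw [abs_of_neg (by linarith), div_neg, div_self hr]
  obtain ⟨i1, i2⟩ := jb_subst hγ hv q.1 hr
  rw [hsgn] at i2
  have : Lay k1 γ v q.1 q.2 = LA γ v q.1 (q.2 - γ q.1) +
      ∫ σ, (-((q.2 - γ q.1) / (2 * σ)) * k0 σ (q.2 - γ q.1 + (γ q.1 - γ (q.1 - σ)))) * v (q.1 - σ) := by
    rw [Lay_sigma]
    unfold LA
    rw [← integral_add (LA_int hγ hv q.1 _) i1]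
    refine integral_congr_ae (Eventually.of_forall fun σ => ?_)
    simp only [k1]
    rw [show q.2 - γ q.1 + (γ q.1 - γ (q.1 - σ)) = q.2 - γ (q.1 - σ) by ring]
    ring
  rw [this, i2]; rfl


structure Ini (φ : ℝ → ℝ) (s₀ K : ℝ) : Prop where
  pos : 0 < s₀
  Kpos : 0 ≤ K
  lip : ∀ x y, |φ x - φ y| ≤ K * |x - y|
  even : ∀ x, φ (-x) = φ x
  zero : ∀ x, s₀ ≤ |x| → φ x = 0

def II (φ : ℝ → ℝ) (t x : ℝ) : ℝ := ∫ z, k0 1 z * φ (x - √t * z)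
def Ik (k : ℝ → ℝ → ℝ) (φ : ℝ → ℝ) (s₀ t x : ℝ) : ℝ :=
  Pk k (volume.restrict (Icc (-s₀) s₀)) (fun _ => 0) (fun y => y) φ t x

lemma Ini.cont {φ : ℝ → ℝ} {s₀ K : ℝ} (h : Ini φ s₀ K) : Continuous φ := by
  have : LipschitzWith K.toNNReal φ := by
    refine LipschitzWith.of_dist_le_mul fun x y => ?_
    rw [Real.coe_toNNReal _ h.Kpos, Real.dist_eq, Real.dist_eq]; exact h.lip x y
  exact this.continuous

lemma Ini.bd {φ : ℝ → ℝ} {s₀ K : ℝ} (h : Ini φ s₀ K) (x : ℝ) : |φ x| ≤ K * s₀ := by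
  have hK := h.Kpos
  have hs := h.pos
  by_cases hx : s₀ ≤ |x|
  · rw [h.zero x hx, abs_zero]; positivity
  · push Not at hx
    rw [abs_lt] at hx
    rcases le_total 0 x with h0 | h0
    · have := h.lip x s₀
      rw [h.zero s₀ (le_abs_self _), sub_zero, abs_sub_comm, abs_of_nonneg (by linarith : 0 ≤ s₀ - x)] at this
      exact this.trans (by gcongr; linarith)
    · have := h.lip x (-s₀)
      rw [h.zero (-s₀) (by rw [abs_neg]; exact le_abs_self _), sub_zero, abs_of_nonneg (by linarith : 0 ≤ x - -s₀)] at this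
      exact this.trans (by gcongr; linarith)

lemma k01_eq (z : ℝ) : k0 1 z = exp (-(z ^ 2 / 4)) * (2 * √π)⁻¹ := by
  simp [k0, div_eq_mul_inv]

lemma k01_int : Integrable (k0 1) := by
  have := (integrable_exp_neg_mul_sq (b := 1 / 4) (by norm_num)).mul_const (2 * √π)⁻¹
  refine this.congr (ae_of_all _ fun z => ?_)
  simp only [k01_eq]; ring_nf

lemma k01_val : ∫ z, k0 1 z = 1 := by
  have : ∫ z, k0 1 z = (∫ z, exp (-(1/4) * z ^ 2)) * (2 * √π)⁻¹ := by
    rw [← integral_mul_const]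
    refine integral_congr_ae (ae_of_all _ fun z => ?_)
    simp only [k01_eq]; ring_nf
  rw [this, integral_gaussian, show π / (1 / 4) = 2 ^ 2 * π by ring, Real.sqrt_mul (by norm_num), Real.sqrt_sq (by norm_num)]
  have := Real.sqrt_pos.2 Real.pi_pos
  field_simp

lemma k11_int : Integrable (k1 1) := by
  have := ((integrable_mul_exp_neg_mul_sq (b := 1 / 4) (by norm_num))).mul_const (-(1/2) * (2 * √π)⁻¹)
  refine this.congr (ae_of_all _ fun z => ?_)
  simp only [k1, k01_eq]; ring_nf

lemma k0_scale {t : ℝ} (ht : 0 < t) (z : ℝ) : k0 t (√t * z) * √t = k0 1 z := by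
  have h := Real.sqrt_pos.2 ht
  have hp := Real.sqrt_pos.2 Real.pi_pos
  unfold k0
  rw [Real.sqrt_one, mul_pow, Real.sq_sqrt ht.le]
  rw [show t * z ^ 2 / (4 * t) = z ^ 2 / (4 * 1) by field_simp]
  field_simp

lemma k1_scale {t : ℝ} (ht : 0 < t) (z : ℝ) : k1 t (√t * z) * √t = (√t)⁻¹ * k1 1 z := by
  have h := Real.sqrt_pos.2 ht
  unfold k1
  rw [mul_assoc, k0_scale ht, show √t * z / (2 * t) = (√t)⁻¹ * (z / (2 * 1)) by
    field_simp; rw [Real.sq_sqrt ht.le]; ring]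
  ring

lemma conv_scale {k k' : ℝ → ℝ} {φ : ℝ → ℝ} {t a : ℝ} (ht : 0 < t)
    (hk : ∀ z, k (√t * z) * √t = a * k' z) (x : ℝ) :
    ∫ y, k (x - y) * φ y = a * ∫ z, k' z * φ (x - √t * z) := by
  have h := Real.sqrt_pos.2 ht
  rw [← integral_sub_left_eq_self (fun y => k (x - y) * φ y) volume x]
  have := Measure.integral_comp_mul_left (fun y => k y * φ (x - y)) (√t)
  rw [abs_of_pos (inv_pos.2 h), smul_eq_mul] at this
  have h2 : ∫ y, k y * φ (x - y) = √t * ∫ z, k (√t * z) * φ (x - √t * z) := by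
    rw [this]; field_simp
  simp only [sub_sub_cancel]
  rw [h2, ← integral_const_mul, ← integral_const_mul]
  refine integral_congr_ae (ae_of_all _ fun z => ?_)
  simp only
  rw [← mul_assoc, ← mul_assoc, ← hk z]; ring

lemma Ik_full {φ : ℝ → ℝ} {s₀ K : ℝ} (h : Ini φ s₀ K) (k : ℝ → ℝ → ℝ) (t x : ℝ) :
    Ik k φ s₀ t x = ∫ y, k t (x - y) * φ y := by
  unfold Ik Pk
  simp only [sub_zero]
  refine setIntegral_eq_integral_of_forall_compl_eq_zero fun y hy => ?_
  rw [h.zero y, mul_zero]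
  simp only [mem_Icc, not_and_or, not_le] at hy
  rcases hy with h1 | h1
  · rw [abs_of_neg (by linarith [h.pos])]; linarith
  · exact h1.le.trans (le_abs_self _)

lemma II_eq {φ : ℝ → ℝ} {s₀ K : ℝ} (h : Ini φ s₀ K) {t : ℝ} (ht : 0 < t) (x : ℝ) :
    II φ t x = Ik k0 φ s₀ t x := by
  rw [Ik_full h, conv_scale (k' := k0 1) (a := 1) ht (by simpa using k0_scale ht), one_mul, II]

lemma Ix_eq {φ : ℝ → ℝ} {s₀ K : ℝ} (h : Ini φ s₀ K) {t : ℝ} (ht : 0 < t) (x : ℝ) :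
    Ik k1 φ s₀ t x = (√t)⁻¹ * ∫ z, k1 1 z * φ (x - √t * z) := by
  rw [Ik_full h, conv_scale (k' := k1 1) ht (k1_scale ht)]

lemma conv_int {φ : ℝ → ℝ} {s₀ K : ℝ} (h : Ini φ s₀ K) {k : ℝ → ℝ} (hk : Integrable k) (t x : ℝ) :
    Integrable fun z => k z * φ (x - √t * z) := by
  refine hk.mul_bdd (c := K * s₀) ?_ (ae_of_all _ fun z => h.bd _)
  exact (h.cont.comp (by fun_prop)).aestronglyMeasurable

lemma conv_lip {φ : ℝ → ℝ} {s₀ K : ℝ} (h : Ini φ s₀ K) {k : ℝ → ℝ} (hk : Integrable k) (t x y : ℝ) :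
    |(∫ z, k z * φ (x - √t * z)) - ∫ z, k z * φ (y - √t * z)| ≤ (∫ z, |k z|) * (K * |x - y|) := by
  rw [← integral_sub (conv_int h hk t x) (conv_int h hk t y), ← integral_mul_const]
  rw [← Real.norm_eq_abs]
  refine norm_integral_le_of_norm_le (hk.abs.mul_const _) (ae_of_all _ fun z => ?_)
  rw [← mul_sub, norm_mul, Real.norm_eq_abs, Real.norm_eq_abs]
  gcongr
  have := h.lip (x - √t * z) (y - √t * z)
  rwa [sub_sub_sub_cancel_right] at this

lemma II_lip {φ : ℝ → ℝ} {s₀ K : ℝ} (h : Ini φ s₀ K) (t x y : ℝ) :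
    |II φ t x - II φ t y| ≤ K * |x - y| := by
  have := conv_lip h k01_int t x y
  have e : ∫ z, |k0 1 z| = 1 := by
    refine Eq.trans ?_ k01_val
    exact integral_congr_ae (ae_of_all _ fun z => abs_of_nonneg (k0_nonneg _ _))
  rw [e, one_mul] at this
  exact this

lemma II_cont {φ : ℝ → ℝ} {s₀ K : ℝ} (h : Ini φ s₀ K) :
    Continuous fun q : ℝ × ℝ => II φ q.1 q.2 := by
  have hc := h.cont
  have hm : Measurable (k0 1) := k0_meas.comp (f := fun z : ℝ => ((1:ℝ), z)) (by fun_prop)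
  refine continuous_of_dominated (bound := fun z => K * s₀ * k0 1 z) ?_ ?_ (k01_int.const_mul _) ?_
  · intro q; exact (hm.mul (hc.measurable.comp (by fun_prop))).aestronglyMeasurable
  · intro q
    refine ae_of_all _ fun z => ?_
    rw [norm_mul, Real.norm_eq_abs, Real.norm_eq_abs, abs_of_nonneg (k0_nonneg _ _), mul_comm]
    have := k0_nonneg 1 z
    have := h.bd (q.2 - √q.1 * z)
    gcongr
  · refine ae_of_all _ fun z => ?_
    fun_prop

lemma II_zero {φ : ℝ → ℝ} (x : ℝ) : II φ 0 x = φ x := by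
  simp [II, integral_mul_const, k01_val]

lemma II_bd {φ : ℝ → ℝ} {s₀ K : ℝ} (h : Ini φ s₀ K) (t x : ℝ) : |II φ t x| ≤ K * s₀ := by
  have : |II φ t x| ≤ ∫ z, K * s₀ * k0 1 z := by
    rw [← Real.norm_eq_abs]
    refine norm_integral_le_of_norm_le (k01_int.const_mul _) (ae_of_all _ fun z => ?_)
    rw [norm_mul, Real.norm_eq_abs, Real.norm_eq_abs, abs_of_nonneg (k0_nonneg _ _), mul_comm]
    have := k0_nonneg 1 z
    have := h.bd (x - √t * z)
    gcongr
  rwa [integral_const_mul, k01_val, mul_one] at this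

lemma II_even {φ : ℝ → ℝ} {s₀ K : ℝ} (h : Ini φ s₀ K) (t x : ℝ) : II φ t (-x) = II φ t x := by
  unfold II
  rw [← integral_neg_eq_self]
  refine integral_congr_ae (ae_of_all _ fun z => ?_)
  simp only
  rw [k0_neg, ← h.even (x - √t * z)]
  ring_nf

lemma Ik_off {φ : ℝ → ℝ} {s₀ K : ℝ} (h : Ini φ s₀ K) {t0 : ℝ} (ht0 : 0 < t0) (x0 : ℝ) :
    HasDerivAt (fun x => II φ t0 x) (Ik k1 φ s₀ t0 x0) x0 ∧
    HasDerivAt (fun x => Ik k1 φ s₀ t0 x) (Ik k2 φ s₀ t0 x0) x0 ∧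
    HasDerivAt (fun t => II φ t x0) (Ik k2 φ s₀ t0 x0) t0 ∧
    ContinuousAt (fun q : ℝ × ℝ => Ik k1 φ s₀ q.1 q.2) (t0, x0) ∧
    ContinuousAt (fun q : ℝ × ℝ => Ik k2 φ s₀ q.1 q.2) (t0, x0) := by
  obtain ⟨h1, h2, h3, h4, h5⟩ := pot (μ := volume.restrict (Icc (-s₀) s₀)) (a := fun _ => 0)
    (c := fun y => y) (v := φ) measurable_const measurable_id h.cont.measurable h.bd
    (t0 := t0) (x0 := x0) (ε := t0 / 2) (η := t0 / 2) (T := 2 * t0) (by linarith) (by linarith)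
    (by linarith) (ae_of_all _ fun ω t ht x hx => by
      rw [Metric.mem_ball, Real.dist_eq, abs_lt] at ht
      constructor
      · linarith
      · left; linarith) (ae_of_all _ fun _ => ht0.ne)
  refine ⟨?_, h2, ?_, h4, h5⟩
  · have : (fun x => II φ t0 x) = fun x => Ik k0 φ s₀ t0 x := funext fun x => II_eq h ht0 x
    rw [this]; exact h1
  · refine h3.congr_of_eventuallyEq ?_
    filter_upwards [Ioi_mem_nhds ht0] with t ht using II_eq h ht x0

lemma Ix_bd {φ : ℝ → ℝ} {s₀ K : ℝ} (h : Ini φ s₀ K) {t : ℝ} (ht : 0 < t) (x : ℝ) :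
    |Ik k1 φ s₀ t x| ≤ K := by
  refine (Ik_off h ht x).1.le_of_lip' (C := K) h.Kpos ?_
  exact Eventually.of_forall fun y => by simpa using II_lip h t y x

lemma Ix_lip {φ : ℝ → ℝ} {s₀ K : ℝ} (h : Ini φ s₀ K) {t : ℝ} (ht : 0 < t) (x y : ℝ) :
    |Ik k1 φ s₀ t x - Ik k1 φ s₀ t y| ≤ ((∫ z, |k1 1 z|) * K) * ((√t)⁻¹ * |x - y|) := by
  rw [Ix_eq h ht, Ix_eq h ht, ← mul_sub, abs_mul, abs_of_nonneg (by positivity : 0 ≤ (√t)⁻¹)]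
  have := conv_lip h k11_int t x y
  calc _ ≤ (√t)⁻¹ * ((∫ z, |k1 1 z|) * (K * |x - y|)) := by gcongr
    _ = _ := by ring

lemma Ix_zero {φ : ℝ → ℝ} {s₀ K : ℝ} (h : Ini φ s₀ K) {t : ℝ} (ht : 0 < t) :
    Ik k1 φ s₀ t 0 = 0 := by
  have h1 := (Ik_off h ht 0).1
  have h2 : HasDerivAt (fun x => II φ t (-x)) (-(Ik k1 φ s₀ t 0)) 0 := by
    have := HasDerivAt.comp (0:ℝ) (h₂ := fun x => II φ t x) (h := fun x : ℝ => -x) (by simpa using h1)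
      (hasDerivAt_neg (0:ℝ))
    simpa [Function.comp_def] using this
  simp only [II_even h] at h2
  linarith [h1.unique h2]

lemma Pk_decay {μ : Measure ℝ} [IsFiniteMeasure μ] {a c v : ℝ → ℝ} {R t x T d : ℝ}
    (hR : ∀ ω, |v ω| ≤ R) (hd : 0 < d) (hc : ∀ᵐ ω ∂μ, t - a ω ≤ T ∧ d ≤ |x - c ω|) :
    |Pk k0 μ a c v t x| ≤ 2 * √T / d ^ 2 * R * μ.real univ := by
  have hR0 : 0 ≤ R := (abs_nonneg _).trans (hR 0)
  rw [← Real.norm_eq_abs]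
  refine norm_integral_le_of_norm_le_const ?_
  filter_upwards [hc] with ω ⟨h1, h2⟩
  rw [norm_mul, Real.norm_eq_abs, Real.norm_eq_abs]
  have hv := hR ω
  gcongr
  rw [abs_of_nonneg (k0_nonneg _ _)]
  rcases le_or_gt (t - a ω) 0 with h0 | h0
  · rw [k0_np h0]; positivity
  · rw [le_div_iff₀ (by positivity)]
    have h3 := k0_sq h0 (x := x - c ω)
    rw [mul_assoc, tsq h0] at h3
    have h4 := k0_nonneg (t - a ω) (x - c ω)
    have h5 : √(t - a ω) ≤ √T := Real.sqrt_le_sqrt h1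
    calc k0 (t - a ω) (x - c ω) * d ^ 2 ≤ k0 (t - a ω) (x - c ω) * |x - c ω| ^ 2 := by gcongr
      _ = (x - c ω) ^ 2 * k0 (t - a ω) (x - c ω) := by rw [sq_abs]; ring
      _ ≤ _ := by linarith


open BoundedContinuousFunction in
lemma fixpt {E : Type*} [NormedAddCommGroup E] [NormedSpace ℝ E] [CompleteSpace E]
    (F : (ℝ → E) → ℝ → E) (lam M : ℝ)
    (hc : ∀ v, ContinuousOn v (Ioi 0) → ContinuousOn (F v) (Ioi 0))
    (hb : ∀ v, ContinuousOn v (Ioi 0) → ∀ t > 0, ‖F v t‖ ≤ M * exp (lam * t))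
    (hl : ∀ v w, ContinuousOn v (Ioi 0) → ContinuousOn w (Ioi 0) → ∀ ρ, 0 ≤ ρ →
      (∀ t > 0, ‖v t - w t‖ ≤ ρ * exp (lam * t)) →
      ∀ t > 0, ‖F v t - F w t‖ ≤ 1 / 2 * ρ * exp (lam * t)) :
    ∃ v, ContinuousOn v (Ioi 0) ∧ ∀ t > 0, v t = F v t := by
  let ex : (Ioi (0:ℝ) →ᵇ E) → ℝ → E := fun w t =>
    if h : 0 < t then exp (lam * t) • w ⟨t, h⟩ else 0
  have hex : ∀ w, ContinuousOn (ex w) (Ioi 0) := by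
    intro w
    rw [continuousOn_iff_continuous_domRestrict]
    have : (Ioi (0:ℝ)).domRestrict (ex w) = fun t : Ioi (0:ℝ) => exp (lam * t) • w t := by
      funext t
      have := t.2
      simp only [mem_Ioi] at this
      simp only [Set.domRestrict_apply, ex, this, dif_pos]
    rw [this]; fun_prop
  let Φ : (Ioi (0:ℝ) →ᵇ E) → (Ioi (0:ℝ) →ᵇ E) := fun w =>
    BoundedContinuousFunction.ofNormedAddCommGroup
      (fun t : Ioi (0:ℝ) => exp (-(lam * t)) • F (ex w) t)
      (by
        have := (hc _ (hex w)).domRestrict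
        have h2 : Continuous fun t : Ioi (0:ℝ) => F (ex w) t := this
        exact Continuous.smul (by fun_prop) h2) M (by
        intro t
        rw [norm_smul, Real.norm_eq_abs, abs_of_pos (exp_pos _)]
        calc _ ≤ exp (-(lam * t)) * (M * exp (lam * t)) := by
              gcongr; exact hb _ (hex w) t t.2
          _ = M := by rw [mul_comm M, ← mul_assoc, ← exp_add]; simp)
  have hΦ : ContractingWith (1/2) Φ := by
    refine ⟨by rw [← NNReal.coe_lt_coe]; push_cast; norm_num, LipschitzWith.of_dist_le_mul fun v w => ?_⟩
    rw [BoundedContinuousFunction.dist_le (by positivity)]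
    intro t
    have h0 : (0:ℝ) < t := t.2
    have h1 : ∀ τ > 0, ‖ex v τ - ex w τ‖ ≤ dist v w * exp (lam * τ) := by
      intro τ hτ
      simp only [ex, gt_iff_lt.1 hτ, dif_pos]
      rw [← smul_sub, norm_smul, Real.norm_eq_abs, abs_of_pos (exp_pos _), mul_comm, ← dist_eq_norm]
      gcongr
      exact BoundedContinuousFunction.dist_coe_le_dist _
    have h2 := hl _ _ (hex v) (hex w) _ dist_nonneg h1 t h0
    simp only [Φ, BoundedContinuousFunction.coe_ofNormedAddCommGroup]
    rw [dist_eq_norm, ← smul_sub, norm_smul, Real.norm_eq_abs, abs_of_pos (exp_pos _)]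
    calc _ ≤ exp (-(lam * t)) * (1 / 2 * dist v w * exp (lam * t)) := by gcongr
      _ = (exp (-(lam * t)) * exp (lam * t)) * (1 / 2 * dist v w) := by ring
      _ = _ := by rw [← exp_add]; simp
  obtain ⟨w0, hfix⟩ : ∃ w0, Φ w0 = w0 := ⟨_, hΦ.fixedPoint_isFixedPt⟩
  refine ⟨ex w0, hex _, fun t ht => ?_⟩
  have h3 := congrArg (fun w : (Ioi (0:ℝ) →ᵇ E) => w (⟨t, ht⟩ : Ioi (0:ℝ))) hfix
  simp only [Φ, BoundedContinuousFunction.coe_ofNormedAddCommGroup] at h3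
  have h4 : ex w0 t = exp (lam * t) • w0 ⟨t, ht⟩ := by
    simp [ex, gt_iff_lt.1 ht]
  rw [h4, ← h3, smul_smul, ← exp_add]; simp

/-! weights -/
def mw (lam σ : ℝ) : ℝ := σ⁻¹ * (√σ)⁻¹ * min σ lam⁻¹

lemma mw1_int : IntegrableOn (mw 1) (Ioi 0) := by
  rw [← Ioc_union_Ioi_eq_Ioi (zero_le_one)]
  refine IntegrableOn.union ?_ ?_
  · refine (sqrtinv_int 1).congr_fun (fun σ hσ => ?_) measurableSet_Ioc
    have := hσ.1
    simp only [mw, inv_one, min_eq_left hσ.2]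
    field_simp
  · have := integrableOn_Ioi_rpow_of_lt (a := -(3/2)) (by norm_num) one_pos
    refine this.congr_fun (fun σ hσ => ?_) measurableSet_Ioi
    have hσ' : (1:ℝ) < σ := hσ
    simp only [mw, inv_one, min_eq_right hσ'.le, mul_one]
    rw [Real.sqrt_eq_rpow, ← Real.rpow_neg (by linarith), ← Real.rpow_neg_one, ← Real.rpow_add (by linarith)]
    norm_num

lemma mw_scale {lam : ℝ} (hl : 0 < lam) {σ : ℝ} (h : 0 < σ) : mw lam σ = √lam * mw 1 (lam * σ) := by
  unfold mw
  rw [inv_one, Real.sqrt_mul hl.le, show min σ lam⁻¹ = lam⁻¹ * min (lam * σ) 1 by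
    rw [mul_min_of_nonneg _ _ (by positivity)]; congr 1 <;> field_simp]
  have := Real.sqrt_pos.2 hl
  have := Real.sqrt_pos.2 h
  have e := Real.sq_sqrt hl.le
  field_simp

def Mw : ℝ := ∫ σ in Ioi 0, mw 1 σ

lemma mw_int {lam : ℝ} (hl : 0 < lam) : IntegrableOn (mw lam) (Ioi 0) := by
  have h1 : IntegrableOn (fun σ => mw 1 (lam * σ)) (Ioi 0) := by
    rw [integrableOn_Ioi_comp_mul_left_iff _ _ hl]; simpa using mw1_int
  exact IntegrableOn.congr_fun (h1.const_mul (√lam)) (fun σ hσ => (mw_scale hl hσ).symm) measurableSet_Ioi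

lemma mw_val {lam : ℝ} (hl : 0 < lam) : ∫ σ in Ioi 0, mw lam σ = Mw / √lam := by
  rw [setIntegral_congr_fun measurableSet_Ioi (fun σ hσ => mw_scale hl hσ), integral_const_mul,
    integral_comp_mul_left_Ioi _ _ hl]
  simp only [mul_zero, smul_eq_mul, Mw]
  have := Real.sqrt_pos.2 hl
  have e := Real.sq_sqrt hl.le
  field_simp
  rw [e]

lemma mw_nonneg {lam σ : ℝ} (hl : 0 < lam) (h : 0 < σ) : 0 ≤ mw lam σ := by
  unfold mw; positivity

lemma Mw_nonneg : 0 ≤ Mw := setIntegral_nonneg measurableSet_Ioi fun _ h => mw_nonneg one_pos h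

lemma mw_ge {lam σ : ℝ} (hl : 0 < lam) (h : 0 < σ) : (√σ)⁻¹ * exp (-(lam * σ)) ≤ mw lam σ := by
  have h1 : σ * exp (-(lam * σ)) ≤ min σ lam⁻¹ := by
    refine le_min ?_ ?_
    · have : exp (-(lam * σ)) ≤ 1 := Real.exp_le_one_iff.2 (by have := mul_pos hl h; linarith)
      nlinarith
    · have h2 : lam * σ ≤ exp (lam * σ) := by linarith [Real.add_one_le_exp (lam * σ)]
      rw [exp_neg, ← div_eq_mul_inv, div_le_iff₀ (exp_pos _)]
      field_simp; rw [mul_comm]; exact h2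
  unfold mw
  have := Real.sqrt_pos.2 h
  calc (√σ)⁻¹ * exp (-(lam * σ)) = σ⁻¹ * (√σ)⁻¹ * (σ * exp (-(lam * σ))) := by field_simp
    _ ≤ _ := by gcongr

/-- difference of two layer type integrals -/
lemma int_diff {κ₁ κ₂ B₁ B₂ : ℝ → ℝ} {R₁ R₂ a b L ρ lam t : ℝ} (hB₁ : Dens B₁ R₁) (hB₂ : Dens B₂ R₂)
    (hm₁ : Measurable κ₁) (hm₂ : Measurable κ₂) (hl : 0 < lam) (hρ : 0 ≤ ρ) (ha : 0 ≤ a) (hL : 0 ≤ L)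
    (hb₁ : ∀ σ, |κ₁ σ| ≤ b * (√σ)⁻¹) (hb₂ : ∀ σ, |κ₂ σ| ≤ b * (√σ)⁻¹)
    (hd : ∀ σ, 0 < σ → σ < t → |κ₁ σ - κ₂ σ| ≤ a * ρ * exp (lam * t) * mw lam σ)
    (hB : ∀ τ > 0, |B₁ τ - B₂ τ| ≤ L * ρ * exp (lam * τ)) :
    |(∫ σ, κ₁ σ * B₁ (t - σ)) - ∫ σ, κ₂ σ * B₂ (t - σ)| ≤
      (a * R₁ + b * L) * (Mw / √lam) * ρ * exp (lam * t) := by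
  have hR₁ := hB₁.nonneg
  have hb : 0 ≤ b := by have := (abs_nonneg _).trans (hb₁ 1); simpa using this
  have hint : ∀ κ B : ℝ → ℝ, ∀ R, Dens B R → Measurable κ → (∀ σ, |κ σ| ≤ b * (√σ)⁻¹) →
      Integrable fun σ => κ σ * B (t - σ) := by
    intro κ B R hB hm hb'
    have : Integrable ((Ioc 0 t).indicator fun σ => b * R * (√σ)⁻¹) := by
      rw [integrable_indicator_iff measurableSet_Ioc]
      exact (sqrtinv_int _).const_mul _
    refine this.mono' (hm.mul (hB.meas.comp (by fun_prop))).aestronglyMeasurable ?_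
    refine ae_of_all _ fun σ => ?_
    by_cases h : σ ∈ Ioc 0 t
    · rw [indicator_of_mem h, norm_mul, Real.norm_eq_abs, Real.norm_eq_abs]
      calc _ ≤ (b * (√σ)⁻¹) * R := by
            gcongr
            · exact hb' σ
            · exact hB.bd _
        _ = _ := by ring
    · rw [indicator_of_notMem h]
      simp only [mem_Ioc, not_and_or, not_lt, not_le] at h
      rcases h with h1 | h1
      · have := hb' σ
        rw [Real.sqrt_eq_zero_of_nonpos h1, inv_zero, mul_zero] at this
        rw [abs_nonpos_iff.1 this]; simp
      · rw [hB.np _ (by linarith)]; simp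
  rw [← integral_sub (hint _ _ _ hB₁ hm₁ hb₁) (hint _ _ _ hB₂ hm₂ hb₂), ← Real.norm_eq_abs]
  have hmi : Integrable ((Ioi 0).indicator fun σ => (a * R₁ + b * L) * ρ * exp (lam * t) * mw lam σ) := by
    rw [integrable_indicator_iff measurableSet_Ioi]
    exact (mw_int hl).const_mul _
  refine (norm_integral_le_of_norm_le hmi (ae_of_all _ fun σ => ?_)).trans (le_of_eq ?_)
  · by_cases h : 0 < σ
    · rw [indicator_of_mem (show σ ∈ Ioi 0 from h), Real.norm_eq_abs]
      have hm := mw_nonneg hl h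
      by_cases h' : σ < t
      · have e : κ₁ σ * B₁ (t - σ) - κ₂ σ * B₂ (t - σ) = (κ₁ σ - κ₂ σ) * B₁ (t - σ) +
          κ₂ σ * (B₁ (t - σ) - B₂ (t - σ)) := by ring
        rw [e]
        have e2 : exp (lam * (t - σ)) = exp (lam * t) * exp (-(lam * σ)) := by
          rw [← exp_add]; ring_nf
        have h3 := hB (t - σ) (by linarith)
        rw [e2] at h3
        calc _ ≤ |κ₁ σ - κ₂ σ| * |B₁ (t - σ)| + |κ₂ σ| * |B₁ (t - σ) - B₂ (t - σ)| := by
              rw [← abs_mul, ← abs_mul]; exact abs_add_le _ _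
          _ ≤ (a * ρ * exp (lam * t) * mw lam σ) * R₁ + (b * (√σ)⁻¹) * (L * ρ * (exp (lam * t) * exp (-(lam * σ)))) := by
              gcongr
              · exact hd σ h h'
              · exact hB₁.bd _
              · exact hb₂ σ
          _ = (a * ρ * exp (lam * t) * mw lam σ) * R₁ + (b * L * ρ * exp (lam * t)) * ((√σ)⁻¹ * exp (-(lam * σ))) := by ring
          _ ≤ (a * ρ * exp (lam * t) * mw lam σ) * R₁ + (b * L * ρ * exp (lam * t)) * mw lam σ := by
              gcongr; exact mw_ge hl h
          _ = _ := by ring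
      · rw [hB₁.np _ (by linarith), hB₂.np _ (by linarith)]
        simp only [mul_zero, sub_zero, abs_zero]
        positivity
    · rw [indicator_of_notMem (show σ ∉ Ioi 0 from h)]
      have h1 : σ ≤ 0 := not_lt.1 h
      have e1 := hb₁ σ
      have e2 := hb₂ σ
      rw [Real.sqrt_eq_zero_of_nonpos h1, inv_zero, mul_zero] at e1 e2
      rw [abs_nonpos_iff.1 e1, abs_nonpos_iff.1 e2]; simp
  · rw [integral_indicator measurableSet_Ioi, integral_const_mul, mw_val hl]; ring

lemma int_sqrtinv {t : ℝ} (ht : 0 ≤ t) : ∫ σ in Ioc 0 t, (√σ)⁻¹ = 2 * √t := by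
  have := integral_rpow (a := 0) (b := t) (r := -(1/2)) (Or.inl (by norm_num))
  rw [intervalIntegral.integral_of_le ht] at this
  have e : ∫ σ in Ioc 0 t, (√σ)⁻¹ = ∫ σ in Ioc 0 t, σ ^ (-(1/2) : ℝ) := by
    refine setIntegral_congr_fun measurableSet_Ioc fun σ hσ => ?_
    rw [Real.sqrt_eq_rpow, ← Real.rpow_neg hσ.1.le]
  rw [e, this, Real.sqrt_eq_rpow, Real.zero_rpow (by norm_num)]
  norm_num
  ring

lemma int_bd {κ B : ℝ → ℝ} {R b t : ℝ} (hB : Dens B R) (ht : 0 ≤ t)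
    (hb : ∀ σ, |κ σ| ≤ b * (√σ)⁻¹) : |∫ σ, κ σ * B (t - σ)| ≤ b * R * (2 * √t) := by
  have hR := hB.nonneg
  have hb0 : 0 ≤ b := by have := (abs_nonneg _).trans (hb 1); simpa using this
  have hi : Integrable ((Ioc 0 t).indicator fun σ => b * R * (√σ)⁻¹) := by
    rw [integrable_indicator_iff measurableSet_Ioc]
    exact (sqrtinv_int _).const_mul _
  rw [← Real.norm_eq_abs]
  refine (norm_integral_le_of_norm_le hi (ae_of_all _ fun σ => ?_)).trans (le_of_eq ?_)
  · by_cases h : σ ∈ Ioc 0 t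
    · rw [indicator_of_mem h, norm_mul, Real.norm_eq_abs, Real.norm_eq_abs]
      calc _ ≤ (b * (√σ)⁻¹) * R := by
            gcongr
            · exact hb σ
            · exact hB.bd _
        _ = _ := by ring
    · rw [indicator_of_notMem h]
      simp only [mem_Ioc, not_and_or, not_lt, not_le] at h
      rcases h with h1 | h1
      · have := hb σ
        rw [Real.sqrt_eq_zero_of_nonpos h1, inv_zero, mul_zero] at this
        rw [abs_nonpos_iff.1 this]; simp
      · rw [hB.np _ (by linarith)]; simp
  · rw [integral_indicator measurableSet_Ioc, integral_const_mul, int_sqrtinv ht]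

lemma sqrt_exp {lam t : ℝ} (hl : 1 ≤ lam) (ht : 0 ≤ t) : 2 * √t ≤ exp (lam * t) := by
  have h1 := Real.sq_sqrt ht
  have h2 := Real.add_one_le_exp (lam * t)
  nlinarith [sq_nonneg (√t - 1)]


def clip (C v : ℝ) : ℝ := min (max v 0) C
def dn (c : ℝ → ℝ) (v : ℝ → ℝ) (t : ℝ) : ℝ := if 0 < t then c (v t) else 0
def sf (s₀ : ℝ) (B : ℝ → ℝ) (t : ℝ) : ℝ := s₀ + ∫ τ in (0:ℝ)..t, B τ

lemma clip_nonneg {C : ℝ} (hC : 0 ≤ C) (v : ℝ) : 0 ≤ clip C v := le_min (le_max_right _ _) hC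
lemma clip_le (C v : ℝ) : clip C v ≤ C := min_le_right _ _
lemma clip_lip (C v w : ℝ) : |clip C v - clip C w| ≤ |v - w| := by
  unfold clip
  refine (abs_min_sub_min_le_max _ _ _ _).trans ?_
  rw [sub_self, abs_zero]
  refine max_le ((abs_max_sub_max_le_max _ _ _ _).trans ?_) (abs_nonneg _)
  rw [sub_self, abs_zero]; exact max_le le_rfl (abs_nonneg _)
lemma clip_cont (C : ℝ) : Continuous (clip C) := by unfold clip; fun_prop

lemma dn_dens {c v : ℝ → ℝ} {R : ℝ} (hc : Continuous c) (hR : ∀ x, |c x| ≤ R)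
    (hv : ContinuousOn v (Ioi 0)) : Dens (dn c v) R := by
  have hcv : ContinuousOn (fun t => c (v t)) (Ioi 0) := hc.comp_continuousOn hv
  refine ⟨?_, ?_, ?_, ?_⟩
  · have := hcv.measurable_piecewise (g := fun _ => 0) continuousOn_const measurableSet_Ioi
    convert this using 1
    funext t
    simp [dn, Set.piecewise]
  · intro t
    unfold dn
    split_ifs
    · exact hR _
    · rw [abs_zero]; exact (abs_nonneg _).trans (hR 0)
  · intro t ht; simp [dn, not_lt.2 ht]
  · intro t ht
    refine (hcv.continuousAt (Ioi_mem_nhds ht)).congr ?_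
    filter_upwards [Ioi_mem_nhds ht] with τ hτ
    simp only [mem_Ioi] at hτ
    simp [dn, hτ]

lemma Dens.ii {B : ℝ → ℝ} {R : ℝ} (hB : Dens B R) (a b : ℝ) : IntervalIntegrable B volume a b := by
  rw [intervalIntegrable_iff]
  exact Measure.integrableOn_of_bounded (M := R) (by simp) hB.meas.aestronglyMeasurable
    (ae_of_all _ fun t => by simpa using hB.bd t)

lemma sf_sub {B : ℝ → ℝ} {R s₀ : ℝ} (hB : Dens B R) (a b : ℝ) :
    sf s₀ B b - sf s₀ B a = ∫ τ in a..b, B τ := by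
  unfold sf
  rw [← intervalIntegral.integral_add_adjacent_intervals (hB.ii 0 a) (hB.ii a b)]; ring

lemma sf_curve {B : ℝ → ℝ} {R s₀ : ℝ} (hB : Dens B R) : Curve (sf s₀ B) R := by
  intro t τ
  rw [sf_sub hB, ← Real.norm_eq_abs]
  exact intervalIntegral.norm_integral_le_of_norm_le_const fun x _ => hB.bd x

lemma sf_mono {B : ℝ → ℝ} {R s₀ : ℝ} (hB : Dens B R) (h0 : ∀ t, 0 ≤ B t) : Monotone (sf s₀ B) := by
  intro a b hab
  rw [← sub_nonneg, sf_sub hB]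
  exact intervalIntegral.integral_nonneg hab fun x _ => h0 x

lemma sf_np {B : ℝ → ℝ} {R s₀ : ℝ} (hB : Dens B R) {t : ℝ} (ht : t ≤ 0) : sf s₀ B t = s₀ := by
  unfold sf
  rw [intervalIntegral.integral_symm, intervalIntegral.integral_of_le ht]
  rw [setIntegral_congr_fun measurableSet_Ioc (g := fun _ => (0:ℝ)) (fun x hx => hB.np x hx.2)]
  simp

lemma sf_ge {B : ℝ → ℝ} {R s₀ : ℝ} (hB : Dens B R) (h0 : ∀ t, 0 ≤ B t) (t : ℝ) : s₀ ≤ sf s₀ B t := by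
  rcases le_total t 0 with h | h
  · exact (sf_np hB h).ge
  · have := sf_mono (s₀ := s₀) hB h0 h
    rwa [sf_np hB le_rfl] at this

lemma sf_deriv {B : ℝ → ℝ} {R s₀ : ℝ} (hB : Dens B R) {t : ℝ} (ht : 0 < t) :
    HasDerivAt (sf s₀ B) (B t) t := by
  unfold sf
  exact (intervalIntegral.integral_hasDerivAt_right (hB.ii 0 t)
    (hB.meas.stronglyMeasurable.stronglyMeasurableAtFilter) (hB.cont t ht)).const_add _

lemma sf_diff {B₁ B₂ : ℝ → ℝ} {R₁ R₂ s₀ ρ lam : ℝ} (h₁ : Dens B₁ R₁) (h₂ : Dens B₂ R₂) (hl : 0 < lam)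
    (hρ : 0 ≤ ρ) (hB : ∀ τ > 0, |B₁ τ - B₂ τ| ≤ ρ * exp (lam * τ)) (t : ℝ) {σ : ℝ} (hσ : 0 ≤ σ) :
    |(sf s₀ B₁ t - sf s₀ B₁ (t - σ)) - (sf s₀ B₂ t - sf s₀ B₂ (t - σ))| ≤
      ρ * exp (lam * t) * min σ lam⁻¹ := by
  have hB' : ∀ τ, |B₁ τ - B₂ τ| ≤ ρ * exp (lam * τ) := by
    intro τ
    rcases le_or_gt τ 0 with h | h
    · rw [h₁.np _ h, h₂.np _ h]; simp; positivity
    · exact hB τ h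
  rw [sf_sub h₁, sf_sub h₂, ← intervalIntegral.integral_sub (h₁.ii _ _) (h₂.ii _ _), ← Real.norm_eq_abs,
    mul_min_of_nonneg _ _ (by positivity)]
  refine le_min ?_ ?_
  · refine (intervalIntegral.norm_integral_le_of_norm_le_const (C := ρ * exp (lam * t)) fun x hx => ?_).trans ?_
    · rw [uIoc_of_le (by linarith)] at hx
      refine (hB' x).trans ?_
      gcongr
      exact hx.2
    · rw [sub_sub_cancel, abs_of_nonneg hσ]
  · have hi : ∀ a b, IntervalIntegrable (fun τ => ρ * exp (lam * τ)) volume a b := fun a b =>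
      (by fun_prop : Continuous fun τ => ρ * exp (lam * τ)).intervalIntegrable a b
    refine (intervalIntegral.norm_integral_le_of_norm_le (by linarith)
      (ae_of_all _ fun x _ => hB' x) (hi _ _)).trans ?_
    have hd : ∀ x ∈ uIcc (t - σ) t, HasDerivAt (fun τ => ρ * lam⁻¹ * exp (lam * τ)) (ρ * exp (lam * x)) x := by
      intro x _
      have := ((hasDerivAt_id x).const_mul lam).exp.const_mul (ρ * lam⁻¹)
      have e : ρ * lam⁻¹ * (exp (lam * id x) * (lam * 1)) = ρ * exp (lam * x) := by
        rw [id]; field_simp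
      rw [e] at this; exact this

    rw [intervalIntegral.integral_eq_sub_of_hasDerivAt hd (hi _ _)]
    have : 0 ≤ ρ * lam⁻¹ * exp (lam * (t - σ)) := by positivity
    linarith

lemma sf_diff0 {B₁ B₂ : ℝ → ℝ} {R₁ R₂ s₀ ρ lam : ℝ} (h₁ : Dens B₁ R₁) (h₂ : Dens B₂ R₂) (hl : 0 < lam)
    (hρ : 0 ≤ ρ) (hB : ∀ τ > 0, |B₁ τ - B₂ τ| ≤ ρ * exp (lam * τ)) {t : ℝ} (ht : 0 ≤ t) :
    |sf s₀ B₁ t - sf s₀ B₂ t| ≤ ρ * exp (lam * t) * min t lam⁻¹ := by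
  have := sf_diff (s₀ := s₀) h₁ h₂ hl hρ hB t ht
  rw [sub_self, sf_np h₁ le_rfl, sf_np h₂ le_rfl] at this
  rwa [sub_sub_sub_cancel_right] at this

lemma k1_farb {s₀ σ y : ℝ} (hs : 0 < s₀) (hy : s₀ ≤ |y|) : |k1 σ y| ≤ s₀⁻¹ * (√σ)⁻¹ := by
  have h := k1_far (t := σ) (x := y)
  rw [inv_mul_eq_div, le_div_iff₀ hs]
  nlinarith [abs_nonneg (k1 σ y)]

lemma k0_diff {s₀ σ y₁ y₂ : ℝ} (hs : 0 < s₀) (h₁ : s₀ ≤ y₁) (h₂ : s₀ ≤ y₂) :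
    |k0 σ y₁ - k0 σ y₂| ≤ s₀⁻¹ * (√σ)⁻¹ * |y₁ - y₂| :=
  (convex_Ici s₀).norm_image_sub_le_of_norm_hasDerivWithin_le
    (fun x _ => (k0_dx σ x).hasDerivWithinAt)
    (fun x hx => k1_farb hs ((show s₀ ≤ x from hx).trans (le_abs_self _))) h₂ h₁

lemma k1_diff {σ : ℝ} (h : 0 < σ) (y₁ y₂ : ℝ) :
    |k1 σ y₁ - k1 σ y₂| ≤ σ⁻¹ * (√σ)⁻¹ * |y₁ - y₂| :=
  (convex_univ).norm_image_sub_le_of_norm_hasDerivWithin_le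
    (fun x _ => (k1_dx σ x).hasDerivWithinAt) (fun x _ => k2_le h x) (mem_univ _) (mem_univ _)

lemma k1_diff_far {s₀ σ y₁ y₂ : ℝ} (h : 0 < σ) (hs : 0 < s₀) (h₁ : s₀ ≤ y₁) (h₂ : s₀ ≤ y₂) :
    |k1 σ y₁ - k1 σ y₂| ≤ (1 + 5 / s₀ ^ 2) * (σ⁻¹ * (√σ)⁻¹ * min 1 σ) * |y₁ - y₂| := by
  refine (convex_Ici s₀).norm_image_sub_le_of_norm_hasDerivWithin_le
    (fun x _ => (k1_dx σ x).hasDerivWithinAt) (fun x hx => ?_) h₂ h₁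
  have hq := Real.sqrt_pos.2 h
  have hx' : s₀ ≤ x := hx
  rw [Real.norm_eq_abs]
  rcases le_total 1 σ with h3 | h3
  · rw [min_eq_left h3, mul_one]
    have := k2_le h (x := x)
    have h4 : 0 ≤ 5 / s₀ ^ 2 * (σ⁻¹ * (√σ)⁻¹) := by positivity
    linarith
  · rw [min_eq_right h3]
    have h4 := k2_far h (x := x)
    have h5 : |k2 σ x| ≤ 5 / s₀ ^ 2 * (√σ)⁻¹ := by
      rw [div_mul_eq_mul_div, le_div_iff₀ (by positivity)]
      have : s₀ ^ 2 ≤ x ^ 2 := by gcongr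
      nlinarith [abs_nonneg (k2 σ x)]
    have e : σ⁻¹ * (√σ)⁻¹ * σ = (√σ)⁻¹ := by field_simp
    rw [e]
    have : 0 < (√σ)⁻¹ := by positivity
    linarith

lemma far_mw {lam σ : ℝ} (hl : 1 ≤ lam) (h : 0 < σ) : σ⁻¹ * (√σ)⁻¹ * min 1 σ * lam⁻¹ ≤ mw lam σ := by
  unfold mw
  rw [mul_assoc (σ⁻¹ * (√σ)⁻¹)]
  have hq := Real.sqrt_pos.2 h
  have hl' : 0 < lam⁻¹ := by positivity
  have hl2 : lam⁻¹ ≤ 1 := inv_le_one_of_one_le₀ hl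
  gcongr
  refine le_min ?_ ?_
  · calc min 1 σ * lam⁻¹ ≤ σ * 1 := by gcongr; exact min_le_right _ _
      _ = σ := mul_one _
  · calc min 1 σ * lam⁻¹ ≤ 1 * lam⁻¹ := by gcongr; exact min_le_left _ _
      _ = _ := one_mul _

lemma km {k : ℝ → ℝ → ℝ} (hk : Measurable (fun q : ℝ × ℝ => k q.1 q.2)) {y : ℝ → ℝ} (hy : Measurable y) :
    Measurable fun σ => k σ (y σ) := hk.comp (f := fun σ => (σ, y σ)) (by fun_prop)

section diffs
variable {s₀ C P ρ lam t : ℝ} {B₁ B₂ h₁ h₂ : ℝ → ℝ}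

lemma T1 (hB₁ : Dens B₁ C) (hB₂ : Dens B₂ C) (hl : 1 ≤ lam) (hρ : 0 ≤ ρ)
    (hB : ∀ τ > 0, |B₁ τ - B₂ τ| ≤ ρ * exp (lam * τ)) :
    |LA (sf s₀ B₁) B₁ t 0 - LA (sf s₀ B₂) B₂ t 0| ≤ (1 * C + C * 1) * (Mw / √lam) * ρ * exp (lam * t) := by
  have hl0 : 0 < lam := by linarith
  have c1 := sf_curve (s₀ := s₀) hB₁
  have c2 := sf_curve (s₀ := s₀) hB₂
  refine int_diff hB₁ hB₂ (LA_meas c1 t 0) (LA_meas c2 t 0) hl0 hρ zero_le_one zero_le_one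
    (LA_bd c1 t 0) (LA_bd c2 t 0) ?_ (by simpa using hB)
  intro σ hσ _
  rw [zero_add, zero_add]
  have := k1_diff hσ (sf s₀ B₁ t - sf s₀ B₁ (t - σ)) (sf s₀ B₂ t - sf s₀ B₂ (t - σ))
  have h2 := sf_diff (s₀ := s₀) hB₁ hB₂ hl0 hρ hB t hσ.le
  unfold k1 at this
  refine this.trans ?_
  unfold mw
  calc _ ≤ σ⁻¹ * (√σ)⁻¹ * (ρ * exp (lam * t) * min σ lam⁻¹) := by gcongr
    _ = _ := by ring

lemma T2 (hs : 0 < s₀) (hB₁ : Dens B₁ C) (hB₂ : Dens B₂ C) (p₁ : ∀ t, 0 ≤ B₁ t) (p₂ : ∀ t, 0 ≤ B₂ t)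
    (hl : 1 ≤ lam) (hρ : 0 ≤ ρ) (ht : 0 < t)
    (hB : ∀ τ > 0, |B₁ τ - B₂ τ| ≤ ρ * exp (lam * τ)) :
    |Lay k1 (fun τ => -sf s₀ B₁ τ) B₁ t (sf s₀ B₁ t) - Lay k1 (fun τ => -sf s₀ B₂ τ) B₂ t (sf s₀ B₂ t)|
      ≤ ((1 + 5 / s₀ ^ 2) * 2 * C + s₀⁻¹ * 1) * (Mw / √lam) * ρ * exp (lam * t) := by
  have hl0 : 0 < lam := by linarith
  have c1 := (sf_curve (s₀ := s₀) hB₁).cont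
  have c2 := (sf_curve (s₀ := s₀) hB₂).cont
  have g1 := sf_ge (s₀ := s₀) hB₁ p₁
  have g2 := sf_ge (s₀ := s₀) hB₂ p₂
  rw [Lay_sigma, Lay_sigma]
  simp only [sub_neg_eq_add]
  refine int_diff hB₁ hB₂ (κ₁ := fun σ => k1 σ (sf s₀ B₁ t + sf s₀ B₁ (t - σ)))
    (κ₂ := fun σ => k1 σ (sf s₀ B₂ t + sf s₀ B₂ (t - σ)))
    (km k1_meas (by fun_prop)) (km k1_meas (by fun_prop)) hl0 hρ (by positivity) zero_le_one ?_ ?_ ?_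
    (by simpa using hB)
  · intro σ
    exact k1_farb hs ((by linarith [g1 t, g1 (t - σ)] : s₀ ≤ _).trans (le_abs_self _))
  · intro σ
    exact k1_farb hs ((by linarith [g2 t, g2 (t - σ)] : s₀ ≤ _).trans (le_abs_self _))
  · intro σ hσ hσt
    have e1 := sf_diff0 (s₀ := s₀) hB₁ hB₂ hl0 hρ hB ht.le
    have e2 := sf_diff0 (s₀ := s₀) hB₁ hB₂ hl0 hρ hB (t := t - σ) (by linarith)
    have e3 : |(sf s₀ B₁ t + sf s₀ B₁ (t - σ)) - (sf s₀ B₂ t + sf s₀ B₂ (t - σ))| ≤ 2 * (ρ * exp (lam * t) * lam⁻¹) := by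
      have e4 : ρ * exp (lam * t) * min t lam⁻¹ ≤ ρ * exp (lam * t) * lam⁻¹ := by
        gcongr; exact min_le_right _ _
      have e5 : ρ * exp (lam * (t - σ)) * min (t - σ) lam⁻¹ ≤ ρ * exp (lam * t) * lam⁻¹ := by
        gcongr
        · linarith
        · exact min_le_right _ _
      rw [add_sub_add_comm]
      refine (abs_add_le _ _).trans ?_
      linarith
    refine (k1_diff_far hσ hs (by linarith [g1 t, g1 (t - σ)]) (by linarith [g2 t, g2 (t - σ)])).trans ?_
    calc _ ≤ (1 + 5 / s₀ ^ 2) * (σ⁻¹ * (√σ)⁻¹ * min 1 σ) * (2 * (ρ * exp (lam * t) * lam⁻¹)) := by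
          have : 0 ≤ min 1 σ := le_min zero_le_one hσ.le
          gcongr
      _ = (1 + 5 / s₀ ^ 2) * 2 * ρ * exp (lam * t) * (σ⁻¹ * (√σ)⁻¹ * min 1 σ * lam⁻¹) := by ring
      _ ≤ _ := by gcongr; exact far_mw hl hσ

lemma T3 (hs : 0 < s₀) (hB₁ : Dens B₁ C) (hB₂ : Dens B₂ C) (p₁ : ∀ t, 0 ≤ B₁ t) (p₂ : ∀ t, 0 ≤ B₂ t)
    (hh₁ : Dens h₁ 1) (hh₂ : Dens h₂ 1) (hP : 0 ≤ P)
    (hl : 1 ≤ lam) (hρ : 0 ≤ ρ) (ht : 0 < t)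
    (hB : ∀ τ > 0, |B₁ τ - B₂ τ| ≤ ρ * exp (lam * τ))
    (hh : ∀ τ > 0, |h₁ τ - h₂ τ| ≤ P * ρ * exp (lam * τ)) :
    |Lay k1 (fun _ => 0) h₁ t (sf s₀ B₁ t) - Lay k1 (fun _ => 0) h₂ t (sf s₀ B₂ t)|
      ≤ ((1 + 5 / s₀ ^ 2) * 1 + s₀⁻¹ * P) * (Mw / √lam) * ρ * exp (lam * t) := by
  have hl0 : 0 < lam := by linarith
  have g1 := sf_ge (s₀ := s₀) hB₁ p₁
  have g2 := sf_ge (s₀ := s₀) hB₂ p₂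
  rw [Lay_sigma, Lay_sigma]
  simp only [sub_zero]
  refine int_diff hh₁ hh₂ (κ₁ := fun σ => k1 σ (sf s₀ B₁ t))
    (κ₂ := fun σ => k1 σ (sf s₀ B₂ t))
    (km k1_meas (by fun_prop)) (km k1_meas (by fun_prop)) hl0 hρ (by positivity) hP ?_ ?_ ?_ hh
  · intro σ
    exact k1_farb hs ((g1 t).trans (le_abs_self _))
  · intro σ
    exact k1_farb hs ((g2 t).trans (le_abs_self _))
  · intro σ hσ hσt
    have e1 := sf_diff0 (s₀ := s₀) hB₁ hB₂ hl0 hρ hB ht.le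
    have e3 : |sf s₀ B₁ t - sf s₀ B₂ t| ≤ ρ * exp (lam * t) * lam⁻¹ := by
      refine e1.trans ?_
      gcongr; exact min_le_right _ _
    refine (k1_diff_far hσ hs (g1 t) (g2 t)).trans ?_
    calc _ ≤ (1 + 5 / s₀ ^ 2) * (σ⁻¹ * (√σ)⁻¹ * min 1 σ) * (ρ * exp (lam * t) * lam⁻¹) := by
          have : 0 ≤ min 1 σ := le_min zero_le_one hσ.le
          gcongr
      _ = (1 + 5 / s₀ ^ 2) * ρ * exp (lam * t) * (σ⁻¹ * (√σ)⁻¹ * min 1 σ * lam⁻¹) := by ring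
      _ ≤ _ := by gcongr; exact far_mw hl hσ

lemma T4 {φ : ℝ → ℝ} {K : ℝ} (hφ : Ini φ s₀ K) (hB₁ : Dens B₁ C) (hB₂ : Dens B₂ C)
    (hl : 1 ≤ lam) (hρ : 0 ≤ ρ) (ht : 0 < t)
    (hB : ∀ τ > 0, |B₁ τ - B₂ τ| ≤ ρ * exp (lam * τ)) :
    |Ik k1 φ s₀ t (sf s₀ B₁ t) - Ik k1 φ s₀ t (sf s₀ B₂ t)| ≤
      ((∫ z, |k1 1 z|) * K) * (1 / √lam) * ρ * exp (lam * t) := by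
  have hl0 : 0 < lam := by linarith
  have hK := hφ.Kpos
  have hM : 0 ≤ ∫ z, |k1 1 z| := integral_nonneg fun _ => abs_nonneg _
  have e1 := sf_diff0 (s₀ := s₀) hB₁ hB₂ hl0 hρ hB ht.le
  have h1 := Real.sqrt_pos.2 ht
  have h2 := Real.sqrt_pos.2 hl0
  have e2 : (√t)⁻¹ * min t lam⁻¹ ≤ 1 / √lam := by
    rw [inv_mul_le_iff₀ h1, mul_one_div, le_div_iff₀ h2]
    rcases le_total (√t * √lam) 1 with h | h
    · calc min t lam⁻¹ * √lam ≤ t * √lam := by gcongr; exact min_le_left _ _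
        _ = √t * (√t * √lam) := by rw [← mul_assoc, Real.mul_self_sqrt ht.le]
        _ ≤ √t * 1 := by gcongr
        _ = _ := mul_one _
    · calc min t lam⁻¹ * √lam ≤ lam⁻¹ * √lam := by gcongr; exact min_le_right _ _
        _ = (√lam)⁻¹ := by
          have := Real.mul_self_sqrt hl0.le
          field_simp; nlinarith
        _ ≤ √t := by rw [inv_le_iff_one_le_mul₀ h2]; linarith
  refine (Ix_lip hφ ht _ _).trans ?_
  calc _ ≤ (∫ z, |k1 1 z|) * K * ((√t)⁻¹ * (ρ * exp (lam * t) * min t lam⁻¹)) := by gcongr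
    _ = (∫ z, |k1 1 z|) * K * ((√t)⁻¹ * min t lam⁻¹) * ρ * exp (lam * t) := by ring
    _ ≤ _ := by gcongr

lemma T5 (hh₁ : Dens h₁ 1) (hh₂ : Dens h₂ 1) (hP : 0 ≤ P) (hl : 1 ≤ lam) (hρ : 0 ≤ ρ)
    (hh : ∀ τ > 0, |h₁ τ - h₂ τ| ≤ P * ρ * exp (lam * τ)) :
    |Lay k0 (fun _ => 0) h₁ t 0 - Lay k0 (fun _ => 0) h₂ t 0|
      ≤ (0 * 1 + 1 * P) * (Mw / √lam) * ρ * exp (lam * t) := by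
  have hl0 : 0 < lam := by linarith
  rw [Lay_sigma, Lay_sigma]
  have hb : ∀ σ, |k0 σ (0 - 0)| ≤ 1 * (√σ)⁻¹ := fun σ => by
    rw [abs_of_nonneg (k0_nonneg _ _), one_mul]; exact k0_le _ _
  refine int_diff hh₁ hh₂ (κ₁ := fun σ => k0 σ (0 - 0)) (κ₂ := fun σ => k0 σ (0 - 0))
    (km k0_meas (by fun_prop)) (km k0_meas (by fun_prop)) hl0 hρ le_rfl hP hb hb ?_ hh
  intro σ _ _
  simp

lemma T6 (hs : 0 < s₀) (hB₁ : Dens B₁ C) (hB₂ : Dens B₂ C) (p₁ : ∀ t, 0 ≤ B₁ t) (p₂ : ∀ t, 0 ≤ B₂ t)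
    (hl : 1 ≤ lam) (hρ : 0 ≤ ρ) (hB : ∀ τ > 0, |B₁ τ - B₂ τ| ≤ ρ * exp (lam * τ)) :
    |Lay k0 (sf s₀ B₁) B₁ t 0 - Lay k0 (sf s₀ B₂) B₂ t 0|
      ≤ (s₀⁻¹ * C + 1 * 1) * (Mw / √lam) * ρ * exp (lam * t) := by
  have hl0 : 0 < lam := by linarith
  have c1 := (sf_curve (s₀ := s₀) hB₁).cont
  have c2 := (sf_curve (s₀ := s₀) hB₂).cont
  have g1 := sf_ge (s₀ := s₀) hB₁ p₁
  have g2 := sf_ge (s₀ := s₀) hB₂ p₂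
  rw [Lay_sigma, Lay_sigma]
  have hb : ∀ σ y, |k0 σ y| ≤ 1 * (√σ)⁻¹ := fun σ y => by
    rw [abs_of_nonneg (k0_nonneg _ _), one_mul]; exact k0_le _ _
  refine int_diff hB₁ hB₂ (κ₁ := fun σ => k0 σ (0 - sf s₀ B₁ (t - σ)))
    (κ₂ := fun σ => k0 σ (0 - sf s₀ B₂ (t - σ)))
    (km k0_meas (by fun_prop)) (km k0_meas (by fun_prop)) hl0 hρ (by positivity) zero_le_one
    (fun σ => hb _ _) (fun σ => hb _ _) ?_ (by simpa using hB)
  intro σ hσ hσt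
  rw [zero_sub, zero_sub, k0_neg, k0_neg]
  refine (k0_diff hs (g1 _) (g2 _)).trans ?_
  have e2 := sf_diff0 (s₀ := s₀) hB₁ hB₂ hl0 hρ hB (t := t - σ) (by linarith)
  have hl2 : lam⁻¹ ≤ 1 := inv_le_one_of_one_le₀ hl
  have e3 : |sf s₀ B₁ (t - σ) - sf s₀ B₂ (t - σ)| ≤ ρ * (exp (lam * t) * exp (-(lam * σ))) := by
    refine e2.trans ?_
    rw [← exp_add, show lam * t + -(lam * σ) = lam * (t - σ) by ring]
    calc _ ≤ ρ * exp (lam * (t - σ)) * 1 := by gcongr; exact (min_le_right _ _).trans hl2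
      _ = _ := mul_one _
  calc _ ≤ s₀⁻¹ * (√σ)⁻¹ * (ρ * (exp (lam * t) * exp (-(lam * σ)))) := by gcongr
    _ = s₀⁻¹ * ρ * exp (lam * t) * ((√σ)⁻¹ * exp (-(lam * σ))) := by ring
    _ ≤ _ := by gcongr; exact mw_ge hl0 hσ

end diffs


def FF1 (φ : ℝ → ℝ) (s₀ : ℝ) (B h : ℝ → ℝ) (t : ℝ) : ℝ :=
  2 * (LA (sf s₀ B) B t 0 + Lay k1 (fun τ => -sf s₀ B τ) B t (sf s₀ B t)
    - Ik k1 φ s₀ t (sf s₀ B t) - 2 * Lay k1 (fun _ => 0) h t (sf s₀ B t))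
def FF2 (φ : ℝ → ℝ) (s₀ : ℝ) (B h : ℝ → ℝ) (t : ℝ) : ℝ :=
  II φ t 0 + 2 * Lay k0 (fun _ => 0) h t 0 - 2 * Lay k0 (sf s₀ B) B t 0

lemma curve0 : Curve (fun _ => 0) 0 := fun t τ => by simp
lemma Curve.neg {γ : ℝ → ℝ} {C : ℝ} (h : Curve γ C) : Curve (fun τ => -γ τ) C := fun t τ => by
  rw [neg_sub_neg, abs_sub_comm]; exact h t τ

section
variable {φ : ℝ → ℝ} {s₀ K C : ℝ} {B h : ℝ → ℝ}

lemma FF1_cont (hφ : Ini φ s₀ K) (hB : Dens B C) (p : ∀ t, 0 ≤ B t) (hh : Dens h 1) :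
    ContinuousOn (FF1 φ s₀ B h) (Ioi 0) := by
  intro t ht
  have ht' : 0 < t := ht
  refine ContinuousAt.continuousWithinAt ?_
  have c := sf_curve (s₀ := s₀) hB
  have hs : 0 < sf s₀ B t := hφ.pos.trans_le (sf_ge hB p t)
  have hc : ContinuousAt (fun τ => (τ, sf s₀ B τ)) t := (continuous_id.prodMk c.cont).continuousAt
  have e1 : ContinuousAt (fun τ => LA (sf s₀ B) B τ 0) t :=
    ((LA_cont c hB).comp (by fun_prop : Continuous fun τ : ℝ => (τ, (0:ℝ)))).continuousAt
  have e2 := ContinuousAt.comp (f := fun τ => (τ, sf s₀ B τ)) (x := t)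
    (lay_off c.neg hB ht' (x0 := sf s₀ B t) (by linarith)).2.2.2.1 hc
  have e3 := ContinuousAt.comp (f := fun τ => (τ, sf s₀ B τ)) (x := t)
    (Ik_off hφ ht' (sf s₀ B t)).2.2.2.1 hc
  have e4 := ContinuousAt.comp (f := fun τ => (τ, sf s₀ B τ)) (x := t)
    (lay_off curve0 hh ht' (x0 := sf s₀ B t) hs.ne').2.2.2.1 hc
  exact (((e1.add e2).sub e3).sub (e4.const_mul 2)).const_mul 2

lemma FF2_cont (hφ : Ini φ s₀ K) (hB : Dens B C) (hh : Dens h 1) :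
    Continuous (FF2 φ s₀ B h) := by
  have c := sf_curve (s₀ := s₀) hB
  have hc : Continuous fun τ : ℝ => (τ, (0:ℝ)) := by fun_prop
  exact (((II_cont hφ).comp hc).add (((lay0_cont curve0 hh).comp hc).const_mul 2)).sub
    (((lay0_cont c hB).comp hc).const_mul 2)

lemma FF1_bd (hφ : Ini φ s₀ K) (hB : Dens B C) (p : ∀ t, 0 ≤ B t) (hh : Dens h 1) {lam t : ℝ}
    (hl : 1 ≤ lam) (ht : 0 < t) :
    |FF1 φ s₀ B h t| ≤ (2 * (C * C + s₀⁻¹ * C + K + 2 * (s₀⁻¹ * 1))) * exp (lam * t) := by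
  have c := sf_curve (s₀ := s₀) hB
  have g := sf_ge (s₀ := s₀) hB p
  have hs := hφ.pos
  have hK := hφ.Kpos
  have hC := hB.nonneg
  have hE := sqrt_exp hl ht.le
  have hE1 : 1 ≤ exp (lam * t) := Real.one_le_exp (by positivity)
  have e1 : |LA (sf s₀ B) B t 0| ≤ C * C * exp (lam * t) := by
    refine (int_bd hB ht.le (LA_bd c t 0)).trans ?_
    gcongr
  have e2 : |Lay k1 (fun τ => -sf s₀ B τ) B t (sf s₀ B t)| ≤ s₀⁻¹ * C * exp (lam * t) := by
    rw [Lay_sigma]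
    refine (int_bd (κ := fun σ => k1 σ (sf s₀ B t - -sf s₀ B (t - σ))) (b := s₀⁻¹) hB ht.le fun σ => ?_).trans ?_
    · exact k1_farb hs ((by linarith [g t, g (t - σ)] : s₀ ≤ _).trans (le_abs_self _))
    · gcongr
  have e3 : |Ik k1 φ s₀ t (sf s₀ B t)| ≤ K * exp (lam * t) := by
    have := Ix_bd hφ ht (sf s₀ B t)
    nlinarith
  have e4 : |Lay k1 (fun _ => 0) h t (sf s₀ B t)| ≤ s₀⁻¹ * 1 * exp (lam * t) := by
    rw [Lay_sigma]
    refine (int_bd (κ := fun σ => k1 σ (sf s₀ B t - 0)) (b := s₀⁻¹) hh ht.le fun σ => ?_).trans ?_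
    · exact k1_farb hs ((by linarith [g t, g (t - σ)] : s₀ ≤ _).trans (le_abs_self _))
    · gcongr
  unfold FF1
  rw [abs_le] at *
  constructor <;> linarith

lemma FF2_bd (hφ : Ini φ s₀ K) (hB : Dens B C) (hh : Dens h 1) {lam t : ℝ}
    (hl : 1 ≤ lam) (ht : 0 < t) :
    |FF2 φ s₀ B h t| ≤ (K * s₀ + 2 * (1 * 1) + 2 * (1 * C)) * exp (lam * t) := by
  have hs := hφ.pos
  have hK := hφ.Kpos
  have hC := hB.nonneg
  have hE := sqrt_exp hl ht.le
  have hE1 : 1 ≤ exp (lam * t) := Real.one_le_exp (by positivity)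
  have hb : ∀ σ y, |k0 σ y| ≤ 1 * (√σ)⁻¹ := fun σ y => by
    rw [abs_of_nonneg (k0_nonneg _ _), one_mul]; exact k0_le _ _
  have e1 : |II φ t 0| ≤ K * s₀ * exp (lam * t) := by
    have := II_bd hφ t 0
    have h2 : 0 ≤ K * s₀ := by positivity
    nlinarith
  have e2 : |Lay k0 (fun _ => 0) h t 0| ≤ 1 * 1 * exp (lam * t) := by
    rw [Lay_sigma]
    refine (int_bd (κ := fun σ => k0 σ (0 - 0)) (b := 1) hh ht.le fun σ => hb _ _).trans ?_
    gcongr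
  have e3 : |Lay k0 (sf s₀ B) B t 0| ≤ 1 * C * exp (lam * t) := by
    rw [Lay_sigma]
    refine (int_bd (κ := fun σ => k0 σ (0 - sf s₀ B (t - σ))) (b := 1) hB ht.le fun σ => hb _ _).trans ?_
    gcongr
  unfold FF2
  rw [abs_le] at *
  constructor <;> linarith
end

lemma exists_sys {φ : ℝ → ℝ} {s₀ K C P : ℝ} (hφ : Ini φ s₀ K) (hC : 0 ≤ C) (hP : 0 ≤ P) {f : ℝ → ℝ}
    (hf0 : ∀ x, 0 ≤ f x) (hf1 : ∀ x, f x ≤ 1) (hfl : ∀ x y, |f x - f y| ≤ P * |x - y|) :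
    ∃ v g : ℝ → ℝ, ContinuousOn v (Ioi 0) ∧ ContinuousOn g (Ioi 0) ∧
      (∀ t > 0, v t = FF1 φ s₀ (dn (clip C) v) (dn f g) t) ∧
      (∀ t > 0, g t = FF2 φ s₀ (dn (clip C) v) (dn f g) t) := by
  have hfc : Continuous f := by
    have : LipschitzWith P.toNNReal f := by
      refine LipschitzWith.of_dist_le_mul fun x y => ?_
      rw [Real.coe_toNNReal _ hP, Real.dist_eq, Real.dist_eq]; exact hfl x y
    exact this.continuous
  have hs := hφ.pos
  have hK := hφ.Kpos
  let BB : (ℝ → ℝ × ℝ) → ℝ → ℝ := fun w => dn (clip C) (fun t => (w t).1)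
  let HH : (ℝ → ℝ × ℝ) → ℝ → ℝ := fun w => dn f (fun t => (w t).2)
  have hB : ∀ w, ContinuousOn w (Ioi 0) → Dens (BB w) C := fun w hw =>
    dn_dens (clip_cont C) (fun x => by rw [abs_of_nonneg (clip_nonneg hC x)]; exact clip_le _ _)
      (continuous_fst.comp_continuousOn hw)
  have hH : ∀ w, ContinuousOn w (Ioi 0) → Dens (HH w) 1 := fun w hw =>
    dn_dens hfc (fun x => by rw [abs_of_nonneg (hf0 x)]; exact hf1 _)
      (continuous_snd.comp_continuousOn hw)
  have hp : ∀ w t, 0 ≤ BB w t := by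
    intro w t
    simp only [BB, dn]; split_ifs
    · exact clip_nonneg hC _
    · exact le_rfl
  set M1 := ∫ z, |k1 1 z| with hM1
  have hM10 : 0 ≤ M1 := integral_nonneg fun _ => abs_nonneg _
  have hMw := Mw_nonneg
  obtain ⟨cc, hcc⟩ : ∃ cc, cc = 2 * ((1 * C + C * 1) * Mw + ((1 + 5 / s₀ ^ 2) * 2 * C + s₀⁻¹ * 1) * Mw +
    M1 * K + 2 * (((1 + 5 / s₀ ^ 2) * 1 + s₀⁻¹ * P) * Mw)) + (2 * ((0 * 1 + 1 * P) * Mw) +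
    2 * ((s₀⁻¹ * C + 1 * 1) * Mw)) := ⟨_, rfl⟩
  have hcc0 : 0 ≤ cc := by rw [hcc]; positivity
  set lam := (2 * cc + 1) ^ 2 with hlam
  have hsq : √lam = 2 * cc + 1 := Real.sqrt_sq (by linarith)
  have hl1 : 1 ≤ lam := by rw [hlam]; nlinarith
  have key : ∃ w : ℝ → ℝ × ℝ, ContinuousOn w (Ioi 0) ∧ ∀ t > 0, w t =
      (FF1 φ s₀ (BB w) (HH w) t, FF2 φ s₀ (BB w) (HH w) t) := by
    refine fixpt (E := ℝ × ℝ) (fun w t => (FF1 φ s₀ (BB w) (HH w) t, FF2 φ s₀ (BB w) (HH w) t)) lam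
      (2 * (C * C + s₀⁻¹ * C + K + 2 * (s₀⁻¹ * 1)) + (K * s₀ + 2 * (1 * 1) + 2 * (1 * C))) ?_ ?_ ?_
    · intro w hw
      exact (FF1_cont hφ (hB w hw) (hp w) (hH w hw)).prodMk (FF2_cont hφ (hB w hw) (hH w hw)).continuousOn
    · intro w hw t ht
      have e1 := FF1_bd hφ (hB w hw) (hp w) (hH w hw) hl1 ht
      have e2 := FF2_bd hφ (hB w hw) (hH w hw) hl1 ht
      have a1 := (abs_nonneg _).trans e1
      have a2 := (abs_nonneg _).trans e2
      rw [Prod.norm_def, Real.norm_eq_abs, Real.norm_eq_abs]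
      refine max_le ?_ ?_ <;> linarith
    · intro w₁ w₂ hw₁ hw₂ ρ hρ hd t ht
      have d1 : ∀ τ > 0, |BB w₁ τ - BB w₂ τ| ≤ ρ * exp (lam * τ) := by
        intro τ hτ
        simp only [BB, dn, gt_iff_lt.1 hτ, if_true]
        exact (clip_lip _ _ _).trans ((norm_fst_le (w₁ τ - w₂ τ)).trans (hd τ hτ))
      have d2 : ∀ τ > 0, |HH w₁ τ - HH w₂ τ| ≤ P * ρ * exp (lam * τ) := by
        intro τ hτ
        simp only [HH, dn, gt_iff_lt.1 hτ, if_true]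
        refine (hfl _ _).trans ?_
        rw [mul_assoc]
        gcongr
        exact (norm_snd_le (w₁ τ - w₂ τ)).trans (hd τ hτ)
      have t1 := T1 (s₀ := s₀) (t := t) (hB _ hw₁) (hB _ hw₂) hl1 hρ d1
      have t2 := T2 hs (hB _ hw₁) (hB _ hw₂) (hp _) (hp _) hl1 hρ ht d1
      have t3 := T3 hs (hB _ hw₁) (hB _ hw₂) (hp _) (hp _) (hH _ hw₁) (hH _ hw₂) hP hl1 hρ ht d1 d2
      have t4 := T4 hφ (hB _ hw₁) (hB _ hw₂) hl1 hρ ht d1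
      have t5 := T5 (t := t) (hH _ hw₁) (hH _ hw₂) hP hl1 hρ d2
      have t6 := T6 (t := t) hs (hB _ hw₁) (hB _ hw₂) (hp _) (hp _) hl1 hρ d1
      rw [← hM1] at t4
      set E := ρ * exp (lam * t) / √lam with hE
      have hE0 : 0 ≤ E := by positivity
      have r : ∀ a, a * (Mw / √lam) * ρ * exp (lam * t) = a * Mw * E := fun a => by rw [hE]; ring
      have r' : ∀ a, a * (1 / √lam) * ρ * exp (lam * t) = a * E := fun a => by rw [hE]; ring
      rw [r] at t1 t2 t3 t5 t6
      rw [r'] at t4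
      have hfin : cc * E ≤ 1 / 2 * ρ * exp (lam * t) := by
        rw [hE, hsq, mul_div_assoc', div_le_iff₀ (by linarith)]
        have : 0 ≤ ρ * exp (lam * t) := by positivity
        nlinarith
      have n1 := (abs_nonneg _).trans t1
      have n2 := (abs_nonneg _).trans t2
      have n3 := (abs_nonneg _).trans t3
      have n4 := (abs_nonneg _).trans t4
      have n5 := (abs_nonneg _).trans t5
      have n6 := (abs_nonneg _).trans t6
      have hccE : cc * E = 2 * ((1 * C + C * 1) * Mw * E + ((1 + 5 / s₀ ^ 2) * 2 * C + s₀⁻¹ * 1) * Mw * E +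
        M1 * K * E + 2 * (((1 + 5 / s₀ ^ 2) * 1 + s₀⁻¹ * P) * Mw * E)) + (2 * ((0 * 1 + 1 * P) * Mw * E) +
        2 * ((s₀⁻¹ * C + 1 * 1) * Mw * E)) := by rw [hcc]; ring
      rw [Prod.mk_sub_mk, Prod.norm_def, Real.norm_eq_abs, Real.norm_eq_abs]
      clear_value E M1 lam
      refine (max_le ?_ ?_).trans hfin
      · simp only [FF1]
        clear t5 t6
        rw [abs_le] at *
        constructor <;> linarith
      · simp only [FF2]
        clear t1 t2 t3 t4
        rw [abs_le] at *
        constructor <;> linarith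
  obtain ⟨w, hw, hwF⟩ := key
  refine ⟨fun t => (w t).1, fun t => (w t).2, continuous_fst.comp_continuousOn hw,
      continuous_snd.comp_continuousOn hw, fun t ht => ?_, fun t ht => ?_⟩
  · exact congrArg Prod.fst (hwF t ht)
  · exact congrArg Prod.snd (hwF t ht)


/-- solution of the truncated transmission problem -/
structure TS (φ : ℝ → ℝ) (s₀ C : ℝ) (f s B v : ℝ → ℝ) (u ux uxx : ℝ → ℝ → ℝ) : Prop where
  s_cont : Continuous s
  s_mono : Monotone s
  s_zero : s 0 = s₀
  s_deriv : ∀ t > 0, HasDerivAt s (B t) t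
  B_def : ∀ t > 0, B t = clip C (v t)
  B_cont : ∀ t > 0, ContinuousAt B t
  u_cont : Continuous fun q : ℝ × ℝ => u q.1 q.2
  u_zero : ∀ x, u 0 x = φ x
  d1 : ∀ t > 0, ∀ x > 0, x ≠ s t → HasDerivAt (u t) (ux t x) x
  d2 : ∀ t > 0, ∀ x > 0, x ≠ s t → HasDerivAt (ux t) (uxx t x) x
  d3 : ∀ t > 0, ∀ x > 0, x ≠ s t → HasDerivAt (fun τ => u τ x) (uxx t x) t
  c1 : ∀ t > 0, ∀ x > 0, x ≠ s t → ContinuousAt (fun q : ℝ × ℝ => ux q.1 q.2) (t, x)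
  c2 : ∀ t > 0, ∀ x > 0, x ≠ s t → ContinuousAt (fun q : ℝ × ℝ => uxx q.1 q.2) (t, x)
  jr : ∀ t > 0, Tendsto (fun q : ℝ × ℝ => ux q.1 q.2) (𝓝[{q | s q.1 < q.2}] (t, s t)) (𝓝 ((B t - v t) / 2))
  jl : ∀ t > 0, Tendsto (fun q : ℝ × ℝ => ux q.1 q.2) (𝓝[{q | q.2 < s q.1}] (t, s t)) (𝓝 (-(B t + v t) / 2))
  j0 : ∀ t > 0, Tendsto (fun q : ℝ × ℝ => ux q.1 q.2) (𝓝[{q | 0 < q.2}] (t, 0)) (𝓝 (-f (u t 0)))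
  decay : ∀ T > 0, ∀ ε > 0, ∃ R₀, ∀ R ≥ R₀, ∀ t ∈ Icc 0 T, |u t R| ≤ ε

def UU (φ : ℝ → ℝ) (s₀ : ℝ) (B h : ℝ → ℝ) (t x : ℝ) : ℝ :=
  II φ t x + 2 * Lay k0 (fun _ => 0) h t x - Lay k0 (sf s₀ B) B t x - Lay k0 (fun τ => -sf s₀ B τ) B t x
def UK (k : ℝ → ℝ → ℝ) (φ : ℝ → ℝ) (s₀ : ℝ) (B h : ℝ → ℝ) (t x : ℝ) : ℝ :=
  Ik k φ s₀ t x + 2 * Lay k (fun _ => 0) h t x - Lay k (sf s₀ B) B t x - Lay k (fun τ => -sf s₀ B τ) B t x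

lemma Lay_even {γ B : ℝ → ℝ} (t : ℝ) : Lay k0 (fun τ => -γ τ) B t 0 = Lay k0 γ B t 0 := by
  rw [Lay_sigma, Lay_sigma]
  congr 1; funext σ
  rw [zero_sub, zero_sub, k0_neg]

lemma Lay_odd {γ B : ℝ → ℝ} (t : ℝ) : Lay k1 (fun τ => -γ τ) B t 0 = -Lay k1 γ B t 0 := by
  rw [Lay_sigma, Lay_sigma, ← integral_neg]
  congr 1; funext σ
  rw [zero_sub, zero_sub, k1_neg]; ring

lemma Lay_decay {γ B : ℝ → ℝ} {R G T : ℝ} (hB : Dens B R) (hT : 0 < T)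
    (hG : ∀ τ ∈ Ioc 0 T, γ τ ≤ G) {t x : ℝ} (ht : t ∈ Icc 0 T) (hx : G < x) :
    |Lay k0 γ B t x| ≤ 2 * √T / (x - G) ^ 2 * R * T := by
  rw [Lay_restrict (fun t ht x => k0_np ht x) hB ht.2]
  have := Pk_decay (μ := volume.restrict (Ioc 0 T)) (a := fun τ => τ) (c := γ) (v := B) (R := R)
    (t := t) (x := x) (T := T) (d := x - G) hB.bd (by linarith) (by
      rw [ae_restrict_iff' measurableSet_Ioc]
      refine ae_of_all _ fun τ hτ => ⟨by linarith [ht.2, hτ.1], ?_⟩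
      exact le_trans (by linarith [hG τ hτ]) (le_abs_self _))
  simpa [Measure.real, hT.le] using this

lemma II_decay {φ : ℝ → ℝ} {s₀ K : ℝ} (h : Ini φ s₀ K) {T t x : ℝ} (ht : t ∈ Icc 0 T) (hx : s₀ < x) :
    |II φ t x| ≤ 2 * √T / (x - s₀) ^ 2 * (K * s₀) * (2 * s₀) := by
  have hs := h.pos
  have hK := h.Kpos
  rcases eq_or_lt_of_le ht.1 with h0 | h0
  · rw [← h0, II_zero, h.zero x (hx.le.trans (le_abs_self _)), abs_zero]; positivity
  rw [II_eq h h0]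
  have := Pk_decay (μ := volume.restrict (Icc (-s₀) s₀)) (a := fun _ => 0) (c := fun y => y) (v := φ)
    (R := K * s₀) (t := t) (x := x) (T := T) (d := x - s₀) h.bd (by linarith) (by
      rw [ae_restrict_iff' measurableSet_Icc]
      refine ae_of_all _ fun τ hτ => ⟨by linarith [ht.2], ?_⟩
      exact le_trans (by linarith [hτ.2]) (le_abs_self _))
  have e : (volume.restrict (Icc (-s₀) s₀)).real univ = 2 * s₀ := by
    simp [Measure.real, hs.le]; ring
  rw [e] at this
  exact this

lemma Lay_zero {γ B : ℝ → ℝ} {R : ℝ} (hB : Dens B R) (x : ℝ) : Lay k0 γ B 0 x = 0 := by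
  rw [Lay_restrict (fun t ht x => k0_np ht x) hB le_rfl]; simp [Pk]

lemma exists_TS {φ : ℝ → ℝ} {s₀ K C P : ℝ} (hφ : Ini φ s₀ K) (hC : 0 ≤ C) (hP : 0 ≤ P) {f : ℝ → ℝ}
    (hf0 : ∀ x, 0 ≤ f x) (hf1 : ∀ x, f x ≤ 1) (hfl : ∀ x y, |f x - f y| ≤ P * |x - y|) :
    ∃ s B v u ux uxx, TS φ s₀ C f s B v u ux uxx := by
  obtain ⟨v, g, hv, hg, hveq, hgeq⟩ := exists_sys hφ hC hP hf0 hf1 hfl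
  have hfc : Continuous f := by
    have : LipschitzWith P.toNNReal f := by
      refine LipschitzWith.of_dist_le_mul fun x y => ?_
      rw [Real.coe_toNNReal _ hP, Real.dist_eq, Real.dist_eq]; exact hfl x y
    exact this.continuous
  have hs₀ := hφ.pos
  have hK := hφ.Kpos
  have hBt : ∀ t > 0, dn (clip C) v t = clip C (v t) := fun t ht => by simp [dn, gt_iff_lt.1 ht]
  have hht : ∀ t > 0, dn f g t = f (g t) := fun t ht => by simp [dn, gt_iff_lt.1 ht]
  have hB : Dens (dn (clip C) v) C :=
    dn_dens (clip_cont C) (fun x => by rw [abs_of_nonneg (clip_nonneg hC x)]; exact clip_le _ _) hv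
  have hh : Dens (dn f g) 1 :=
    dn_dens hfc (fun x => by rw [abs_of_nonneg (hf0 x)]; exact hf1 _) hg
  have hp : ∀ t, 0 ≤ dn (clip C) v t := by
    intro t
    simp only [dn]; split_ifs
    · exact clip_nonneg hC _
    · exact le_rfl
  clear hfc
  set B := dn (clip C) v with hBd
  set h := dn f g with hhd
  have c := sf_curve (s₀ := s₀) hB
  have hspos : ∀ t, 0 < sf s₀ B t := fun t => hs₀.trans_le (sf_ge hB hp t)
  have off : ∀ t > 0, ∀ x > 0, x ≠ sf s₀ B t →
      HasDerivAt (UU φ s₀ B h t) (UK k1 φ s₀ B h t x) x ∧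
      HasDerivAt (UK k1 φ s₀ B h t) (UK k2 φ s₀ B h t x) x ∧
      HasDerivAt (fun τ => UU φ s₀ B h τ x) (UK k2 φ s₀ B h t x) t ∧
      ContinuousAt (fun q : ℝ × ℝ => UK k1 φ s₀ B h q.1 q.2) (t, x) ∧
      ContinuousAt (fun q : ℝ × ℝ => UK k2 φ s₀ B h q.1 q.2) (t, x) := by
    intro t ht x hx hxs
    obtain ⟨a1, a2, a3, a4, a5⟩ := Ik_off hφ ht x
    obtain ⟨b1, b2, b3, b4, b5⟩ := lay_off curve0 hh ht (x0 := x) hx.ne'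
    obtain ⟨d1, d2, d3, d4, d5⟩ := lay_off c hB ht hxs
    obtain ⟨e1, e2, e3, e4, e5⟩ := lay_off c.neg hB ht (x0 := x) (by linarith [hspos t])
    exact ⟨((a1.add (b1.const_mul 2)).sub d1).sub e1, ((a2.add (b2.const_mul 2)).sub d2).sub e2,
      ((a3.add (b3.const_mul 2)).sub d3).sub e3, ((a4.add (b4.const_mul 2)).sub d4).sub e4,
      ((a5.add (b5.const_mul 2)).sub d5).sub e5⟩
  have jmp : ∀ t > 0, ∀ e : ℝ, |e| = 1 → Tendsto (fun q : ℝ × ℝ => UK k1 φ s₀ B h q.1 q.2)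
      (𝓝[{q | 0 < e * (q.2 - sf s₀ B q.1)}] (t, sf s₀ B t)) (𝓝 ((e * B t - v t) / 2)) := by
    intro t ht e he
    have a := (Ik_off hφ ht (sf s₀ B t)).2.2.2.1.tendsto.mono_left
      (nhdsWithin_le_nhds (s := {q | 0 < e * (q.2 - sf s₀ B q.1)}))
    have b := (lay_off curve0 hh ht (x0 := sf s₀ B t) (hspos t).ne').2.2.2.1.tendsto.mono_left
      (nhdsWithin_le_nhds (s := {q | 0 < e * (q.2 - sf s₀ B q.1)}))
    have d := (lay_off c.neg hB ht (x0 := sf s₀ B t) (by linarith [hspos t])).2.2.2.1.tendsto.mono_left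
      (nhdsWithin_le_nhds (s := {q | 0 < e * (q.2 - sf s₀ B q.1)}))
    have j := jump c hB ht he
    have := ((a.add (b.const_mul 2)).sub j).sub d
    refine this.trans (le_of_eq ?_)
    congr 1
    have := hveq t ht
    rw [FF1] at this
    rw [this]; ring
  have hu0 : ∀ t > 0, UU φ s₀ B h t 0 = g t := by
    intro t ht
    rw [hgeq t ht, UU, FF2, Lay_even]; ring
  refine ⟨sf s₀ B, B, v, UU φ s₀ B h, UK k1 φ s₀ B h, UK k2 φ s₀ B h, ?_⟩
  refine ⟨c.cont, sf_mono hB hp, sf_np hB le_rfl, fun t ht => sf_deriv hB ht, hBt, hB.cont, ?_, ?_,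
    fun t ht x hx hne => (off t ht x hx hne).1, fun t ht x hx hne => (off t ht x hx hne).2.1,
    fun t ht x hx hne => (off t ht x hx hne).2.2.1, fun t ht x hx hne => (off t ht x hx hne).2.2.2.1,
    fun t ht x hx hne => (off t ht x hx hne).2.2.2.2, ?_, ?_, ?_, ?_⟩
  · exact (((II_cont hφ).add ((lay0_cont curve0 hh).const_mul 2)).sub (lay0_cont c hB)).sub
      (lay0_cont c.neg hB)
  · intro x
    rw [UU, II_zero, Lay_zero hh, Lay_zero hB, Lay_zero hB]; ring
  · intro t ht
    simpa using jmp t ht 1 (by simp)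
  · intro t ht
    have := jmp t ht (-1) (by simp)
    convert this using 2
    · congr 1; ext q; simp
    · congr 1; ring
  · intro t ht
    have a := (Ik_off hφ ht 0).2.2.2.1.tendsto.mono_left
      (nhdsWithin_le_nhds (s := {q : ℝ × ℝ | 0 < q.2}))
    have b := (lay_off c hB ht (x0 := 0) (hspos t).ne).2.2.2.1.tendsto.mono_left
      (nhdsWithin_le_nhds (s := {q : ℝ × ℝ | 0 < q.2}))
    have d := (lay_off c.neg hB ht (x0 := 0) (by linarith [hspos t])).2.2.2.1.tendsto.mono_left
      (nhdsWithin_le_nhds (s := {q : ℝ × ℝ | 0 < q.2}))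
    have j := jump curve0 hh ht (e := 1) (by simp)
    simp only [one_mul, sub_zero] at j
    have := ((a.add (j.const_mul 2)).sub b).sub d
    refine this.trans (le_of_eq ?_)
    congr 1
    simp only
    rw [Ix_zero hφ ht, Lay_odd, hu0 t ht, ← hht t ht]
    simp [LA]; ring
  · intro T hT ε hε
    set G := sf s₀ B T with hG
    have hGs : ∀ τ ∈ Ioc 0 T, sf s₀ B τ ≤ G := fun τ hτ => sf_mono hB hp hτ.2
    set A := 2 * √T * ((K * s₀) * (2 * s₀) + 2 * (1 * T) + 2 * (C * T)) with hA
    have hA0 : 0 ≤ A := by positivity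
    refine ⟨G + 1 + A / ε, fun R hR t ht => ?_⟩
    have hAε : 0 ≤ A / ε := by positivity
    have hGp : s₀ ≤ G := sf_ge hB hp T
    have hd : 1 + A / ε ≤ R - G := by linarith
    have e1 := II_decay hφ ht (x := R) (by linarith)
    have e2 := Lay_decay (γ := fun _ => 0) (G := 0) hh hT (fun _ _ => le_rfl) ht (x := R) (by linarith)
    have e3 := Lay_decay (γ := sf s₀ B) (G := G) hB hT hGs ht (x := R) (by linarith)
    have e4 := Lay_decay (γ := fun τ => -sf s₀ B τ) (G := G) hB hT
      (fun τ hτ => by linarith [hspos τ, hGs τ hτ]) ht (x := R) (by linarith)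
    have m : ∀ G' a, 0 ≤ a → G' ≤ G → 2 * √T / (R - G') ^ 2 * a ≤ 2 * √T / (R - G) ^ 2 * a := by
      intro G' a ha hG'
      have : 0 < R - G := by linarith
      gcongr
    rw [mul_assoc (2 * √T / (R - s₀) ^ 2)] at e1
    rw [mul_assoc (2 * √T / (R - 0) ^ 2)] at e2
    rw [mul_assoc (2 * √T / (R - G) ^ 2)] at e3 e4
    have e1' := e1.trans (m s₀ _ (by positivity) hGp)
    have e2' := e2.trans (m 0 _ (by positivity) (by linarith))
    have hfin : 2 * √T / (R - G) ^ 2 * ((K * s₀) * (2 * s₀) + 2 * (1 * T) + 2 * (C * T)) ≤ ε := by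
      have h1 : 2 * √T / (R - G) ^ 2 * ((K * s₀) * (2 * s₀) + 2 * (1 * T) + 2 * (C * T)) = A / (R - G) ^ 2 := by
        rw [hA]; ring
      rw [h1, div_le_iff₀ (by have : 0 < R - G := by linarith
                              positivity)]
      have h2 : A / ε ≤ (R - G) ^ 2 := by nlinarith
      rw [div_le_iff₀ hε] at h2; linarith
    generalize 2 * √T / (R - G) ^ 2 = X at *
    have e5 : X * (K * s₀ * (2 * s₀)) + 2 * (X * (1 * T)) + 2 * (X * (C * T)) ≤ ε := by linarith
    unfold UU
    rw [abs_le] at e1' e2' e3 e4 ⊢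
    constructor <;> linarith [e1'.1, e1'.2, e2'.1, e2'.2, e3.1, e3.2, e4.1, e4.2]


lemma left_ge {g : ℝ → ℝ} {d t : ℝ} (h : HasDerivWithinAt g d (Iic t) t)
    (hm : ∀ᶠ τ in 𝓝[<] t, g τ ≤ g t) : 0 ≤ d := by
  have h1 : Tendsto (slope g t) (𝓝[<] t) (𝓝 d) := by
    have := hasDerivWithinAt_iff_tendsto_slope.1 h
    rwa [Iic_sdiff_right] at this
  refine ge_of_tendsto h1 ?_
  filter_upwards [hm, self_mem_nhdsWithin] with τ hτ hlt
  rw [slope_def_field]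
  have : τ < t := hlt
  exact div_nonneg_of_nonpos (by linarith) (by linarith)

lemma right_le {g : ℝ → ℝ} {d t : ℝ} (h : HasDerivWithinAt g d (Ici t) t)
    (hm : ∀ᶠ τ in 𝓝[>] t, g τ ≤ g t) : d ≤ 0 := by
  have h1 : Tendsto (slope g t) (𝓝[>] t) (𝓝 d) := by
    have := hasDerivWithinAt_iff_tendsto_slope.1 h
    rwa [Ici_sdiff_left] at this
  refine le_of_tendsto h1 ?_
  filter_upwards [hm, self_mem_nhdsWithin] with τ hτ hlt
  rw [slope_def_field]
  have : t < τ := hlt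
  exact div_nonpos_of_nonpos_of_nonneg (by linarith) (by linarith)

lemma second_le {g g1 : ℝ → ℝ} {g2 x : ℝ} (h1 : ∀ᶠ y in 𝓝 x, HasDerivAt g (g1 y) y)
    (h2 : HasDerivAt g1 g2 x) (hm : IsLocalMax g x) : g2 ≤ 0 := by
  by_contra hc
  push Not at hc
  have e1 : deriv g =ᶠ[𝓝 x] g1 := h1.mono fun y hy => hy.deriv
  have e2 : deriv (deriv g) x = g2 := by rw [e1.deriv_eq, h2.deriv]
  have hmin : IsLocalMin g x := isLocalMin_of_deriv_deriv_pos (by rw [e2]; exact hc)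
    hm.deriv_eq_zero h1.self_of_nhds.continuousAt
  have e3 : g =ᶠ[𝓝 x] fun _ => g x := by
    filter_upwards [hmin, hm] with y a b
    exact le_antisymm b a
  have e4 : deriv (deriv g) x = 0 := by
    have : deriv g =ᶠ[𝓝 x] fun _ => 0 := by
      have := e3.deriv
      refine this.trans (Eventually.of_forall fun y => by simp)
    rw [this.deriv_eq]; simp
  linarith

lemma maxp {T L : ℝ} {c s B : ℝ → ℝ} {w : ℝ → ℝ → ℝ} (hL : 0 ≤ L) (hc : Continuous c)
    (hs : Continuous s) (hsp : ∀ t, 0 < s t) (hsd : ∀ t > 0, HasDerivAt s (B t) t)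
    (hB : ∀ t > 0, 0 ≤ B t)
    (hw : ContinuousOn (fun q : ℝ × ℝ => w q.1 q.2) {q | q.1 ∈ Icc 0 T ∧ q.2 ∈ Icc 0 (c q.1)})
    (h0 : ∀ x ∈ Icc 0 (c 0), w 0 x ≤ 0)
    (h1 : ∀ t ∈ Icc 0 T, w t (c t) ≤ 0)
    (hA : ∀ t ∈ Ioc 0 T, 0 < w t 0 → ∃ d, HasDerivWithinAt (w t) d (Ici 0) 0 ∧ -L * w t 0 ≤ d)
    (hI : ∀ t ∈ Ioc 0 T, ∀ x ∈ Ioo 0 (c t), x ≠ s t → 0 < w t x → ∃ wt, ∃ w1 : ℝ → ℝ, ∃ w2,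
      (∀ᶠ y in 𝓝 x, HasDerivAt (w t) (w1 y) y) ∧ HasDerivAt w1 w2 x ∧
      HasDerivAt (fun τ => w τ x) wt t ∧ wt ≤ w2)
    (hK : ∀ t ∈ Ioc 0 T, s t ∈ Ioo 0 (c t) → 0 < w t (s t) → ∃ dl dr,
      HasDerivWithinAt (w t) dl (Iic (s t)) (s t) ∧ HasDerivWithinAt (w t) dr (Ici (s t)) (s t) ∧
      (0 ≤ dr ∨ dl ≤ dr)) :
    ∀ t ∈ Icc 0 T, ∀ x ∈ Icc 0 (c t), w t x ≤ 0 := by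
  by_contra hcon
  push Not at hcon
  obtain ⟨t', ht', x', hx', hw'⟩ := hcon
  set D : Set (ℝ × ℝ) := {q | q.1 ∈ Icc 0 T ∧ q.2 ∈ Icc 0 (c q.1)} with hD
  have hDc : IsCompact D := by
    obtain ⟨M, hM⟩ := isCompact_Icc.bddAbove_image (hc.continuousOn (s := Icc 0 T))
    refine IsCompact.of_isClosed_subset (isCompact_Icc (a := ((0:ℝ), (0:ℝ))) (b := (T, M))) ?_ ?_
    · have : D = {q | 0 ≤ q.1} ∩ {q | q.1 ≤ T} ∩ {q | 0 ≤ q.2} ∩ {q | q.2 ≤ c q.1} := by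
        ext q; simp [hD]; tauto
      rw [this]
      exact (((isClosed_le continuous_const continuous_fst).inter
        (isClosed_le continuous_fst continuous_const)).inter
        (isClosed_le continuous_const continuous_snd)).inter
        (isClosed_le continuous_snd (hc.comp continuous_fst))
    · rintro ⟨a, b⟩ ⟨ha, hb⟩
      exact ⟨⟨ha.1, hb.1⟩, ⟨ha.2, hb.2.trans (hM ⟨a, ha, rfl⟩)⟩⟩
  set b := L + 1 with hb
  set A := (b + 1) ^ 2 + 1 with hAd
  let Q : ℝ → ℝ → ℝ := fun t x => exp (A * t - b * x - max (x - s t) 0)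
  have hQ0 : ∀ t x, 0 < Q t x := fun t x => exp_pos _
  have hQc : Continuous fun q : ℝ × ℝ => Q q.1 q.2 := by
    have : Continuous fun q : ℝ × ℝ => s q.1 := hs.comp continuous_fst
    simp only [Q]; fun_prop
  obtain ⟨⟨t, x⟩, hq, hmax⟩ := hDc.exists_isMaxOn ⟨(t', x'), ht', hx'⟩
    (hw.div hQc.continuousOn fun q _ => (hQ0 _ _).ne')
  obtain ⟨ε, hε⟩ : ∃ ε, ε = w t x / Q t x := ⟨_, rfl⟩
  have hεp : 0 < ε := by
    have : w t' x' / Q t' x' ≤ w t x / Q t x := hmax (show ((t', x') : ℝ × ℝ) ∈ D from ⟨ht', hx'⟩)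
    rw [hε]
    exact (div_pos hw' (hQ0 _ _)).trans_le this
  have hle : ∀ τ y, (τ, y) ∈ D → w τ y ≤ ε * Q τ y := by
    intro τ y hy
    have : w τ y / Q τ y ≤ w t x / Q t x := hmax hy
    rwa [← hε, div_le_iff₀ (hQ0 _ _)] at this
  have heq : w t x = ε * Q t x := by rw [hε]; field_simp [(hQ0 t x).ne']
  have hwp : 0 < w t x := by rw [heq]; exact mul_pos hεp (hQ0 _ _)
  have ht0 : 0 < t := by
    rcases eq_or_lt_of_le hq.1.1 with h | h
    · exfalso
      simp only at h
      subst h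
      linarith [h0 x hq.2]
    · exact h
  have htT : t ∈ Ioc 0 T := ⟨ht0, hq.1.2⟩
  have hxc : x < c t := by
    rcases eq_or_lt_of_le hq.2.2 with h | h
    · exfalso
      simp only at h
      subst h
      linarith [h1 t hq.1]
    · exact h
  -- right side derivative facts
  have hR : ∀ d bb, HasDerivWithinAt (w t) d (Ici x) x →
      (∀ᶠ y in 𝓝[>] x, Q t y = exp (A * t - bb * y + (A * 0 + (bb - b) * s t))) →
      Q t x = exp (A * t - bb * x + (A * 0 + (bb - b) * s t)) → d ≤ -bb * (ε * Q t x) := by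
    intro d bb hd hQ hQx
    have e : HasDerivWithinAt (fun y => w t y - ε * exp (A * t - bb * y + (A * 0 + (bb - b) * s t)))
        (d - ε * (exp (A * t - bb * x + (A * 0 + (bb - b) * s t)) * (-(bb * 1)))) (Ici x) x := by
      refine hd.sub (HasDerivAt.hasDerivWithinAt ?_)
      exact ((((hasDerivAt_id x).const_mul bb).const_sub (A * t)).add_const _).exp.const_mul ε
    have := right_le e (by
      have : ∀ᶠ y in 𝓝[>] x, y < c t := nhdsWithin_le_nhds (eventually_lt_nhds hxc)
      filter_upwards [hQ, this, self_mem_nhdsWithin] with y hy hyc hyx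
      rw [← hy, ← hQx]
      have hyx' : x < y := hyx
      have := hle t y ⟨hq.1, by linarith [hq.2.1], hyc.le⟩
      linarith)
    rw [← hQx] at this
    linarith
  have hLft : ∀ d bb, 0 < x → HasDerivWithinAt (w t) d (Iic x) x →
      (∀ᶠ y in 𝓝[<] x, Q t y = exp (A * t - bb * y + (A * 0 + (bb - b) * s t))) →
      Q t x = exp (A * t - bb * x + (A * 0 + (bb - b) * s t)) → -bb * (ε * Q t x) ≤ d := by
    intro d bb hx0 hd hQ hQx
    have e : HasDerivWithinAt (fun y => w t y - ε * exp (A * t - bb * y + (A * 0 + (bb - b) * s t)))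
        (d - ε * (exp (A * t - bb * x + (A * 0 + (bb - b) * s t)) * (-(bb * 1)))) (Iic x) x := by
      refine hd.sub (HasDerivAt.hasDerivWithinAt ?_)
      exact ((((hasDerivAt_id x).const_mul bb).const_sub (A * t)).add_const _).exp.const_mul ε
    have := left_ge e (by
      have : ∀ᶠ y in 𝓝[<] x, 0 < y := nhdsWithin_le_nhds (eventually_gt_nhds hx0)
      filter_upwards [hQ, this, self_mem_nhdsWithin] with y hy hyc hyx
      rw [← hy, ← hQx]
      have hyx' : y < x := hyx
      have := hle t y ⟨hq.1, hyc.le, by linarith [hq.2.2]⟩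
      linarith)
    rw [← hQx] at this
    linarith
  have hQl : ∀ τ y, y ≤ s τ → Q τ y = exp (A * τ - b * y + (A * 0 + (b - b) * s τ)) := by
    intro τ y hy
    simp only [Q]
    rw [max_eq_right (by linarith)]; congr 1; ring
  have hQr : ∀ τ y, s τ ≤ y → Q τ y = exp (A * τ - (b + 1) * y + (A * 0 + (b + 1 - b) * s τ)) := by
    intro τ y hy
    simp only [Q]
    rw [max_eq_left (by linarith)]; congr 1; ring
  have hint : ∀ bb, 0 < x → x ≠ s t → 0 ≤ bb - b → bb ≤ b + 1 →
      (∀ᶠ q in 𝓝 (t, x), Q q.1 q.2 = exp (A * q.1 - bb * q.2 + (A * 0 + (bb - b) * s q.1))) → False := by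
    intro bb hx0 hxs hbb hbb2 hQ
    obtain ⟨wt, w1, w2, a1, a2, a3, a4⟩ := hI t htT x ⟨hx0, hxc⟩ hxs hwp
    have hQx := hQ.self_of_nhds
    simp only at hQx
    have ht : 0 ≤ wt - ε * (exp (A * t - bb * x + (A * 0 + (bb - b) * s t)) * (A * 1 + (bb - b) * B t)) := by
      have e : HasDerivAt (fun τ => w τ x - ε * exp (A * τ - bb * x + (A * 0 + (bb - b) * s τ)))
        (wt - ε * (exp (A * t - bb * x + (A * 0 + (bb - b) * s t)) * (A * 1 + (bb - b) * B t))) t := by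
        refine a3.sub ?_
        refine HasDerivAt.const_mul ε (HasDerivAt.exp ?_)
        exact (((hasDerivAt_id t).const_mul A).sub_const _).add (((hsd t ht0).const_mul _).const_add _)
      refine left_ge e.hasDerivWithinAt ?_
      have n1 : ∀ᶠ τ in 𝓝[<] t, 0 < τ := nhdsWithin_le_nhds (eventually_gt_nhds ht0)
      have n2 : ∀ᶠ τ in 𝓝[<] t, x < c τ := nhdsWithin_le_nhds (hc.continuousAt.eventually (eventually_gt_nhds hxc))
      have n3 : ∀ᶠ τ in 𝓝[<] t, Q τ x = exp (A * τ - bb * x + (A * 0 + (bb - b) * s τ)) :=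
        nhdsWithin_le_nhds ((by fun_prop : Continuous fun τ : ℝ => (τ, x)).continuousAt.eventually hQ)
      filter_upwards [n1, n2, n3, self_mem_nhdsWithin] with τ m1 m2 m3 m4
      have m4' : τ < t := m4
      rw [← m3, ← hQx]
      have := hle τ x ⟨⟨m1.le, by linarith [htT.2]⟩, hx0.le, m2.le⟩
      linarith
    have hx2 : w2 - ε * (exp (A * t - bb * x + (A * 0 + (bb - b) * s t)) * (-(bb * 1)) * (-(bb * 1))) ≤ 0 := by
      have E : ∀ y, HasDerivAt (fun y => exp (A * t - bb * y + (A * 0 + (bb - b) * s t)))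
          (exp (A * t - bb * y + (A * 0 + (bb - b) * s t)) * (-(bb * 1))) y := fun y =>
        ((((hasDerivAt_id y).const_mul bb).const_sub (A * t)).add_const _).exp
      refine second_le (x := x) (g := fun y => w t y - ε * exp (A * t - bb * y + (A * 0 + (bb - b) * s t)))
        (g1 := fun y => w1 y - ε * (exp (A * t - bb * y + (A * 0 + (bb - b) * s t)) * (-(bb * 1)))) ?_ ?_ ?_
      · filter_upwards [a1] with y hy
        exact hy.sub ((E y).const_mul ε)
      · exact a2.sub (((E x).mul_const _).const_mul ε)
      · have n3 : ∀ᶠ y in 𝓝 x, Q t y = exp (A * t - bb * y + (A * 0 + (bb - b) * s t)) :=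
          ((by fun_prop : Continuous fun y : ℝ => (t, y)).continuousAt.eventually hQ)
        filter_upwards [n3, eventually_gt_nhds hx0, eventually_lt_nhds hxc] with y m3 m1 m2
        rw [← m3, ← hQx]
        have := hle t y ⟨hq.1, m1.le, m2.le⟩
        linarith
    rw [← hQx] at ht hx2
    have hB' := hB t ht0
    have p1 : 0 < ε * Q t x := mul_pos hεp (hQ0 _ _)
    have p2 : 0 ≤ (bb - b) * B t := mul_nonneg hbb hB'
    have p3 : bb ^ 2 ≤ (b + 1) ^ 2 := by
      have : 0 ≤ bb := by linarith
      gcongr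
    have p4 : 0 < ε * Q t x * (A + (bb - b) * B t - bb ^ 2) := mul_pos p1 (by rw [hAd]; linarith)
    linarith
  rcases eq_or_lt_of_le hq.2.1 with hx0 | hx0
  · simp only at hx0
    subst hx0
    obtain ⟨d, hd, hd2⟩ := hA t htT hwp
    have := hR d b hd (by
      filter_upwards [nhdsWithin_le_nhds (eventually_lt_nhds (hsp t))] with y hy
      exact hQl t y (le_of_lt hy)) (hQl t 0 (hsp t).le)
    rw [← heq] at this
    linarith
  · simp only at hx0
    rcases lt_trichotomy x (s t) with hxs | hxs | hxs
    · refine hint b hx0 hxs.ne (by linarith) (by linarith) ?_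
      have : ∀ᶠ q : ℝ × ℝ in 𝓝 (t, x), q.2 < s q.1 :=
        continuous_snd.continuousAt.eventually_lt (hs.comp continuous_fst).continuousAt hxs
      filter_upwards [this] with q hq'
      exact hQl _ _ hq'.le
    · subst hxs
      obtain ⟨dl, dr, g1, g2, g3⟩ := hK t htT ⟨hx0, hxc⟩ hwp
      have r1 := hR dr (b + 1) g2 (by
        filter_upwards [self_mem_nhdsWithin] with y hy
        exact hQr t y (le_of_lt hy)) (hQr t _ le_rfl)
      have r2 := hLft dl b hx0 g1 (by
        filter_upwards [self_mem_nhdsWithin] with y hy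
        exact hQl t y (le_of_lt hy)) (hQl t _ le_rfl)
      have p1 : 0 < ε * Q t (s t) := mul_pos hεp (hQ0 _ _)
      have p2 : 0 ≤ b * (ε * Q t (s t)) := by positivity
      rcases g3 with g | g <;> linarith
    · refine hint (b + 1) hx0 hxs.ne' (by linarith) (by linarith) ?_
      have : ∀ᶠ q : ℝ × ℝ in 𝓝 (t, x), s q.1 < q.2 :=
        (hs.comp continuous_fst).continuousAt.eventually_lt continuous_snd.continuousAt hxs
      filter_upwards [this] with q hq'
      exact hQr _ _ hq'.le


section TSsec
variable {φ : ℝ → ℝ} {s₀ C : ℝ} {f s B v : ℝ → ℝ} {u ux uxx : ℝ → ℝ → ℝ}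

lemma tends_slice {S : Set (ℝ × ℝ)} {I : Set ℝ} {t a : ℝ} (h : ∀ᶠ y in 𝓝[I] a, (t, y) ∈ S) :
    Tendsto (fun y => (t, y)) (𝓝[I] a) (𝓝[S] (t, a)) := by
  refine tendsto_nhdsWithin_iff.2 ⟨?_, h⟩
  exact (by fun_prop : Continuous fun y : ℝ => (t, y)).continuousAt.tendsto.mono_left nhdsWithin_le_nhds

lemma TS.slice (h : TS φ s₀ C f s B v u ux uxx) (t : ℝ) : Continuous (u t) :=
  h.u_cont.comp (by fun_prop : Continuous fun y : ℝ => (t, y))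

lemma TS.s_pos (h : TS φ s₀ C f s B v u ux uxx) (hs : 0 < s₀) {t : ℝ} (ht : 0 ≤ t) : 0 < s t :=
  hs.trans_le (by rw [← h.s_zero]; exact h.s_mono ht)

lemma TS.dr (h : TS φ s₀ C f s B v u ux uxx) (hs : 0 < s₀) {t : ℝ} (ht : 0 < t) :
    HasDerivWithinAt (u t) ((B t - v t) / 2) (Ici (s t)) (s t) := by
  have hsp := h.s_pos hs ht.le
  refine hasDerivWithinAt_Ici_of_tendsto_deriv (s := Ioi (s t)) (fun x hx => ?_)
    (h.slice t).continuousWithinAt self_mem_nhdsWithin ?_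
  · have hx' : s t < x := hx
    exact (h.d1 t ht x (hsp.trans hx') hx'.ne').differentiableAt.differentiableWithinAt
  · refine ((h.jr t ht).comp (tends_slice (I := Ioi (s t)) self_mem_nhdsWithin)).congr' ?_
    filter_upwards [self_mem_nhdsWithin] with x hx
    have hx' : s t < x := hx
    exact (h.d1 t ht x (hsp.trans hx') hx'.ne').deriv.symm

lemma TS.dl (h : TS φ s₀ C f s B v u ux uxx) (hs : 0 < s₀) {t : ℝ} (ht : 0 < t) :
    HasDerivWithinAt (u t) (-(B t + v t) / 2) (Iic (s t)) (s t) := by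
  have hsp := h.s_pos hs ht.le
  refine hasDerivWithinAt_Iic_of_tendsto_deriv (s := Ioo 0 (s t)) (fun x hx => ?_)
    (h.slice t).continuousWithinAt (Ioo_mem_nhdsLT hsp) ?_
  · exact (h.d1 t ht x hx.1 hx.2.ne).differentiableAt.differentiableWithinAt
  · refine ((h.jl t ht).comp (tends_slice (I := Iio (s t)) self_mem_nhdsWithin)).congr' ?_
    filter_upwards [Ioo_mem_nhdsLT hsp] with x hx
    exact (h.d1 t ht x hx.1 hx.2.ne).deriv.symm

lemma TS.dz (h : TS φ s₀ C f s B v u ux uxx) (hs : 0 < s₀) {t : ℝ} (ht : 0 < t) :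
    HasDerivWithinAt (u t) (-f (u t 0)) (Ici 0) 0 := by
  have hsp := h.s_pos hs ht.le
  refine hasDerivWithinAt_Ici_of_tendsto_deriv (s := Ioo 0 (s t)) (fun x hx => ?_)
    (h.slice t).continuousWithinAt (Ioo_mem_nhdsGT hsp) ?_
  · exact (h.d1 t ht x hx.1 hx.2.ne).differentiableAt.differentiableWithinAt
  · refine ((h.j0 t ht).comp (tends_slice (I := Ioi 0) self_mem_nhdsWithin)).congr' ?_
    filter_upwards [Ioo_mem_nhdsGT hsp] with x hx
    exact (h.d1 t ht x hx.1 hx.2.ne).deriv.symm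

lemma TS.d1ev (h : TS φ s₀ C f s B v u ux uxx) {t x : ℝ} (ht : 0 < t) (hx : 0 < x) (hne : x ≠ s t) :
    ∀ᶠ y in 𝓝 x, HasDerivAt (u t) (ux t y) y := by
  filter_upwards [eventually_gt_nhds hx, eventually_ne_nhds hne] with y h1 h2
  exact h.d1 t ht y h1 h2

lemma TS.B_nonneg (h : TS φ s₀ C f s B v u ux uxx) (hC : 0 ≤ C) {t : ℝ} (ht : 0 < t) : 0 ≤ B t := by
  rw [h.B_def t ht]; exact clip_nonneg hC _

lemma TS.bounds (h : TS φ s₀ C f s B v u ux uxx) (hs : 0 < s₀) (hC : 1 ≤ C) (hf0 : ∀ x, 0 ≤ f x)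
    (hf1 : ∀ x, f x ≤ 1) (hφ0 : ∀ x, 0 ≤ x → 0 ≤ φ x)
    (hφ1 : ∀ x, 0 ≤ x → φ x ≤ C * max (s₀ - x) 0) {t x : ℝ} (ht : 0 ≤ t) (hx : 0 ≤ x) :
    0 ≤ u t x ∧ u t x ≤ C * max (s t - x) 0 := by
  have key : ∀ ε > 0, -u t x - ε ≤ 0 ∧ u t x - C * max (s t - x) 0 - ε ≤ 0 := by
    intro ε hε
    obtain ⟨R₀, hR₀⟩ := h.decay (t + 1) (by linarith) ε hε
    set R := max R₀ (x + 1) with hR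
    have hRx : x + 1 ≤ R := le_max_right _ _
    have hdec : ∀ τ ∈ Icc 0 t, |u τ R| ≤ ε := fun τ hτ =>
      hR₀ R (le_max_left _ _) τ ⟨hτ.1, by linarith [hτ.2]⟩
    let s' : ℝ → ℝ := fun τ => s (max τ 0)
    have hs'c : Continuous s' := h.s_cont.comp (by fun_prop)
    have hs'p : ∀ τ, 0 < s' τ := fun τ => h.s_pos hs (le_max_right _ _)
    have hs'e : ∀ τ > 0, s' τ = s τ := fun τ hτ => by simp only [s']; rw [max_eq_left hτ.le]
    have hs'd : ∀ τ > 0, HasDerivAt s' (B τ) τ := by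
      intro τ hτ
      refine (h.s_deriv τ hτ).congr_of_eventuallyEq ?_
      filter_upwards [eventually_gt_nhds hτ] with y hy using hs'e y hy
    have huc := h.u_cont
    have hsc2 : Continuous fun q : ℝ × ℝ => s q.1 := h.s_cont.comp continuous_fst
    constructor
    · refine maxp (T := t) (L := 0) (c := fun _ => R) (s := s') (B := B) (w := fun t x => -u t x - ε) le_rfl
        continuous_const hs'c hs'p hs'd (fun τ hτ => h.B_nonneg (by linarith) hτ) ?_ ?_ ?_ ?_ ?_ ?_ t ⟨ht, le_rfl⟩
        x ⟨hx, by linarith⟩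
      · exact (huc.neg.sub continuous_const).continuousOn
      · intro y hy
        rw [h.u_zero]
        linarith [hφ0 y hy.1]
      · intro τ hτ
        linarith [neg_abs_le (u τ R), hdec τ hτ]
      · intro τ hτ _
        exact ⟨_, (h.dz hs hτ.1).neg.sub_const ε, by linarith [hf0 (u τ 0)]⟩
      · intro τ hτ y hy hne _
        rw [hs'e τ hτ.1] at hne
        refine ⟨-uxx τ y, fun y => -ux τ y, -uxx τ y, ?_, (h.d2 τ hτ.1 y hy.1 hne).neg,
          (h.d3 τ hτ.1 y hy.1 hne).neg.sub_const ε, le_rfl⟩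
        filter_upwards [h.d1ev hτ.1 hy.1 hne] with z hz
        exact hz.neg.sub_const ε
      · intro τ hτ hy _
        rw [hs'e τ hτ.1]
        refine ⟨_, _, (h.dl hs hτ.1).neg.sub_const ε, (h.dr hs hτ.1).neg.sub_const ε, ?_⟩
        rw [h.B_def τ hτ.1]
        unfold clip
        rcases le_total 0 (v τ) with hv | hv
        · left
          rw [max_eq_left hv]
          linarith [min_le_left (v τ) C]
        · right
          rw [max_eq_right hv, min_eq_left (by linarith)]
          linarith
    · refine maxp (T := t) (L := 0) (c := fun _ => R) (s := s') (B := B)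
        (w := fun t x => u t x - C * max (s t - x) 0 - ε) le_rfl
        continuous_const hs'c hs'p hs'd (fun τ hτ => h.B_nonneg (by linarith) hτ) ?_ ?_ ?_ ?_ ?_ ?_ t ⟨ht, le_rfl⟩
        x ⟨hx, by linarith⟩
      · exact ((huc.sub (((hsc2.sub continuous_snd).max continuous_const).const_mul C)).sub continuous_const).continuousOn
      · intro y hy
        rw [h.u_zero, h.s_zero]
        linarith [hφ1 y hy.1]
      · intro τ hτ
        have : 0 ≤ C * max (s τ - R) 0 := mul_nonneg (by linarith) (le_max_right _ _)
        linarith [le_abs_self (u τ R), hdec τ hτ]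
      · intro τ hτ _
        have hsτ := h.s_pos hs hτ.1.le
        have e : HasDerivAt (fun x => C * max (s τ - x) 0) (C * (-1)) 0 := by
          refine (((hasDerivAt_id (0:ℝ)).const_sub (s τ)).const_mul C).congr_of_eventuallyEq ?_
          filter_upwards [eventually_lt_nhds hsτ] with y hy
          rw [max_eq_left (by linarith)]; rfl
        exact ⟨_, ((h.dz hs hτ.1).sub e.hasDerivWithinAt).sub_const ε, by linarith [hf1 (u τ 0)]⟩
      · intro τ hτ y hy hne _
        rw [hs'e τ hτ.1] at hne
        rcases lt_or_gt_of_ne hne with hlt | hlt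
        · refine ⟨uxx τ y - C * B τ, fun y => ux τ y - C * (-1), uxx τ y, ?_, (h.d2 τ hτ.1 y hy.1 hne).sub_const _,
            ?_, by nlinarith [h.B_nonneg (by linarith) hτ.1]⟩
          · filter_upwards [h.d1ev hτ.1 hy.1 hne, eventually_lt_nhds hlt] with z hz hzs
            refine HasDerivAt.sub_const ε (hz.sub ?_)
            refine (((hasDerivAt_id z).const_sub (s τ)).const_mul C).congr_of_eventuallyEq ?_
            filter_upwards [eventually_lt_nhds hzs] with y hy
            rw [max_eq_left (by linarith)]; rfl
          · refine HasDerivAt.sub_const ε ((h.d3 τ hτ.1 y hy.1 hne).sub ?_)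
            refine (((h.s_deriv τ hτ.1).sub_const y).const_mul C).congr_of_eventuallyEq ?_
            filter_upwards [h.s_cont.continuousAt.eventually (eventually_gt_nhds hlt)] with y hy
            rw [max_eq_left (by linarith)]
        · refine ⟨uxx τ y - 0, fun y => ux τ y - 0, uxx τ y, ?_, (h.d2 τ hτ.1 y hy.1 hne).sub_const _,
            ?_, by linarith⟩
          · filter_upwards [h.d1ev hτ.1 hy.1 hne, eventually_gt_nhds hlt] with z hz hzs
            refine HasDerivAt.sub_const ε (hz.sub ?_)
            refine (hasDerivAt_const z (0:ℝ)).congr_of_eventuallyEq ?_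
            filter_upwards [eventually_gt_nhds hzs] with y hy
            rw [max_eq_right (by linarith), mul_zero]
          · refine HasDerivAt.sub_const ε ((h.d3 τ hτ.1 y hy.1 hne).sub ?_)
            refine (hasDerivAt_const τ (0:ℝ)).congr_of_eventuallyEq ?_
            filter_upwards [h.s_cont.continuousAt.eventually (eventually_lt_nhds hlt)] with y hy
            rw [max_eq_right (by linarith), mul_zero]
      · intro τ hτ hy _
        rw [hs'e τ hτ.1]
        have e1 : HasDerivWithinAt (fun x => C * max (s τ - x) 0) (C * (-1)) (Iic (s τ)) (s τ) := by
          refine (((hasDerivAt_id (s τ)).const_sub (s τ)).const_mul C).hasDerivWithinAt.congr (fun y hy => ?_) ?_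
          · have : y ≤ s τ := hy
            rw [max_eq_left (by linarith)]; rfl
          · rw [max_eq_left (by linarith)]; rfl
        have e2 : HasDerivWithinAt (fun x => C * max (s τ - x) 0) 0 (Ici (s τ)) (s τ) := by
          refine (hasDerivWithinAt_const (s τ) _ (0:ℝ)).congr (fun y hy => ?_) ?_
          · have : s τ ≤ y := hy
            rw [max_eq_right (by linarith), mul_zero]
          · simp
        refine ⟨_, _, ((h.dl hs hτ.1).sub e1).sub_const ε, ((h.dr hs hτ.1).sub e2).sub_const ε, ?_⟩
        rw [h.B_def τ hτ.1]
        unfold clip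
        rcases le_total (v τ) C with hv | hv
        · left
          rw [min_eq_left (by rw [max_le_iff]; constructor <;> linarith)]
          linarith [le_max_left (v τ) 0]
        · right
          rw [max_eq_left (by linarith), min_eq_right hv]
          linarith
  constructor
  · refine le_of_forall_pos_le_add fun ε hε => ?_
    linarith [(key ε hε).1]
  · refine le_of_forall_pos_le_add fun ε hε => ?_
    linarith [(key ε hε).2]

lemma TS.v_eq (h : TS φ s₀ C f s B v u ux uxx) (hs : 0 < s₀) (hC : 1 ≤ C) (hf0 : ∀ x, 0 ≤ f x)
    (hf1 : ∀ x, f x ≤ 1) (hφ0 : ∀ x, 0 ≤ x → 0 ≤ φ x)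
    (hφ1 : ∀ x, 0 ≤ x → φ x ≤ C * max (s₀ - x) 0) {t : ℝ} (ht : 0 < t) : v t = B t := by
  have hz : ∀ x ∈ Ici (s t), u t x = 0 := by
    intro x hx
    have hx' : s t ≤ x := hx
    have := h.bounds hs hC hf0 hf1 hφ0 hφ1 ht.le ((h.s_pos hs ht.le).le.trans hx')
    rw [max_eq_right (by linarith), mul_zero] at this
    linarith
  have e : HasDerivWithinAt (u t) 0 (Ici (s t)) (s t) :=
    (hasDerivWithinAt_const (s t) _ (0:ℝ)).congr hz (hz _ self_mem_Ici)
  have := (uniqueDiffWithinAt_Ici (s t)).eq_deriv _ (h.dr hs ht) e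
  linarith

end TSsec


/-- truncated nonlinearity -/
def fp (p g : ℝ) : ℝ := (clip 1 g) ^ p

lemma fp_nonneg (p g : ℝ) : 0 ≤ fp p g := rpow_nonneg (clip_nonneg zero_le_one g) p
lemma fp_le {p : ℝ} (hp : 1 < p) (g : ℝ) : fp p g ≤ 1 :=
  rpow_le_one (clip_nonneg zero_le_one g) (clip_le 1 g) (by linarith)
lemma fp_eq {p g : ℝ} (h0 : 0 ≤ g) (h1 : g ≤ 1) : fp p g = g ^ p := by
  simp [fp, clip, h0, h1]
lemma fp_lip {p : ℝ} (hp : 1 < p) (x y : ℝ) : |fp p x - fp p y| ≤ p * |x - y| := by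
  have h := (convex_Icc (0:ℝ) 1).norm_image_sub_le_of_norm_hasDerivWithin_le (f := fun x : ℝ => x ^ p)
    (f' := fun x => p * x ^ (p - 1)) (C := p) (x := clip 1 y) (y := clip 1 x)
    (fun z _ => (Real.hasDerivAt_rpow_const (Or.inr hp.le)).hasDerivWithinAt)
    (fun z hz => by
      rw [Real.norm_eq_abs, abs_of_nonneg (mul_nonneg (by linarith) (rpow_nonneg hz.1 _))]
      have := rpow_le_one hz.1 hz.2 (by linarith : 0 ≤ p - 1)
      nlinarith)
    ⟨clip_nonneg zero_le_one _, clip_le _ _⟩ ⟨clip_nonneg zero_le_one _, clip_le _ _⟩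
  rw [Real.norm_eq_abs, Real.norm_eq_abs] at h
  refine h.trans ?_
  have := clip_lip 1 x y
  have hp0 : 0 ≤ p := by linarith
  gcongr

def al (s₀ : ℝ) : ℝ := 1 / (9 * s₀ ^ 2)
def sg (s₀ t : ℝ) : ℝ := s₀ * (3 - exp (-al s₀ * t))
def zz (ε s₀ t x : ℝ) : ℝ := ε * exp (-al s₀ * t) * (2 - x / sg s₀ t - (x / sg s₀ t) ^ 2)

lemma E_bd {s₀ t : ℝ} (hs : 0 < s₀) (ht : 0 ≤ t) : exp (-al s₀ * t) ≤ 1 := by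
  rw [exp_le_one_iff]
  have : 0 ≤ al s₀ := by unfold al; positivity
  nlinarith

lemma sg_lo {s₀ t : ℝ} (hs : 0 < s₀) (ht : 0 ≤ t) : 2 * s₀ ≤ sg s₀ t := by
  have := E_bd hs ht
  unfold sg; nlinarith
lemma sg_hi {s₀ t : ℝ} (hs : 0 < s₀) : sg s₀ t ≤ 3 * s₀ := by
  have := exp_pos (-al s₀ * t)
  unfold sg; nlinarith
lemma sg_pos {s₀ t : ℝ} (hs : 0 < s₀) (ht : 0 ≤ t) : 0 < sg s₀ t := by
  linarith [sg_lo hs ht]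
lemma E_deriv (s₀ t : ℝ) : HasDerivAt (fun t => exp (-al s₀ * t)) (exp (-al s₀ * t) * (-al s₀)) t := by
  simpa using ((hasDerivAt_id t).const_mul (-al s₀)).exp
lemma sg_deriv (s₀ t : ℝ) : HasDerivAt (sg s₀) (s₀ * al s₀ * exp (-al s₀ * t)) t := by
  have := ((E_deriv s₀ t).const_sub 3).const_mul s₀
  exact this.congr_deriv (by ring)

lemma zz_x {s₀ t : ℝ} (ε x : ℝ) :
    HasDerivAt (zz ε s₀ t) (ε * exp (-al s₀ * t) * (-1 / sg s₀ t - 2 * x / sg s₀ t ^ 2)) x := by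
  have h := (hasDerivAt_id x).div_const (sg s₀ t)
  have := ((h.const_sub 2).sub (h.pow 2)).const_mul (ε * exp (-al s₀ * t))
  exact this.congr_deriv (by simp only [id]; push_cast; ring)
lemma zz_xx {s₀ t : ℝ} (ε x : ℝ) :
    HasDerivAt (fun x => ε * exp (-al s₀ * t) * (-1 / sg s₀ t - 2 * x / sg s₀ t ^ 2))
      (ε * exp (-al s₀ * t) * (-2 / sg s₀ t ^ 2)) x := by
  have h := (((hasDerivAt_id x).const_mul 2).div_const (sg s₀ t ^ 2)).const_sub (-1 / sg s₀ t)
  have := h.const_mul (ε * exp (-al s₀ * t))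
  exact this.congr_deriv (by ring)
lemma zz_t {s₀ t : ℝ} (ε x : ℝ) (h : sg s₀ t ≠ 0) :
    HasDerivAt (fun t => zz ε s₀ t x) (ε * exp (-al s₀ * t) * (-al s₀ * (2 - x / sg s₀ t - (x / sg s₀ t) ^ 2)
      + (s₀ * al s₀ * exp (-al s₀ * t)) * (x / sg s₀ t ^ 2) * (1 + 2 * (x / sg s₀ t)))) t := by
  have h1 := (hasDerivAt_const t x).div (sg_deriv s₀ t) h
  have := ((E_deriv s₀ t).const_mul ε).mul ((h1.const_sub 2).sub (h1.pow 2))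
  exact this.congr_deriv (by simp only [Pi.div_apply, Pi.sub_apply, Pi.pow_apply]; push_cast; field_simp; ring)

lemma zz_heat {ε s₀ t x : ℝ} (hε : 0 < ε) (hs : 0 < s₀) (ht : 0 ≤ t) (hx : 0 ≤ x) :
    ε * exp (-al s₀ * t) * (-2 / sg s₀ t ^ 2) ≤
    ε * exp (-al s₀ * t) * (-al s₀ * (2 - x / sg s₀ t - (x / sg s₀ t) ^ 2)
      + (s₀ * al s₀ * exp (-al s₀ * t)) * (x / sg s₀ t ^ 2) * (1 + 2 * (x / sg s₀ t))) := by
  have hp := sg_pos hs ht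
  have hal : 0 < al s₀ := by unfold al; positivity
  have h1 : al s₀ ≤ 1 / sg s₀ t ^ 2 := by
    unfold al
    have := sg_hi (t := t) hs
    have h2 : sg s₀ t ^ 2 ≤ 9 * s₀ ^ 2 := by nlinarith
    exact one_div_le_one_div_of_le (by positivity) h2
  have h2 : 0 ≤ (s₀ * al s₀ * exp (-al s₀ * t)) * (x / sg s₀ t ^ 2) * (1 + 2 * (x / sg s₀ t)) := by positivity
  have h3 : 0 ≤ x / sg s₀ t := by positivity
  have h4 : -2 / sg s₀ t ^ 2 = -2 * (1 / sg s₀ t ^ 2) := by ring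
  refine mul_le_mul_of_nonneg_left ?_ (by positivity)
  rw [h4]
  have h5 : 0 ≤ al s₀ * (x / sg s₀ t + (x / sg s₀ t) ^ 2) := by positivity
  nlinarith

lemma zz_cont {ε s₀ T : ℝ} (hs : 0 < s₀) (S : Set (ℝ × ℝ)) (hS : ∀ q ∈ S, q.1 ∈ Icc 0 T) :
    ContinuousOn (fun q : ℝ × ℝ => zz ε s₀ q.1 q.2) S := by
  have h1 : Continuous fun q : ℝ × ℝ => exp (-al s₀ * q.1) := by fun_prop
  have h2 : Continuous fun q : ℝ × ℝ => sg s₀ q.1 := by unfold sg; fun_prop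
  have h3 : ContinuousOn (fun q : ℝ × ℝ => q.2 / sg s₀ q.1) S :=
    continuous_snd.continuousOn.div h2.continuousOn fun q hq => (sg_pos hs (hS q hq).1).ne'
  unfold zz
  exact (continuousOn_const.mul h1.continuousOn).mul ((continuousOn_const.sub h3).sub (h3.pow 2))

section
variable {φ : ℝ → ℝ} {s₀ C p : ℝ} {s B v : ℝ → ℝ} {u ux uxx : ℝ → ℝ → ℝ}

lemma TS.super (h : TS φ s₀ C (fp p) s B v u ux uxx) (hp : 1 < p) (hs : 0 < s₀) (hC : 1 ≤ C)
    (hφ0 : ∀ x, 0 ≤ x → 0 ≤ φ x)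
    (hφ1 : ∀ x, 0 ≤ x → φ x ≤ C * max (s₀ - x) 0) {ε : ℝ} (hε : 0 < ε) (hε1 : ε ≤ 1 / 100)
    (hε2 : 3 * s₀ * 2 ^ p * ε ^ (p - 1) ≤ 1) (hφ2 : ∀ x ∈ Icc 0 s₀, φ x ≤ ε) :
    (∀ t, 0 ≤ t → s t < sg s₀ t) ∧ ∀ t, 0 ≤ t → ∀ x ∈ Icc 0 (s t), u t x ≤ zz ε s₀ t x := by
  have bd := fun {t x} => h.bounds (t := t) (x := x) hs hC (fp_nonneg p) (fp_le hp) hφ0 hφ1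
  have hv := fun {t} => h.v_eq (t := t) hs hC (fp_nonneg p) (fp_le hp) hφ0 hφ1
  have us : ∀ t, 0 ≤ t → u t (s t) = 0 := by
    intro t ht
    have := bd ht (h.s_pos hs ht).le
    rw [sub_self, max_self, mul_zero] at this
    linarith
  have comp : ∀ T, 0 ≤ T → (∀ t ∈ Icc 0 T, s t ≤ sg s₀ t) →
      ∀ t ∈ Icc 0 T, ∀ x ∈ Icc 0 (s t), u t x - zz ε s₀ t x ≤ 0 := by
    intro T hT hle
    let s' : ℝ → ℝ := fun τ => s (max τ 0)
    have hs'c : Continuous s' := h.s_cont.comp (by fun_prop)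
    have hs'p : ∀ τ, 0 < s' τ := fun τ => h.s_pos hs (le_max_right _ _)
    have hs'e : ∀ τ > 0, s' τ = s τ := fun τ hτ => by simp only [s']; rw [max_eq_left hτ.le]
    have hs'd : ∀ τ > 0, HasDerivAt s' (B τ) τ := by
      intro τ hτ
      refine (h.s_deriv τ hτ).congr_of_eventuallyEq ?_
      filter_upwards [eventually_gt_nhds hτ] with y hy using hs'e y hy
    refine maxp (T := T) (L := p) (c := s) (s := s') (B := B) (w := fun t x => u t x - zz ε s₀ t x)
      (by linarith) h.s_cont hs'c hs'p hs'd (fun τ hτ => h.B_nonneg (by linarith) hτ) ?_ ?_ ?_ ?_ ?_ ?_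
    · exact h.u_cont.continuousOn.sub (zz_cont hs _ fun q hq => hq.1)
    · intro x hx
      rw [h.s_zero] at hx
      have h1 := hφ2 x hx
      rw [h.u_zero]
      have h2 : x / sg s₀ 0 ≤ 1 / 2 := by
        rw [div_le_iff₀ (sg_pos hs le_rfl)]
        linarith [sg_lo hs le_rfl, hx.2]
      have h3 : 0 ≤ x / sg s₀ 0 := div_nonneg hx.1 (sg_pos hs le_rfl).le
      have h4 : ε ≤ zz ε s₀ 0 x := by
        unfold zz
        rw [mul_zero, exp_zero, mul_one]
        have : 1 ≤ 2 - x / sg s₀ 0 - (x / sg s₀ 0) ^ 2 := by nlinarith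
        nlinarith
      linarith
    · intro t ht
      have hp' := sg_pos hs ht.1
      have h1 : s t / sg s₀ t ≤ 1 := by rw [div_le_one hp']; exact hle t ht
      have h3 : 0 ≤ s t / sg s₀ t := div_nonneg (h.s_pos hs ht.1).le hp'.le
      have : 0 ≤ zz ε s₀ t (s t) := by
        unfold zz
        refine mul_nonneg (by positivity) ?_
        nlinarith
      simp only [us t ht.1]
      linarith
    · intro t ht hw
      refine ⟨_, (h.dz hs ht.1).sub (zz_x ε 0).hasDerivWithinAt, ?_⟩
      have hp' := sg_pos hs ht.1.le
      have hE := E_bd hs ht.1.le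
      have hE0 := exp_pos (-al s₀ * t)
      have hz0 : zz ε s₀ t 0 = 2 * ε * exp (-al s₀ * t) := by unfold zz; simp; ring
      set E := exp (-al s₀ * t) with hEd
      have hz1 : zz ε s₀ t 0 ≤ 1 := by rw [hz0]; nlinarith
      have hz2 : 0 ≤ zz ε s₀ t 0 := by rw [hz0]; positivity
      have l := fp_lip hp (u t 0) (zz ε s₀ t 0)
      rw [abs_of_pos hw] at l
      have l2 := (le_abs_self _).trans l
      have hzp : fp p (zz ε s₀ t 0) ≤ ε * E / sg s₀ t := by
        rw [fp_eq hz2 hz1, hz0, le_div_iff₀ hp']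
        have e1 : (2 * ε * E) ^ p = 2 ^ p * (ε ^ (p - 1) * ε) * (E ^ (p - 1) * E) := by
          rw [mul_rpow (by positivity) hE0.le, mul_rpow (by norm_num) hε.le]
          rw [← rpow_add_one hε.ne', ← rpow_add_one hE0.ne']
          simp
        have e2 : E ^ (p - 1) ≤ 1 := rpow_le_one hE0.le hE (by linarith)
        rw [e1]
        calc 2 ^ p * (ε ^ (p - 1) * ε) * (E ^ (p - 1) * E) * sg s₀ t
            ≤ 2 ^ p * (ε ^ (p - 1) * ε) * (1 * E) * (3 * s₀) := by
              gcongr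
              exact sg_hi hs
          _ = (3 * s₀ * 2 ^ p * ε ^ (p - 1)) * (ε * E) := by ring
          _ ≤ 1 * (ε * E) := by gcongr
          _ = ε * E := one_mul _
      have e3 : ε * E * (-1 / sg s₀ t - 2 * 0 / sg s₀ t ^ 2) = -(ε * E / sg s₀ t) := by ring
      rw [e3]
      linarith
    · intro t ht x hx hne _
      have hne' : x ≠ s t := hx.2.ne
      refine ⟨_, _, _, ?_, (h.d2 t ht.1 x hx.1 hne').sub (zz_xx (s₀ := s₀) (t := t) ε x),
        (h.d3 t ht.1 x hx.1 hne').sub (zz_t ε x (sg_pos hs ht.1.le).ne'), ?_⟩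
      · filter_upwards [h.d1ev ht.1 hx.1 hne'] with y hy
        exact hy.sub (zz_x ε y)
      · linarith [zz_heat hε hs ht.1.le hx.1.le]
    · intro t ht hst
      rw [hs'e t ht.1] at hst
      exact absurd hst.2 (lt_irrefl _)
  have hsgc : Continuous (sg s₀) := by unfold sg; fun_prop
  have first : ∀ t, 0 ≤ t → s t < sg s₀ t := by
    by_contra hcon
    push Not at hcon
    obtain ⟨t₁, ht₁, hst₁⟩ := hcon
    let N : Set ℝ := {t | t ∈ Icc 0 t₁ ∧ sg s₀ t ≤ s t}
    have hNc : IsCompact N := by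
      have : N = Icc 0 t₁ ∩ {t | sg s₀ t ≤ s t} := rfl
      rw [this]
      exact isCompact_Icc.inter_right (isClosed_le hsgc h.s_cont)
    obtain ⟨T, hTN, hTmin⟩ := hNc.exists_isLeast ⟨t₁, ⟨ht₁, le_rfl⟩, hst₁⟩
    have hlt : ∀ t, 0 ≤ t → t < T → s t < sg s₀ t := by
      intro t h0 h1
      by_contra h2
      push Not at h2
      have := hTmin (show t ∈ N from ⟨⟨h0, by linarith [hTN.1.2]⟩, h2⟩)
      linarith
    have hT0 : 0 < T := by
      rcases eq_or_lt_of_le hTN.1.1 with h0 | h0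
      · exfalso
        have h1 := hTN.2
        rw [← h0, h.s_zero] at h1
        linarith [sg_lo hs (le_refl (0:ℝ))]
      · exact h0
    have hev : ∀ᶠ t in 𝓝[<] T, s t < sg s₀ t := by
      filter_upwards [Ioo_mem_nhdsLT hT0] with t ht
      exact hlt t ht.1.le ht.2
    have hTeq : s T = sg s₀ T := by
      refine le_antisymm ?_ hTN.2
      refine le_of_tendsto_of_tendsto (h.s_cont.continuousAt.tendsto.mono_left (nhdsWithin_le_nhds (s := Iio T)))
        (hsgc.continuousAt.tendsto.mono_left nhdsWithin_le_nhds) ?_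
      filter_upwards [hev] with t ht using ht.le
    have cm := comp T hT0.le (fun t ht => by
      rcases eq_or_lt_of_le ht.2 with e | e
      · rw [e, hTeq]
      · exact (hlt t ht.1 e).le) T ⟨hT0.le, le_rfl⟩
    have hp' := sg_pos hs hT0.le
    have a1 := left_ge (((h.s_deriv T hT0).sub (sg_deriv s₀ T)).hasDerivWithinAt) (by
      filter_upwards [hev] with t ht
      simp only [Pi.sub_apply]
      linarith)
    have hzT : zz ε s₀ T (s T) = 0 := by
      unfold zz
      rw [hTeq, div_self hp'.ne']; ring
    have a2 := left_ge ((h.dl hs hT0).sub (zz_x (s₀ := s₀) (t := T) ε (s T)).hasDerivWithinAt) (by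
      filter_upwards [Ioo_mem_nhdsLT (h.s_pos hs hT0.le)] with x hx
      have := cm x ⟨hx.1.le, hx.2.le⟩
      simp only [Pi.sub_apply, us T hT0.le, hzT]
      linarith)
    rw [hv hT0] at a2
    have hE0 := exp_pos (-al s₀ * T)
    set E := exp (-al s₀ * T) with hEd
    have e1 : ε * E * (-1 / sg s₀ T - 2 * s T / sg s₀ T ^ 2) = -(3 * ε * E / sg s₀ T) := by
      rw [hTeq]; field_simp; ring
    rw [e1] at a2
    have e2 : 3 * ε * E / sg s₀ T ≤ 3 * ε * E / (2 * s₀) := by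
      have := sg_lo hs hT0.le
      gcongr
    have e3 : 3 * ε * E / (2 * s₀) < s₀ * al s₀ * E := by
      have : s₀ * al s₀ * E = E / (9 * s₀) := by unfold al; field_simp
      rw [this, div_lt_div_iff₀ (by positivity) (by positivity)]
      have : 0 < E * s₀ := by positivity
      nlinarith
    linarith
  refine ⟨first, fun t ht x hx => ?_⟩
  linarith [comp t ht (fun τ hτ => (first τ hτ.1).le) t ⟨ht, le_rfl⟩ x hx]
end


/-- solution extended linearly across both boundaries -/
def UE (p : ℝ) (s B : ℝ → ℝ) (u : ℝ → ℝ → ℝ) (t x : ℝ) : ℝ :=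
  if x < 0 then u t 0 + -fp p (u t 0) * x else if s t < x then -B t * (x - s t) else u t x

section
variable {φ : ℝ → ℝ} {s₀ C p : ℝ} {s B v : ℝ → ℝ} {u ux uxx : ℝ → ℝ → ℝ}

lemma UE_eq {t x : ℝ} (hx : x ∈ Icc 0 (s t)) : UE p s B u t x = u t x := by
  unfold UE
  rw [if_neg (not_lt.2 hx.1), if_neg (not_lt.2 hx.2)]

lemma fp_cont (hp : 1 < p) : Continuous (fp p) := by
  unfold fp
  exact (clip_cont 1).rpow_const fun x => Or.inr (by linarith)

lemma TS.sol {φ₀ : ℝ → ℝ} (h : TS φ s₀ C (fp p) s B v u ux uxx) (hp : 1 < p) (hs : 0 < s₀)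
    (hv : ∀ t > 0, v t = B t) (hu0 : ∀ t, 0 ≤ t → ∀ x, 0 ≤ x → 0 ≤ u t x)
    (hus : ∀ t, 0 ≤ t → u t (s t) = 0) (hu1 : ∀ t, 0 ≤ t → u t 0 ≤ 1)
    (hi : ∀ x ∈ Icc 0 s₀, φ x = φ₀ x) : IsGlobalSol p s₀ φ₀ s (UE p s B u) := by
  intro T hT
  have hsp : ∀ {t}, 0 ≤ t → 0 < s t := fun ht => h.s_pos hs ht
  let O : Set (ℝ × ℝ) := {q | 0 < q.1 ∧ 0 < q.2 ∧ q.2 < s q.1}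
  have hO : IsOpen O := by
    have : O = {q | 0 < q.1} ∩ ({q | 0 < q.2} ∩ {q | q.2 < s q.1}) := rfl
    rw [this]
    exact (isOpen_lt continuous_const continuous_fst).inter
      ((isOpen_lt continuous_const continuous_snd).inter
        (isOpen_lt continuous_snd (h.s_cont.comp continuous_fst)))
  have sub : ∀ {t x}, t ∈ Ioc 0 T → x ∈ Ioo 0 (s t) → (t, x) ∈ O := fun ht hx => ⟨ht.1, hx.1, hx.2⟩
  have D1 : ∀ q ∈ O, HasDerivAt (UE p s B u q.1) (ux q.1 q.2) q.2 := by
    rintro ⟨t, x⟩ ⟨h1, h2, h3⟩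
    refine (h.d1 t h1 x h2 h3.ne).congr_of_eventuallyEq ?_
    filter_upwards [eventually_gt_nhds h2, eventually_lt_nhds h3] with y a b
    exact UE_eq ⟨le_of_lt a, le_of_lt b⟩
  have D2 : ∀ q ∈ O, HasDerivAt (deriv (UE p s B u q.1)) (uxx q.1 q.2) q.2 := by
    rintro ⟨t, x⟩ ⟨h1, h2, h3⟩
    refine (h.d2 t h1 x h2 h3.ne).congr_of_eventuallyEq ?_
    filter_upwards [eventually_gt_nhds h2, eventually_lt_nhds h3] with y a b
    exact (D1 (t, y) ⟨h1, a, b⟩).deriv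
  have D3 : ∀ q ∈ O, HasDerivAt (fun τ => UE p s B u τ q.2) (uxx q.1 q.2) q.1 := by
    rintro ⟨t, x⟩ ⟨h1, h2, h3⟩
    refine (h.d3 t h1 x h2 h3.ne).congr_of_eventuallyEq ?_
    filter_upwards [h.s_cont.continuousAt.eventually (eventually_gt_nhds h3)] with τ a
    exact UE_eq ⟨le_of_lt h2, le_of_lt a⟩
  have DZ : ∀ t > 0, HasDerivAt (UE p s B u t) (-fp p (u t 0)) 0 := by
    intro t ht
    have z0 : UE p s B u t 0 = u t 0 := UE_eq ⟨le_rfl, (hsp ht.le).le⟩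
    have e1 : HasDerivWithinAt (UE p s B u t) (-fp p (u t 0)) (Ici 0) 0 := by
      refine (h.dz hs ht).congr_of_eventuallyEq ?_ z0
      filter_upwards [self_mem_nhdsWithin, nhdsWithin_le_nhds (eventually_lt_nhds (hsp ht.le))] with x a b
      exact UE_eq ⟨a, le_of_lt b⟩
    have e2 : HasDerivWithinAt (UE p s B u t) (-fp p (u t 0)) (Iic 0) 0 := by
      have : HasDerivAt (fun x => u t 0 + -fp p (u t 0) * x) (-fp p (u t 0)) 0 := by
        simpa using ((hasDerivAt_id (0:ℝ)).const_mul (-fp p (u t 0))).const_add (u t 0)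
      refine this.hasDerivWithinAt.congr (fun x hx => ?_) (by rw [z0]; simp)
      rcases eq_or_lt_of_le (show x ≤ 0 from hx) with e | e
      · rw [e, z0]; simp
      · simp [UE, e]
    have := e2.union e1
    rwa [Iic_union_Ici, hasDerivWithinAt_univ] at this
  have DS : ∀ t > 0, HasDerivAt (UE p s B u t) (-B t) (s t) := by
    intro t ht
    have hpt := hsp (t := t) (le_of_lt ht)
    have z0 : UE p s B u t (s t) = u t (s t) := UE_eq ⟨hpt.le, le_rfl⟩
    have e1 : HasDerivWithinAt (UE p s B u t) (-B t) (Iic (s t)) (s t) := by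
      have hd := h.dl hs ht
      rw [hv t ht, show -(B t + B t) / 2 = -B t by ring] at hd
      refine hd.congr_of_eventuallyEq ?_ z0
      filter_upwards [self_mem_nhdsWithin, nhdsWithin_le_nhds (eventually_gt_nhds hpt)] with x a b
      exact UE_eq ⟨le_of_lt b, a⟩
    have e2 : HasDerivWithinAt (UE p s B u t) (-B t) (Ici (s t)) (s t) := by
      have : HasDerivAt (fun x => -B t * (x - s t)) (-B t) (s t) := by
        simpa using ((hasDerivAt_id (s t)).sub_const (s t)).const_mul (-B t)
      have z1 : UE p s B u t (s t) = -B t * (s t - s t) := by rw [z0, hus t ht.le]; simp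
      refine this.hasDerivWithinAt.congr (fun x hx => ?_) z1
      rcases eq_or_lt_of_le (show s t ≤ x from hx) with e | e
      · rw [← e, z1]
      · unfold UE
        rw [if_neg (by linarith), if_pos e]
    have := e1.union e2
    rwa [Iic_union_Ici, hasDerivWithinAt_univ] at this
  refine
  { T_pos := hT
    s_cont := h.s_cont.continuousOn
    s_diff := fun t ht => (h.s_deriv t ht.1).differentiableAt
    s_deriv_cont := ?_
    s_pos := fun t ht => hsp ht.1
    ut_diff := fun t ht x hx => (D3 _ (sub ht hx)).differentiableAt
    ux_diff := fun t ht x hx => (D1 _ (sub ht hx)).differentiableAt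
    uxx_diff := fun t ht x hx => (D2 _ (sub ht hx)).differentiableAt
    ut_cont := ?_
    uxx_cont := ?_
    ux_cont := ?_
    u_cont := ?_
    u_nonneg := fun t ht x hx => by rw [UE_eq hx]; exact hu0 t ht.1 x hx.1
    heat := fun t ht x hx => (D3 _ (sub ht hx)).deriv.trans (D2 _ (sub ht hx)).deriv.symm
    bc_zero := ?_
    bc_free := fun t ht => by rw [UE_eq ⟨(hsp ht.1.le).le, le_rfl⟩]; exact hus t ht.1.le
    stefan := fun t ht => by rw [(h.s_deriv t ht.1).deriv, (DS t ht.1).deriv, neg_neg]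
    init := fun x hx => by rw [UE_eq (by rw [h.s_zero]; exact hx), h.u_zero, hi x hx]
    init_s := h.s_zero }
  · intro t ht
    refine ContinuousAt.continuousWithinAt ((h.B_cont t ht.1).congr ?_)
    filter_upwards [eventually_gt_nhds ht.1] with τ hτ
    exact (h.s_deriv τ hτ).deriv.symm
  · rintro ⟨t, x⟩ ⟨ht, hx⟩
    refine ContinuousAt.continuousWithinAt ((h.c2 t ht.1 x hx.1 hx.2.ne).congr ?_)
    filter_upwards [hO.mem_nhds (sub ht hx)] with q hq
    exact (D3 q hq).deriv.symm
  · rintro ⟨t, x⟩ ⟨ht, hx⟩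
    refine ContinuousAt.continuousWithinAt ((h.c2 t ht.1 x hx.1 hx.2.ne).congr ?_)
    filter_upwards [hO.mem_nhds (sub ht hx)] with q hq
    exact (D2 q hq).deriv.symm
  · rintro ⟨t, x⟩ ⟨ht, hx⟩
    simp only at ht hx
    have pt : ∀ᶠ q : ℝ × ℝ in 𝓝 (t, x), 0 < q.1 :=
      continuous_fst.continuousAt.eventually (eventually_gt_nhds ht.1)
    rcases eq_or_lt_of_le hx.1 with e | e
    · subst e
      have ps : ∀ᶠ q : ℝ × ℝ in 𝓝 (t, 0), q.2 < s q.1 :=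
        continuous_snd.continuousAt.eventually_lt (h.s_cont.comp continuous_fst).continuousAt (hsp ht.1.le)
      have t1 : Tendsto (fun q : ℝ × ℝ => deriv (UE p s B u q.1) q.2) (𝓝[{q | q.2 = 0}] (t, 0))
          (𝓝 (-fp p (u t 0))) := by
        have c : Continuous fun q : ℝ × ℝ => -fp p (u q.1 0) :=
          ((fp_cont hp).comp (h.u_cont.comp (by fun_prop : Continuous fun q : ℝ × ℝ => (q.1, (0:ℝ))))).neg
        refine (c.continuousAt.tendsto.mono_left nhdsWithin_le_nhds).congr' ?_
        filter_upwards [self_mem_nhdsWithin, nhdsWithin_le_nhds pt] with q a b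
        have a' : q.2 = 0 := a
        rw [a', (DZ q.1 b).deriv]
      have t2 : Tendsto (fun q : ℝ × ℝ => deriv (UE p s B u q.1) q.2) (𝓝[{q | 0 < q.2}] (t, 0))
          (𝓝 (-fp p (u t 0))) := by
        refine (h.j0 t ht.1).congr' ?_
        filter_upwards [self_mem_nhdsWithin, nhdsWithin_le_nhds pt, nhdsWithin_le_nhds ps] with q a b d
        exact (D1 q ⟨b, a, d⟩).deriv.symm
      have t3 := t1.sup t2
      rw [← nhdsWithin_union] at t3
      unfold ContinuousWithinAt
      simp only
      rw [(DZ t ht.1).deriv]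
      refine t3.mono_left (nhdsWithin_mono _ ?_)
      rintro q ⟨_, hq⟩
      rcases eq_or_lt_of_le hq.1 with e | e
      · left; exact e.symm
      · right; exact e
    rcases eq_or_lt_of_le hx.2 with e2 | e2
    · subst e2
      have ps : ∀ᶠ q : ℝ × ℝ in 𝓝 (t, s t), 0 < q.2 :=
        continuous_snd.continuousAt.eventually (eventually_gt_nhds (hsp ht.1.le))
      have t1 : Tendsto (fun q : ℝ × ℝ => deriv (UE p s B u q.1) q.2) (𝓝[{q | q.2 = s q.1}] (t, s t))
          (𝓝 (-B t)) := by
        have c : ContinuousAt (fun q : ℝ × ℝ => -B q.1) (t, s t) :=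
          ((h.B_cont t ht.1).comp_of_eq continuous_fst.continuousAt rfl).neg
        refine (c.tendsto.mono_left nhdsWithin_le_nhds).congr' ?_
        filter_upwards [self_mem_nhdsWithin, nhdsWithin_le_nhds pt] with q a b
        have a' : q.2 = s q.1 := a
        rw [a', (DS q.1 b).deriv]
      have t2 : Tendsto (fun q : ℝ × ℝ => deriv (UE p s B u q.1) q.2) (𝓝[{q | q.2 < s q.1}] (t, s t))
          (𝓝 (-B t)) := by
        have hj := h.jl t ht.1
        rw [hv t ht.1, show -(B t + B t) / 2 = -B t by ring] at hj
        refine hj.congr' ?_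
        filter_upwards [self_mem_nhdsWithin, nhdsWithin_le_nhds pt, nhdsWithin_le_nhds ps] with q a b d
        exact (D1 q ⟨b, d, a⟩).deriv.symm
      have t3 := t1.sup t2
      rw [← nhdsWithin_union] at t3
      unfold ContinuousWithinAt
      simp only
      rw [(DS t ht.1).deriv]
      refine t3.mono_left (nhdsWithin_mono _ ?_)
      rintro q ⟨_, hq⟩
      rcases eq_or_lt_of_le hq.2 with e | e
      · left; exact e
      · right; exact e
    · refine ContinuousAt.continuousWithinAt ((h.c1 t ht.1 x e e2.ne).congr ?_)
      filter_upwards [hO.mem_nhds (sub ht ⟨e, e2⟩)] with q hq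
      exact (D1 q hq).deriv.symm
  · refine h.u_cont.continuousOn.congr ?_
    rintro q ⟨_, hq⟩
    exact UE_eq hq
  · intro t ht
    rw [(DZ t ht.1).deriv, neg_neg, UE_eq ⟨le_rfl, (hsp ht.1.le).le⟩,
      fp_eq (hu0 t ht.1.le 0 le_rfl) (hu1 t ht.1.le)]
end

lemma ext_ini {φ : ℝ → ℝ} {s₀ : ℝ} {K : NNReal} (hs : 0 < s₀) (hK : LipschitzOnWith K φ (Icc 0 s₀))
    (h0 : φ s₀ = 0) : Ini (fun x => φ (min |x| s₀)) s₀ K := by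
  have hm : ∀ x : ℝ, min |x| s₀ ∈ Icc 0 s₀ := fun x => ⟨le_min (abs_nonneg _) hs.le, min_le_right _ _⟩
  refine ⟨hs, K.2, fun x y => ?_, fun x => by simp, fun x hx => by simp [hx, h0]⟩
  have := hK.dist_le_mul _ (hm x) _ (hm y)
  rw [Real.dist_eq, Real.dist_eq] at this
  refine this.trans ?_
  have h1 := abs_min_sub_min_le_max |x| s₀ |y| s₀
  rw [sub_self, abs_zero, max_eq_left (abs_nonneg _)] at h1
  have := h1.trans (abs_abs_sub_abs_le_abs_sub x y)
  gcongr

/-- Proposition 4.4: global existence with exponential decay for small initial data. -/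
theorem stmt_18 (p : ℝ) (hp : 1 < p) :
    ∃ δ : ℝ, 0 < δ ∧ ∀ (s₀ : ℝ) (φ : ℝ → ℝ), memW s₀ φ →
      (∀ x ∈ Icc 0 s₀, φ x ≤ δ * min 1 (s₀ ^ (-(1 / (p - 1))))) →
      ∃ s u, IsGlobalSol p s₀ φ s u ∧
        (∃ L : ℝ, Tendsto s atTop (𝓝 L)) ∧
        ∃ α : ℝ, 0 < α ∧
          (fun t => supNorm s u t) =O[atTop] fun t => Real.exp (-α * t) := by
  have hq : 0 < p - 1 := by linarith
  have h3 : (0:ℝ) < 3 * 2 ^ p := by positivity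
  refine ⟨min (1 / 100) ((3 * 2 ^ p) ^ (-(1 / (p - 1)))), by positivity, ?_⟩
  intro s₀ φ hW hφ
  obtain ⟨hs, ⟨K, hK⟩, -, hφ0, hφs⟩ := hW
  set δ := min (1 / 100) (((3:ℝ) * 2 ^ p) ^ (-(1 / (p - 1)))) with hδ
  have hδ0 : 0 < δ := by positivity
  set ε := δ * min 1 (s₀ ^ (-(1 / (p - 1)))) with hε
  have hm0 : 0 < min 1 (s₀ ^ (-(1 / (p - 1)))) := by positivity
  have hε0 : 0 < ε := by positivity
  have hε1 : ε ≤ 1 / 100 := by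
    calc ε ≤ (1 / 100) * 1 := by
          rw [hε]
          exact mul_le_mul (min_le_left _ _) (min_le_left _ _) hm0.le (by norm_num)
      _ = 1 / 100 := by norm_num
  have hpw : ∀ a : ℝ, 0 < a → (a ^ (-(1 / (p - 1)))) ^ (p - 1) = a⁻¹ := by
    intro a ha
    rw [← rpow_mul ha.le, show -(1 / (p - 1)) * (p - 1) = -1 by field_simp, rpow_neg_one]
  have hε2 : 3 * s₀ * 2 ^ p * ε ^ (p - 1) ≤ 1 := by
    have e1 : ε ^ (p - 1) ≤ (3 * 2 ^ p)⁻¹ * s₀⁻¹ := by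
      rw [← hpw _ h3, ← hpw _ hs, ← mul_rpow (by positivity) (by positivity)]
      refine rpow_le_rpow hε0.le ?_ hq.le
      exact mul_le_mul (min_le_right _ _) (min_le_right _ _) hm0.le (by positivity)
    calc 3 * s₀ * 2 ^ p * ε ^ (p - 1) ≤ 3 * s₀ * 2 ^ p * ((3 * 2 ^ p)⁻¹ * s₀⁻¹) := by gcongr
      _ = 1 := by field_simp
  have hI := ext_ini hs hK hφs
  have hm : ∀ x : ℝ, min |x| s₀ ∈ Icc 0 s₀ := fun x => ⟨le_min (abs_nonneg _) hs.le, min_le_right _ _⟩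
  set ψ : ℝ → ℝ := fun x => φ (min |x| s₀) with hψ
  have hψe : ∀ x ∈ Icc 0 s₀, ψ x = φ x := by
    intro x hx
    simp only [hψ]
    rw [abs_of_nonneg hx.1, min_eq_left hx.2]
  set C : ℝ := max K 1 with hC
  have hC1 : 1 ≤ C := le_max_right _ _
  obtain ⟨s, B, v, u, ux, uxx, h⟩ := exists_TS (C := C) hI (by linarith) (by linarith : (0:ℝ) ≤ p)
    (fp_nonneg p) (fp_le hp) (fp_lip hp)
  have hψ0 : ∀ x, 0 ≤ x → 0 ≤ ψ x := fun x _ => hφ0 _ (hm x)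
  have hψ1 : ∀ x, 0 ≤ x → ψ x ≤ C * max (s₀ - x) 0 := by
    intro x hx
    have := hK.dist_le_mul _ (hm x) _ ⟨hs.le, le_rfl⟩
    rw [Real.dist_eq, Real.dist_eq, hφs, sub_zero, abs_of_nonneg (hφ0 _ (hm x)), abs_of_nonneg hx] at this
    simp only [hψ]
    rw [abs_of_nonneg hx]
    refine this.trans ?_
    have e : |min x s₀ - s₀| = max (s₀ - x) 0 := by
      rcases le_total x s₀ with a | a
      · rw [min_eq_left a, max_eq_left (by linarith), abs_of_nonpos (by linarith)]; ring
      · rw [min_eq_right a, max_eq_right (by linarith)]; simp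
    rw [e]
    exact mul_le_mul_of_nonneg_right (le_max_left _ _) (le_max_right _ _)
  have bd := fun {t x} => h.bounds (t := t) (x := x) hs hC1 (fp_nonneg p) (fp_le hp) hψ0 hψ1
  have hv : ∀ t > 0, v t = B t := fun t ht => h.v_eq hs hC1 (fp_nonneg p) (fp_le hp) hψ0 hψ1 ht
  obtain ⟨hlt, hz⟩ := h.super hp hs hC1 hψ0 hψ1 hε0 hε1 hε2 (fun x hx => by rw [hψe x hx]; exact hφ x hx)
  have hz2 : ∀ t, 0 ≤ t → ∀ x ∈ Icc 0 (s t), u t x ≤ 2 * ε * exp (-al s₀ * t) := by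
    intro t ht x hx
    refine (hz t ht x hx).trans ?_
    have h1 : 0 ≤ x / sg s₀ t := div_nonneg hx.1 (sg_pos hs ht).le
    have h2 := exp_pos (-al s₀ * t)
    unfold zz
    have h4 : 0 < ε * exp (-al s₀ * t) := by positivity
    nlinarith [mul_nonneg h4.le h1, mul_nonneg h4.le (sq_nonneg (x / sg s₀ t))]
  have us : ∀ t, 0 ≤ t → u t (s t) = 0 := by
    intro t ht
    have := bd ht (h.s_pos hs ht).le
    rw [sub_self, max_self, mul_zero] at this
    linarith
  refine ⟨s, UE p s B u, h.sol hp hs hv (fun t ht x hx => (bd ht hx).1) us ?_ hψe, ?_, al s₀, ?_, ?_⟩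
  · intro t ht
    have h1 := hz2 t ht 0 ⟨le_rfl, (h.s_pos hs ht).le⟩
    have h2 := E_bd hs ht
    nlinarith
  · refine ⟨_, tendsto_atTop_ciSup h.s_mono ⟨3 * s₀, ?_⟩⟩
    rintro _ ⟨t, rfl⟩
    exact (h.s_mono (le_max_left t 0)).trans ((hlt _ (le_max_right t 0)).le.trans (sg_hi hs))
  · unfold al; positivity
  · refine Asymptotics.IsBigO.of_bound (2 * ε) ?_
    filter_upwards [eventually_ge_atTop 0] with t ht
    have hE := exp_pos (-al s₀ * t)
    rw [Real.norm_eq_abs, Real.norm_eq_abs, abs_of_pos hE]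
    have h0 : 0 ≤ supNorm s (UE p s B u) t := by
      refine Real.sSup_nonneg ?_
      rintro _ ⟨x, hx, rfl⟩
      rw [UE_eq ⟨hx.1.le, hx.2.le⟩]
      exact (bd ht hx.1.le).1
    rw [abs_of_nonneg h0]
    refine Real.sSup_le ?_ (by positivity)
    rintro _ ⟨x, hx, rfl⟩
    rw [UE_eq ⟨hx.1.le, hx.2.le⟩]
    exact hz2 t ht x ⟨hx.1.le, hx.2.le⟩
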